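/- (Theorem 1.4: Aronson–Caffarelli type estimate without the extinction time, via the L^{p_c} norm.) Let d ≥ 3 and 0 < m < m_c, where m_c = (d−2)/d, and let p_c = d(1−m)/2. There exist positive constants C₁ and C₃ depending only on d and m with the following property. Let u be a classical solution of the FDE ∂ₜu = Δ(u^m) on (0,T)×Ω taking nonnegative initial data u₀ with u₀ ∈ L^{p_c}(B_R(x₀)), having finite extinction time T, where x₀ ∈ Ω and R > 0 are such that the closed ball of radius 3R about x₀ is contained in Ω. Then for every 0 < t < T: R^{−d} ‖u₀‖_{L¹(B_R(x₀))} ≤ C₁ R^{−2/(1−m)} t^{1/(1−m)} + C₃ ‖u₀‖_{L^{p_c}(B_R(x₀))} R^{−2} t^{−m/(1−m)} u(t,x₀)^m. -/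

import Mathlib

open MeasureTheory Metric Set Real

/-- The spatial Laplacian of `f : ℝ^d → ℝ` at a point, as the sum of second
coordinate derivatives. -/
noncomputable def spaceLap {d : ℕ} (f : EuclideanSpace ℝ (Fin d) → ℝ)
    (x : EuclideanSpace ℝ (Fin d)) : ℝ :=
  ∑ i : Fin d, fderiv ℝ (fun y => fderiv ℝ f y (EuclideanSpace.single i 1)) x
    (EuclideanSpace.single i 1)

/-- `u` is a classical solution of the fast diffusion equation `∂ₜ u = Δ(u^m)`
on the space-time set `Q`: it is positive and smooth on `Q` and satisfies the
equation pointwise on `Q`. -/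
def IsFDESol {d : ℕ} (m : ℝ) (Q : Set (ℝ × EuclideanSpace ℝ (Fin d)))
    (u : ℝ → EuclideanSpace ℝ (Fin d) → ℝ) : Prop :=
  (∀ p ∈ Q, 0 < u p.1 p.2) ∧
  ContDiffOn ℝ (⊤ : ℕ∞) (fun p : ℝ × EuclideanSpace ℝ (Fin d) => u p.1 p.2) Q ∧
  ∀ p ∈ Q, deriv (fun s => u s p.2) p.1 = spaceLap (fun y => u p.1 y ^ m) p.2

/-- `u` (defined for `0 < t < T` on `Ω`) takes the initial data `u₀`:
it extends continuously to `{0} × Ω` with value `u₀` there. -/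
def TakesInit {d : ℕ} (T : ℝ) (Ω : Set (EuclideanSpace ℝ (Fin d)))
    (u : ℝ → EuclideanSpace ℝ (Fin d) → ℝ) (u₀ : EuclideanSpace ℝ (Fin d) → ℝ) : Prop :=
  ContinuousOn (fun p : ℝ × EuclideanSpace ℝ (Fin d) => u p.1 p.2) (Ico 0 T ×ˢ Ω) ∧
  ∀ x ∈ Ω, u 0 x = u₀ x

/-- `u` has finite extinction time `T` on `Ω`: it extends continuously to
`{T} × Ω` with value `0` there, while `u(t,·)` is not identically zero for `0 < t < T`. -/
def ExtinctAt {d : ℕ} (T : ℝ) (Ω : Set (EuclideanSpace ℝ (Fin d)))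
    (u : ℝ → EuclideanSpace ℝ (Fin d) → ℝ) : Prop :=
  ContinuousOn (fun p : ℝ × EuclideanSpace ℝ (Fin d) => u p.1 p.2) (Ioc 0 T ×ˢ Ω) ∧
  (∀ x ∈ Ω, u T x = 0) ∧
  ∀ t ∈ Ioo 0 T, ∃ x ∈ Ω, u t x ≠ 0

/-!
Rescale to `x₀ = 0`, `R = 1` and start at a small positive time. To avoid any existence theory for
the PDE, compare `u` with the semi-discrete problem `∂ₛ w = n² Δ(w ^ m)` on the points `k / n` of
`ℝ^d` with `|k| < 2n`, where `Δ` is the graph Laplacian, `w = δ` off this ball and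
`w = max δ (u 1_{B₁})` initially: this is a globally solvable system of ODEs, and consistency of
the discrete Laplacian makes a multiple `(1 + e(s)) u` with `0 < e ≤ 1` a supersolution for small
`δ` and large `n`, so `w ≤ 2u`.

By the Herrero–Pierre argument with a cutoff supported in the ball, the initial mass of `w` is at
most a multiple of the mass at time `s` plus `s ^ (1 / (1 - m))`. The `L^{p_c}` energy inequality
and the discrete Sobolev inequality bring `w` down to size `δ` by a time
`s ≲ ‖u₀‖_{p_c} ^ (1 - m)`. If `s ≤ t`, this already bounds the initial mass. Otherwise pair `w`
with a smoothed Newtonian potential: the pairing decreases at a rate given by the average of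
`w ^ m` against an approximate identity at `0`. The Bénilan–Crandall inequality says
`w(r) ≤ (r / t) ^ (1 / (1 - m)) w(t)` for `r ≥ t`, so the total loss on `[t, s]` is at most
`s ^ (1 / (1 - m)) t ^ (-m / (1 - m))` times this average at time `t`, which is bounded by a
multiple of `u(t, 0) ^ m` in the limit `n → ∞`, `δ → 0`, smoothing scale `→ 0`.
-/

section LatticeSobolev

lemma exists_natCast_add_eq_zero {E : Type*} [Zero E] {a : ℤ → E} (ha : a.HasFiniteSupport)
    (s : ℤ) : ∃ N : ℕ, a (s + N) = 0 := by
  by_contra! hne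
  have hinj : Function.Injective fun n : ℕ => s + (n : ℤ) := fun x y hxy => by simpa using hxy
  exact infinite_range_of_injective hinj (ha.subset (range_subset_iff.2 hne))

lemma enorm_le_tsum_enorm_sub {E : Type*} [NormedAddCommGroup E] {a : ℤ → E}
    (ha : a.HasFiniteSupport) (s : ℤ) : ‖a s‖ₑ ≤ ∑' t, ‖a (t + 1) - a t‖ₑ := by
  obtain ⟨N, hN⟩ := exists_natCast_add_eq_zero ha s
  have htelescope : ∑ j ∈ Finset.range N, (a (s + j + 1) - a (s + j)) = -a s := by
    simpa [hN, add_assoc] using Finset.sum_range_sub (fun j : ℕ => a (s + j)) N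
  calc ‖a s‖ₑ = ‖∑ j ∈ Finset.range N, (a (s + j + 1) - a (s + j))‖ₑ := by
        rw [htelescope, enorm_neg]
    _ ≤ ∑ j ∈ Finset.range N, ‖a (s + j + 1) - a (s + j)‖ₑ := enorm_sum_le _ _
    _ ≤ ∑' j : ℕ, ‖a (s + j + 1) - a (s + j)‖ₑ := ENNReal.sum_le_tsum _
    _ ≤ ∑' t, ‖a (t + 1) - a t‖ₑ :=
        ENNReal.tsum_comp_le_tsum_of_injective (f := fun j : ℕ => s + (j : ℤ))
          (fun x y hxy => by simpa using hxy) (fun t => ‖a (t + 1) - a t‖ₑ)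

variable {d : ℕ}

lemma update_add_one (k : Fin d → ℤ) (i : Fin d) (t : ℤ) :
    Function.update k i (t + 1) = Function.update k i t + Pi.single i 1 := by
  ext j
  rcases eq_or_ne j i with rfl | hj
  · simp
  · simp [hj]

lemma enorm_le_tsum_update {g : (Fin d → ℤ) → ℝ} (hg : g.HasFiniteSupport) (k : Fin d → ℤ)
    (i : Fin d) :
    ‖g k‖ₑ ≤ ∑' t, ∑ j,
      ‖g (Function.update k i t + Pi.single j 1) - g (Function.update k i t)‖ₑ := by
  have hline := enorm_le_tsum_enorm_sub
    (hg.fun_comp_of_injective (Function.update_injective k i)) (k i)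
  rw [Function.update_eq_self] at hline
  refine hline.trans (ENNReal.tsum_le_tsum fun t => ?_)
  rw [update_add_one]
  exact Finset.single_le_sum (f := fun j =>
    ‖g (Function.update k i t + Pi.single j 1) - g (Function.update k i t)‖ₑ)
    (fun _ _ => zero_le) (Finset.mem_univ i)

/- The Gagliardo–Nirenberg–Sobolev argument: each value is bounded by the variation along each of
the `d` coordinate lines, and the Loomis–Whitney inequality (`lintegral_prod_lintegral_pow_le`)
is applied to counting measure. -/
lemma tsum_enorm_rpow_le (hd : 2 ≤ d) {g : (Fin d → ℤ) → ℝ} (hg : g.HasFiniteSupport) :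
    ∑' k, ‖g k‖ₑ ^ ((d : ℝ) / (d - 1)) ≤
      (∑' k, ∑ i, ‖g (k + Pi.single i 1) - g k‖ₑ) ^ ((d : ℝ) / (d - 1)) := by
  have hd' : (2 : ℝ) ≤ d := by exact_mod_cast hd
  have hconj : Real.HolderConjugate (Fintype.card (Fin d)) ((d : ℝ) / (d - 1)) := by
    simpa [Real.conjExponent] using Real.HolderConjugate.conjExponent (p := d) (by linarith)
  have hpi : ∀ F : (Fin d → ℤ) → ENNReal,
      ∫⁻ x, F x ∂(Measure.pi fun _ : Fin d => (Measure.count : Measure ℤ)) = ∑' k, F k := by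
    intro F
    simp [lintegral_countable']
  have hLW := lintegral_prod_lintegral_pow_le (fun _ : Fin d => (Measure.count : Measure ℤ)) hconj
    (f := fun k => ∑ i, ‖g (k + Pi.single i 1) - g k‖ₑ) (measurable_of_countable _)
  rw [hpi, hpi] at hLW
  refine (ENNReal.tsum_le_tsum fun k => ?_).trans hLW
  calc ‖g k‖ₑ ^ ((d : ℝ) / (d - 1))
      = ∏ _i : Fin d, ‖g k‖ₑ ^ ((1 : ℝ) / (Fintype.card (Fin d) - 1 : ℝ)) := by
        rw [Finset.prod_const, Finset.card_univ, Fintype.card_fin, ← ENNReal.rpow_natCast,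
          ← ENNReal.rpow_mul, one_div_mul_eq_div]
    _ ≤ _ := by
        refine Finset.prod_le_prod' fun i _ => ENNReal.rpow_le_rpow ?_ ?_
        · rw [lintegral_count]
          exact enorm_le_tsum_update hg k i
        · rw [Fintype.card_fin]
          exact one_div_nonneg.2 (by linarith)

lemma hasFiniteSupport_add_right {f : (Fin d → ℤ) → ℝ} (hf : f.HasFiniteSupport)
    (e : Fin d → ℤ) : (fun k => f (k + e)).HasFiniteSupport :=
  hf.fun_comp_of_injective (add_left_injective e)

lemma tsum_rpow_le_tsum_abs_sub_rpow (hd : 2 ≤ d) {g : (Fin d → ℤ) → ℝ}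
    (hg : g.HasFiniteSupport) (hg0 : ∀ k, 0 ≤ g k) :
    ∑' k, g k ^ ((d : ℝ) / (d - 1)) ≤
      (∑' k, ∑ i, |g (k + Pi.single i 1) - g k|) ^ ((d : ℝ) / (d - 1)) := by
  have hd' : (2 : ℝ) ≤ d := by exact_mod_cast hd
  have hp : 0 < (d : ℝ) / (d - 1) := div_pos (by linarith) (by linarith)
  have hvar0 : ∀ k, 0 ≤ ∑ i, |g (k + Pi.single i 1) - g k| :=
    fun k => Finset.sum_nonneg fun _ _ => abs_nonneg _
  have hlhs : ∑' k, ‖g k‖ₑ ^ ((d : ℝ) / (d - 1)) =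
      ENNReal.ofReal (∑' k, g k ^ ((d : ℝ) / (d - 1))) := by
    rw [ENNReal.ofReal_tsum_of_nonneg (fun k => Real.rpow_nonneg (hg0 k) _)]
    · simp [Real.enorm_eq_ofReal, hg0, ENNReal.ofReal_rpow_of_nonneg, hp.le]
    · exact summable_of_hasFiniteSupport
        (hg.fun_comp (g := fun x => x ^ ((d : ℝ) / (d - 1))) (Real.zero_rpow hp.ne'))
  have hrhs : ∑' k, ∑ i, ‖g (k + Pi.single i 1) - g k‖ₑ =
      ENNReal.ofReal (∑' k, ∑ i, |g (k + Pi.single i 1) - g k|) := by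
    rw [ENNReal.ofReal_tsum_of_nonneg hvar0]
    · simp [Real.enorm_eq_ofReal_abs, ENNReal.ofReal_sum_of_nonneg]
    · exact summable_sum fun i _ => summable_of_hasFiniteSupport
        (((hasFiniteSupport_add_right hg _).sub hg).fun_comp abs_zero)
  have hsob := tsum_enorm_rpow_le hd hg
  rw [hlhs, hrhs, ENNReal.ofReal_rpow_of_nonneg (tsum_nonneg hvar0) hp.le] at hsob
  exact (ENNReal.ofReal_le_ofReal_iff (Real.rpow_nonneg (tsum_nonneg hvar0) _)).1 hsob

lemma abs_rpow_sub_rpow_le {γ x y : ℝ} (hγ : 1 ≤ γ) (hx : 0 ≤ x) (hy : 0 ≤ y) :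
    |x ^ γ - y ^ γ| ≤ γ * (x ^ (γ - 1) + y ^ (γ - 1)) * |x - y| := by
  wlog hyx : y ≤ x generalizing x y
  · rw [abs_sub_comm, abs_sub_comm x y, add_comm]
    exact this hy hx (le_of_not_ge hyx)
  rcases hyx.eq_or_lt with rfl | hlt
  · simp
  have hx0 : 0 < x := hy.trans_lt hlt
  have hslope := (convexOn_rpow hγ).slope_le_of_hasDerivAt hy hx hlt
    (Real.hasDerivAt_rpow_const (.inl hx0.ne'))
  rw [slope_def_field, div_le_iff₀ (sub_pos.2 hlt)] at hslope
  rw [abs_of_nonneg (sub_nonneg.2 (Real.rpow_le_rpow hy hyx (by linarith))),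
    abs_of_nonneg (sub_nonneg.2 hyx)]
  refine hslope.trans ?_
  have hyγ : 0 ≤ y ^ (γ - 1) := Real.rpow_nonneg hy _
  gcongr
  linarith

lemma abs_rpow_sub_rpow_le_add_sq {γ l x y : ℝ} (hγ : 1 ≤ γ) (hl : 0 < l) (hx : 0 ≤ x)
    (hy : 0 ≤ y) :
    |x ^ γ - y ^ γ| ≤
      γ * (l * (x ^ (2 * (γ - 1)) + y ^ (2 * (γ - 1))) + (x - y) ^ 2 / l) := by
  refine (abs_rpow_sub_rpow_le hγ hx hy).trans ?_
  rw [mul_assoc]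
  refine mul_le_mul_of_nonneg_left ?_ (by linarith)
  have hsq : ∀ z : ℝ, 0 ≤ z → z ^ (2 * (γ - 1)) = (z ^ (γ - 1)) ^ 2 := fun z hz => by
    rw [mul_comm, Real.rpow_mul hz, Real.rpow_two]
  rw [hsq x hx, hsq y hy, ← sq_abs (x - y), ← sub_nonneg]
  generalize x ^ (γ - 1) = a, y ^ (γ - 1) = b, |x - y| = c
  have hsum_sq : l * (a ^ 2 + b ^ 2) + c ^ 2 / l - (a + b) * c =
      ((l * a - c / 2) ^ 2 + (l * b - c / 2) ^ 2 + c ^ 2 / 2) / l := by field_simp; ring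
  rw [hsum_sq]
  positivity

/-- The Dirichlet energy `∑ |∇f|²` of a function on `ℤ^d`, with unit mesh. -/
noncomputable def dirichletEnergy (f : (Fin d → ℤ) → ℝ) : ℝ :=
  ∑' k, ∑ i, (f (k + Pi.single i 1) - f k) ^ 2

lemma dirichletEnergy_nonneg (f : (Fin d → ℤ) → ℝ) : 0 ≤ dirichletEnergy f :=
  tsum_nonneg fun _ => Finset.sum_nonneg fun _ _ => sq_nonneg _

lemma tsum_add_right_eq {M : Type*} [AddCommMonoid M] [TopologicalSpace M]
    (f : (Fin d → ℤ) → M) (e : Fin d → ℤ) : ∑' k, f (k + e) = ∑' k, f k :=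
  (Equiv.addRight e).tsum_eq f

lemma summable_sq_sub {f : (Fin d → ℤ) → ℝ} (hf : f.HasFiniteSupport) (e : Fin d → ℤ) :
    Summable fun k => (f (k + e) - f k) ^ 2 :=
  summable_of_hasFiniteSupport (((hasFiniteSupport_add_right hf e).sub hf).fun_comp
    (g := fun x => x ^ 2) (by simp))

lemma tsum_abs_rpow_sub_le {γ l : ℝ} (hγ : 1 < γ) (hl : 0 < l) {f : (Fin d → ℤ) → ℝ}
    (hf : f.HasFiniteSupport) (hf0 : ∀ k, 0 ≤ f k) :
    ∑' k, ∑ i, |f (k + Pi.single i 1) ^ γ - f k ^ γ| ≤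
      γ * (2 * d * l * (∑' k, f k ^ (2 * (γ - 1))) + dirichletEnergy f / l) := by
  set q := 2 * (γ - 1)
  have hq0 : q ≠ 0 := by linarith
  have hpow : ∀ e, Summable fun k => f (k + e) ^ q := fun e =>
    summable_of_hasFiniteSupport
      ((hasFiniteSupport_add_right hf e).fun_comp (g := fun x => x ^ q) (Real.zero_rpow hq0))
  have hpow0 : Summable fun k => f k ^ q := by simpa using hpow 0
  have hbound : ∀ i : Fin d, Summable fun k =>
      γ * (l * (f (k + Pi.single i 1) ^ q + f k ^ q) + (f (k + Pi.single i 1) - f k) ^ 2 / l) :=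
    fun i => ((((hpow _).add hpow0).mul_left l).add
      ((summable_sq_sub hf _).div_const l)).mul_left γ
  have hle : ∀ k, ∑ i, |f (k + Pi.single i 1) ^ γ - f k ^ γ| ≤ ∑ i : Fin d,
      γ * (l * (f (k + Pi.single i 1) ^ q + f k ^ q) + (f (k + Pi.single i 1) - f k) ^ 2 / l) :=
    fun k => Finset.sum_le_sum fun i _ => abs_rpow_sub_rpow_le_add_sq hγ.le hl (hf0 _) (hf0 _)
  have hsum := Summable.tsum_mono (.of_nonneg_of_le
    (fun k => Finset.sum_nonneg fun _ _ => abs_nonneg _) hle (summable_sum fun i _ => hbound i))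
    (summable_sum fun i _ => hbound i) hle
  refine hsum.trans_eq ?_
  have hterm : ∀ i : Fin d, ∑' k, γ * (l * (f (k + Pi.single i 1) ^ q + f k ^ q) +
      (f (k + Pi.single i 1) - f k) ^ 2 / l) =
      γ * (l * (2 * ∑' k, f k ^ q) + (∑' k, (f (k + Pi.single i 1) - f k) ^ 2) / l) := fun i => by
    rw [tsum_mul_left, Summable.tsum_add (((hpow _).add hpow0).mul_left l)
      ((summable_sq_sub hf _).div_const l), tsum_mul_left, Summable.tsum_add (hpow _) hpow0,
      tsum_div_const, tsum_add_right_eq (fun k => f k ^ q), two_mul]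
  rw [Summable.tsum_finsetSum (fun i _ => hbound i), Finset.sum_congr rfl fun i _ => hterm i,
    dirichletEnergy, Summable.tsum_finsetSum (fun i _ => summable_sq_sub hf _), ← Finset.mul_sum,
    Finset.sum_add_distrib, ← Finset.sum_div, Finset.sum_const, Finset.card_univ,
    Fintype.card_fin, nsmul_eq_mul]
  ring

/- The choice `l = X ^ (-1 / d) / (4 * d * γ)` absorbs half of the left-hand side. -/
lemma rpow_le_of_forall_rpow_le_add_div {d γ X D : ℝ} (hd : 0 < d) (hγ : 0 < γ) (hX : 0 < X)
    (h : ∀ l : ℝ, 0 < l → X ^ ((d - 1) / d) ≤ γ * (2 * d * l * X + D / l)) :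
    X ^ ((d - 2) / d) ≤ 8 * d * γ ^ 2 * D := by
  have hY : 0 < X ^ (-1 / d) := Real.rpow_pos_of_pos hX _
  have hl := h (X ^ (-1 / d) / (4 * d * γ)) (by positivity)
  have hexp₁ : X ^ ((d - 1) / d) = X ^ (-1 / d) * X := by
    rw [← Real.rpow_add_one hX.ne']
    congr 1
    field_simp
    ring
  have hexp₂ : X ^ ((d - 2) / d) = X ^ (-1 / d) * (X ^ (-1 / d) * X) := by
    rw [← hexp₁, ← Real.rpow_add hX]
    congr 1
    field_simp
    ring
  rw [hexp₁] at hl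
  rw [hexp₂]
  generalize X ^ (-1 / d) = Y at *
  have hsplit : γ * (2 * d * (Y / (4 * d * γ)) * X + D / (Y / (4 * d * γ))) =
      Y * X / 2 + 4 * d * γ ^ 2 * D / Y := by
    field_simp
    ring
  have hhalf : Y * X / 2 ≤ 4 * d * γ ^ 2 * D / Y := by linarith
  rw [le_div_iff₀ hY] at hhalf
  linarith

lemma exists_sobolev_const (hd : 3 ≤ d) : ∃ C : ℝ, 0 < C ∧ ∀ f : (Fin d → ℤ) → ℝ,
    f.HasFiniteSupport → (∀ k, 0 ≤ f k) →
    (∑' k, f k ^ (2 * (d : ℝ) / (d - 2))) ^ (((d : ℝ) - 2) / d) ≤ C * dirichletEnergy f := by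
  have hd3 : (3 : ℝ) ≤ d := by exact_mod_cast hd
  have hd2 : (0 : ℝ) < d - 2 := by linarith
  have hd1 : (0 : ℝ) < d - 1 := by linarith
  obtain ⟨γ, hγ⟩ : ∃ γ : ℝ, γ = 2 * (d - 1) / (d - 2) := ⟨_, rfl⟩
  have hγ1 : 1 < γ := by rw [hγ, lt_div_iff₀ hd2]; linarith
  have hq : 2 * (d : ℝ) / (d - 2) = 2 * (γ - 1) := by rw [hγ]; field_simp; ring
  rw [hq]
  refine ⟨8 * d * γ ^ 2, by positivity, fun f hf hf0 => ?_⟩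
  have hX0 : 0 ≤ ∑' k, f k ^ (2 * (γ - 1)) := tsum_nonneg fun k => Real.rpow_nonneg (hf0 k) _
  rcases hX0.eq_or_lt with hX | hX
  · rw [← hX, Real.zero_rpow (by positivity)]
    exact mul_nonneg (by positivity) (dirichletEnergy_nonneg f)
  refine rpow_le_of_forall_rpow_le_add_div (by linarith) (by linarith) hX fun l hl =>
    le_trans ?_ (tsum_abs_rpow_sub_le hγ1 hl hf hf0)
  have hL1 := tsum_rpow_le_tsum_abs_sub_rpow (by lia)
    (hf.fun_comp (g := fun x => x ^ γ) (Real.zero_rpow (by linarith)))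
    (fun k => Real.rpow_nonneg (hf0 k) γ)
  have hpow : ∀ k, (f k ^ γ) ^ ((d : ℝ) / (d - 1)) = f k ^ (2 * (γ - 1)) := fun k => by
    rw [← Real.rpow_mul (hf0 k), ← hq, hγ]
    congr 1
    field_simp
  rw [tsum_congr hpow] at hL1
  calc (∑' k, f k ^ (2 * (γ - 1))) ^ (((d : ℝ) - 1) / d)
      ≤ ((∑' k, ∑ i, |f (k + Pi.single i 1) ^ γ - f k ^ γ|) ^ ((d : ℝ) / (d - 1)))
          ^ (((d : ℝ) - 1) / d) := Real.rpow_le_rpow hX0 hL1 (by positivity)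
    _ = ∑' k, ∑ i, |f (k + Pi.single i 1) ^ γ - f k ^ γ| := by
        rw [← Real.rpow_mul (tsum_nonneg fun k => Finset.sum_nonneg fun _ _ => abs_nonneg _),
          show (d : ℝ) / (d - 1) * ((d - 1) / d) = 1 by field_simp, Real.rpow_one]

end LatticeSobolev

section LatticeLaplacian

variable {d : ℕ} {a b : (Fin d → ℤ) → ℝ}

/-- The graph Laplacian of the lattice `ℤ^d`. -/
def latticeLap (f : (Fin d → ℤ) → ℝ) (k : Fin d → ℤ) : ℝ :=
  ∑ i : Fin d, (f (k + Pi.single i 1) + f (k - Pi.single i 1) - 2 * f k)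

@[simp]
lemma latticeLap_const (c : ℝ) (k : Fin d → ℤ) : latticeLap (fun _ => c) k = 0 :=
  Finset.sum_eq_zero fun _ _ => by ring

lemma latticeLap_sub (f g : (Fin d → ℤ) → ℝ) (k : Fin d → ℤ) :
    latticeLap (fun j => f j - g j) k = latticeLap f k - latticeLap g k := by
  rw [latticeLap, latticeLap, latticeLap, ← Finset.sum_sub_distrib]
  exact Finset.sum_congr rfl fun _ _ => by ring

lemma abs_latticeLap_le {f : (Fin d → ℤ) → ℝ} {M : ℝ} (hf : ∀ j, |f j| ≤ M) (k : Fin d → ℤ) :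
    |latticeLap f k| ≤ 4 * d * M := by
  have hterm : ∀ i ∈ Finset.univ,
      |f (k + Pi.single i 1) + f (k - Pi.single i 1) - 2 * f k| ≤ 4 * M := fun i _ => by
    have hplus := abs_le.1 (hf (k + Pi.single i 1))
    have hminus := abs_le.1 (hf (k - Pi.single i 1))
    have hcentre := abs_le.1 (hf k)
    exact abs_le.2 ⟨by linarith, by linarith⟩
  calc |latticeLap f k| ≤ ∑ _i : Fin d, 4 * M :=
        (Finset.abs_sum_le_sum_abs _ _).trans (Finset.sum_le_sum hterm)
    _ = 4 * d * M := by
        rw [Finset.sum_const, Finset.card_univ, Fintype.card_fin, nsmul_eq_mul]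
        ring

lemma latticeLap_const_mul (c : ℝ) (f : (Fin d → ℤ) → ℝ) (k : Fin d → ℤ) :
    latticeLap (fun j => c * f j) k = c * latticeLap f k := by
  rw [latticeLap, latticeLap, Finset.mul_sum]
  exact Finset.sum_congr rfl fun _ _ => by ring

lemma hasFiniteSupport_of_forall_notMem {α : Type*} {A : Finset α} {f : α → ℝ}
    (hf : ∀ k ∉ A, f k = 0) : f.HasFiniteSupport :=
  A.finite_toSet.subset fun k hk => by_contra fun hkA => hk (hf k hkA)

lemma hasFiniteSupport_sub_right (ha : a.HasFiniteSupport) (e : Fin d → ℤ) :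
    (fun k => a (k - e)).HasFiniteSupport := by
  simpa only [sub_eq_add_neg] using hasFiniteSupport_add_right ha (-e)

lemma hasFiniteSupport_second_diff (ha : a.HasFiniteSupport) (e : Fin d → ℤ) :
    (fun k => a (k + e) + a (k - e) - 2 * a k).HasFiniteSupport :=
  ((hasFiniteSupport_add_right ha e).add (hasFiniteSupport_sub_right ha e)).sub
    (ha.mul_right fun _ => 2)

lemma hasFiniteSupport_latticeLap (ha : a.HasFiniteSupport) : (latticeLap a).HasFiniteSupport :=
  (Set.finite_iUnion fun i => hasFiniteSupport_second_diff ha (Pi.single i 1)).subset fun k hk => by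
    obtain ⟨i, -, hi⟩ := Finset.exists_ne_zero_of_sum_ne_zero hk
    exact Set.mem_iUnion.2 ⟨i, hi⟩

lemma summable_mul_of_hasFiniteSupport {α : Type*} {f : α → ℝ} (hf : f.HasFiniteSupport)
    (g : α → ℝ) : Summable fun k => f k * g k :=
  summable_of_hasFiniteSupport (hf.mul_left g)

lemma tsum_add_right_sub_eq_zero (ha : a.HasFiniteSupport) (e : Fin d → ℤ) :
    ∑' k, (a (k + e) - a k) = 0 := by
  rw [(summable_of_hasFiniteSupport (hasFiniteSupport_add_right ha e)).tsum_sub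
    (summable_of_hasFiniteSupport ha), tsum_add_right_eq, sub_self]

lemma hasFiniteSupport_diff (ha : a.HasFiniteSupport) (e : Fin d → ℤ) :
    (fun k => a (k + e) - a k).HasFiniteSupport :=
  (hasFiniteSupport_add_right ha e).sub ha

lemma tsum_mul_second_diff (ha : a.HasFiniteSupport) (e : Fin d → ℤ) :
    ∑' k, a k * (b (k + e) + b (k - e) - 2 * b k) =
      -∑' k, (a (k + e) - a k) * (b (k + e) - b k) := by
  have htelescope := tsum_add_right_sub_eq_zero (ha.mul_left fun k => b k - b (k - e)) e
  rw [eq_neg_iff_add_eq_zero, ← Summable.tsum_add (summable_mul_of_hasFiniteSupport ha _)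
    (summable_mul_of_hasFiniteSupport (hasFiniteSupport_diff ha e) _), ← htelescope]
  refine tsum_congr fun k => ?_
  simp only [Pi.mul_apply, add_sub_cancel_right]
  ring

lemma tsum_mul_latticeLap (ha : a.HasFiniteSupport) :
    ∑' k, a k * latticeLap b k =
      -∑' k, ∑ i, (a (k + Pi.single i 1) - a k) * (b (k + Pi.single i 1) - b k) := by
  simp only [latticeLap, Finset.mul_sum]
  rw [Summable.tsum_finsetSum fun _ _ => summable_mul_of_hasFiniteSupport ha _,
    Summable.tsum_finsetSum fun _ _ => summable_mul_of_hasFiniteSupport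
      (hasFiniteSupport_diff ha _) _, ← Finset.sum_neg_distrib]
  exact Finset.sum_congr rfl fun _ _ => tsum_mul_second_diff ha _

lemma tsum_mul_second_diff_comm (ha : a.HasFiniteSupport) (e : Fin d → ℤ) :
    ∑' k, a k * (b (k + e) + b (k - e) - 2 * b k) =
      ∑' k, (a (k + e) + a (k - e) - 2 * a k) * b k := by
  have htelescope := tsum_add_right_sub_eq_zero
    (((hasFiniteSupport_sub_right ha e).mul_left b).sub (ha.mul_left fun k => b (k - e))) e
  rw [← sub_eq_zero, ← Summable.tsum_sub (summable_mul_of_hasFiniteSupport ha _)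
    (summable_mul_of_hasFiniteSupport (hasFiniteSupport_second_diff ha e) _), ← htelescope]
  refine tsum_congr fun k => ?_
  simp only [Pi.sub_apply, Pi.mul_apply, add_sub_cancel_right]
  ring

lemma tsum_mul_latticeLap_comm (ha : a.HasFiniteSupport) :
    ∑' k, a k * latticeLap b k = ∑' k, latticeLap a k * b k := by
  simp only [latticeLap, Finset.mul_sum, Finset.sum_mul]
  rw [Summable.tsum_finsetSum fun _ _ => summable_mul_of_hasFiniteSupport ha _,
    Summable.tsum_finsetSum fun _ _ => summable_mul_of_hasFiniteSupport
      (hasFiniteSupport_second_diff ha _) _]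
  exact Finset.sum_congr rfl fun _ _ => tsum_mul_second_diff_comm ha _

end LatticeLaplacian

section LatticeFlow

open scoped NNReal

variable {d : ℕ} {A : Finset (Fin d → ℤ)} {c S : ℝ} {φ : ℝ → ℝ} {L : ℝ≥0}

lemma hasDerivAt_max_zero_sq (x : ℝ) :
    HasDerivAt (fun y : ℝ => max y 0 ^ 2) (2 * max x 0) x := by
  rcases lt_trichotomy x 0 with hx | rfl | hx
  · rw [max_eq_right hx.le, mul_zero]
    refine (hasDerivAt_const x (0 : ℝ)).congr_of_eventuallyEq ?_
    filter_upwards [gt_mem_nhds hx] with y hy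
    simp [hy.le]
  · have hneg : HasDerivWithinAt (fun y : ℝ => max y 0 ^ 2) 0 (Iic 0) 0 :=
      (hasDerivWithinAt_const 0 _ (0 : ℝ)).congr_of_mem
        (fun y hy => by simp [max_eq_right (mem_Iic.1 hy)]) self_mem_Iic
    have hpos : HasDerivWithinAt (fun y : ℝ => max y 0 ^ 2) 0 (Ici 0) 0 := by
      have hsq : HasDerivAt (fun y : ℝ => y ^ 2) 0 0 := by simpa using hasDerivAt_pow 2 (0 : ℝ)
      exact hsq.hasDerivWithinAt.congr_of_mem
        (fun y hy => by rw [max_eq_left (mem_Ici.1 hy)]) self_mem_Ici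
    simpa using hneg.union hpos
  · rw [max_eq_left hx.le]
    have hsq : HasDerivAt (fun y : ℝ => y ^ 2) (2 * x) x := by simpa using hasDerivAt_pow 2 x
    refine hsq.congr_of_eventuallyEq ?_
    filter_upwards [lt_mem_nhds hx] with y hy
    rw [max_eq_left hy.le]

lemma nonpos_of_hasDerivAt_le_mul {Y Y' : ℝ → ℝ} {K : ℝ} (hY : ContinuousOn Y (Icc 0 S))
    (hderiv : ∀ s ∈ Ioo 0 S, HasDerivAt Y (Y' s) s) (hle : ∀ s ∈ Ioo 0 S, Y' s ≤ K * Y s)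
    (hY0 : Y 0 ≤ 0) {s : ℝ} (hs : s ∈ Icc 0 S) : Y s ≤ 0 := by
  have hprod : ∀ r ∈ Ioo 0 S, HasDerivAt (fun r => Real.exp (-K * r) * Y r)
      (Real.exp (-K * r) * (-K * 1) * Y r + Real.exp (-K * r) * Y' r) r := fun r hr =>
    ((hasDerivAt_id r).const_mul (-K)).exp.mul (hderiv r hr)
  have hanti : AntitoneOn (fun r => Real.exp (-K * r) * Y r) (Icc 0 S) := by
    refine antitoneOn_of_hasDerivWithinAt_nonpos (convex_Icc 0 S) (.mul (by fun_prop) hY)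
      (fun r hr => (hprod r (interior_Icc (a := (0 : ℝ)) ▸ hr)).hasDerivWithinAt) fun r hr => ?_
    rw [interior_Icc] at hr
    nlinarith [mul_le_mul_of_nonneg_left (hle r hr) (Real.exp_pos (-K * r)).le]
  have hdecay := hanti (left_mem_Icc.2 (hs.1.trans hs.2)) hs hs.1
  simp only [mul_zero, Real.exp_zero, one_mul] at hdecay
  exact nonpos_of_mul_nonpos_right (hdecay.trans hY0) (Real.exp_pos _)

lemma sub_le_mul_max_zero (hφ : Monotone φ) (hφL : LipschitzWith L φ) (x y : ℝ) :
    φ x - φ y ≤ L * max (x - y) 0 := by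
  rcases le_total x y with hxy | hxy
  · rw [max_eq_right (sub_nonpos.2 hxy), mul_zero]
    exact sub_nonpos.2 (hφ hxy)
  · rw [max_eq_left (sub_nonneg.2 hxy)]
    have hdist := hφL.dist_le_mul x y
    rw [Real.dist_eq, Real.dist_eq, abs_of_nonneg (sub_nonneg.2 hxy)] at hdist
    exact (le_abs_self _).trans hdist

lemma max_zero_mul_latticeLap_sub_le {B : Set (Fin d → ℤ)} {k : Fin d → ℤ} (hk : k ∈ A)
    (hkB : ∀ i, k + Pi.single i 1 ∈ B ∧ k - Pi.single i 1 ∈ B) (hφ : Monotone φ)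
    (hφL : LipschitzWith L φ) {v z : (Fin d → ℤ) → ℝ} (hB : ∀ j ∈ B, j ∉ A → v j ≤ z j) :
    max (v k - z k) 0 * (latticeLap (fun j => φ (v j)) k - latticeLap (fun j => φ (z j)) k) ≤
      2 * L * d * ∑ j ∈ A, max (v j - z j) 0 ^ 2 := by
  set y : (Fin d → ℤ) → ℝ := fun j => max (v j - z j) 0
  set Y := ∑ j ∈ A, y j ^ 2
  have hy0 : ∀ j, 0 ≤ y j := fun j => le_max_right _ _
  have hyA : ∀ j ∈ A, y j ^ 2 ≤ Y := fun j hj =>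
    Finset.single_le_sum (f := fun j => y j ^ 2) (fun _ _ => sq_nonneg _) hj
  have hyB : ∀ j ∈ B, y j ^ 2 ≤ Y := fun j hj => by
    by_cases hjA : j ∈ A
    · exact hyA j hjA
    · rw [show y j = 0 from max_eq_right (sub_nonpos.2 (hB j hj hjA)), sq, zero_mul]
      exact Finset.sum_nonneg fun _ _ => sq_nonneg _
  have hcentre : 0 ≤ y k * (φ (v k) - φ (z k)) := by
    rcases le_total (v k) (z k) with hvz | hvz
    · rw [show y k = 0 from max_eq_right (sub_nonpos.2 hvz), zero_mul]
    · exact mul_nonneg (hy0 k) (sub_nonneg.2 (hφ hvz))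
  have hneighbour : ∀ j ∈ B, y k * (φ (v j) - φ (z j)) ≤ L * Y := fun j hj =>
    calc y k * (φ (v j) - φ (z j)) ≤ y k * (L * y j) :=
          mul_le_mul_of_nonneg_left (sub_le_mul_max_zero hφ hφL _ _) (hy0 k)
      _ = L * (y k * y j) := by ring
      _ ≤ L * Y := mul_le_mul_of_nonneg_left
          (by nlinarith [sq_nonneg (y k - y j), hyA k hk, hyB j hj]) L.2
  rw [← latticeLap_sub, ← latticeLap_const_mul]
  calc latticeLap (fun j => y k * (φ (v j) - φ (z j))) k ≤ ∑ _i : Fin d, 2 * (L * Y) :=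
        Finset.sum_le_sum fun i _ => by
          linarith [hneighbour _ (hkB i).1, hneighbour _ (hkB i).2]
    _ = 2 * L * d * Y := by
        rw [Finset.sum_const, Finset.card_univ, Fintype.card_fin, nsmul_eq_mul]
        ring

lemma le_of_subsolution_of_supersolution {B : Set (Fin d → ℤ)}
    (hAB : ∀ k ∈ A, ∀ i, k + Pi.single i 1 ∈ B ∧ k - Pi.single i 1 ∈ B)
    (hc : 0 ≤ c) (hφ : Monotone φ) (hφL : LipschitzWith L φ) {w z w' z' : ℝ → (Fin d → ℤ) → ℝ}
    (hwc : ∀ k ∈ A, ContinuousOn (fun s => w s k) (Icc 0 S))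
    (hzc : ∀ k ∈ A, ContinuousOn (fun s => z s k) (Icc 0 S))
    (hw : ∀ k ∈ A, ∀ s ∈ Ioo 0 S, HasDerivAt (fun s => w s k) (w' s k) s)
    (hz : ∀ k ∈ A, ∀ s ∈ Ioo 0 S, HasDerivAt (fun s => z s k) (z' s k) s)
    (hw' : ∀ k ∈ A, ∀ s ∈ Ioo 0 S, w' s k ≤ c * latticeLap (fun j => φ (w s j)) k)
    (hz' : ∀ k ∈ A, ∀ s ∈ Ioo 0 S, c * latticeLap (fun j => φ (z s j)) k ≤ z' s k)
    (h0 : ∀ k ∈ A, w 0 k ≤ z 0 k)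
    (hB : ∀ k ∈ B, k ∉ A → ∀ s ∈ Ioo 0 S, w s k ≤ z s k) :
    ∀ k ∈ A, ∀ s ∈ Icc 0 S, w s k ≤ z s k := by
  set y : ℝ → (Fin d → ℤ) → ℝ := fun s k => max (w s k - z s k) 0
  set Y : ℝ → ℝ := fun s => ∑ k ∈ A, y s k ^ 2
  have hYc : ContinuousOn Y (Icc 0 S) := continuousOn_finsetSum _ fun k hk =>
    (((hwc k hk).sub (hzc k hk)).sup continuousOn_const).pow 2
  have hYderiv : ∀ s ∈ Ioo 0 S,
      HasDerivAt Y (∑ k ∈ A, 2 * y s k * (w' s k - z' s k)) s := fun s hs =>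
    HasDerivAt.fun_sum fun k hk => HasDerivAt.comp s (h₂ := fun x : ℝ => max x 0 ^ 2)
      (hasDerivAt_max_zero_sq (w s k - z s k)) ((hw k hk s hs).sub (hz k hk s hs))
  have hYle : ∀ s ∈ Ioo 0 S,
      ∑ k ∈ A, 2 * y s k * (w' s k - z' s k) ≤ (A.card * (4 * c * L * d)) * Y s := fun s hs => by
    rw [mul_assoc, ← nsmul_eq_mul, ← Finset.sum_const]
    refine Finset.sum_le_sum fun k hk => ?_
    have hy0 : 0 ≤ y s k := le_max_right _ _
    have hlap := max_zero_mul_latticeLap_sub_le hk (hAB k hk) hφ hφL fun j hj hjA =>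
      hB j hj hjA s hs
    nlinarith [mul_le_mul_of_nonneg_left (hw' k hk s hs) hy0,
      mul_le_mul_of_nonneg_left (hz' k hk s hs) hy0, mul_le_mul_of_nonneg_left hlap hc]
  have hY0 : Y 0 = 0 := Finset.sum_eq_zero fun k hk => by
    simp [y, max_eq_right (sub_nonpos.2 (h0 k hk))]
  intro k hk s hs
  have hYs := nonpos_of_hasDerivAt_le_mul hYc hYderiv hYle hY0.le hs
  have hyk : y s k ^ 2 ≤ Y s :=
    Finset.single_le_sum (f := fun k => y s k ^ 2) (fun _ _ => sq_nonneg _) hk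
  have hzero : y s k = 0 := pow_eq_zero_iff two_ne_zero |>.1
    (le_antisymm (hyk.trans hYs) (sq_nonneg _))
  exact sub_nonpos.1 (hzero ▸ le_max_left (w s k - z s k) 0)

/-- `w` solves `∂ₛ w = c Δφ(w)` on the lattice points of `A` for times in `[0, S]`, where `Δ` is
the lattice Laplacian, and has the constant boundary value `δ` at all other lattice points. -/
structure IsLatticeFlow (A : Finset (Fin d → ℤ)) (c : ℝ) (φ : ℝ → ℝ) (δ S : ℝ)
    (w : ℝ → (Fin d → ℤ) → ℝ) : Prop where
  eq_of_notMem : ∀ k ∉ A, ∀ s, w s k = δ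
  continuousOn : ∀ k, ContinuousOn (fun s => w s k) (Icc 0 S)
  hasDerivAt : ∀ k ∈ A, ∀ s ∈ Ioo 0 S,
    HasDerivAt (fun s => w s k) (c * latticeLap (fun j => φ (w s j)) k) s

namespace IsLatticeFlow

variable {δ K : ℝ} {w : ℝ → (Fin d → ℤ) → ℝ}

lemma boundary_le (h : IsLatticeFlow A c φ δ S w) (hc : 0 ≤ c) (hφ : Monotone φ)
    (hφL : LipschitzWith L φ) (h0 : ∀ k, δ ≤ w 0 k) {s : ℝ} (hs : s ∈ Icc 0 S) (k : Fin d → ℤ) :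
    δ ≤ w s k := by
  by_cases hk : k ∈ A
  · exact le_of_subsolution_of_supersolution (B := univ) (w := fun _ _ => δ) (w' := fun _ _ => 0)
      (fun _ _ _ => ⟨trivial, trivial⟩) hc hφ hφL (fun _ _ => continuousOn_const)
      (fun k _ => h.continuousOn k) (fun _ _ _ _ => hasDerivAt_const _ _) h.hasDerivAt
      (fun _ _ _ _ => by simp) (fun _ _ _ _ => le_rfl) (fun k _ => h0 k)
      (fun k _ hk s _ => (h.eq_of_notMem k hk s).ge) k hk s hs
  · exact (h.eq_of_notMem k hk s).ge

lemma le_const (h : IsLatticeFlow A c φ δ S w) (hc : 0 ≤ c) (hφ : Monotone φ)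
    (hφL : LipschitzWith L φ) (h0 : ∀ k, w 0 k ≤ K) {s : ℝ} (hs : s ∈ Icc 0 S)
    (k : Fin d → ℤ) : w s k ≤ K := by
  have hout : ∀ k ∉ A, ∀ s, w s k ≤ K := fun k hk s =>
    (h.eq_of_notMem k hk s).trans_le ((h.eq_of_notMem k hk 0).ge.trans (h0 k))
  by_cases hk : k ∈ A
  · exact le_of_subsolution_of_supersolution (B := univ) (z := fun _ _ => K) (z' := fun _ _ => 0)
      (fun _ _ _ => ⟨trivial, trivial⟩) hc hφ hφL (fun k _ => h.continuousOn k)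
      (fun _ _ => continuousOn_const) h.hasDerivAt (fun _ _ _ _ => hasDerivAt_const _ _)
      (fun _ _ _ _ => le_rfl) (fun _ _ _ _ => by simp) (fun k _ => h0 k)
      (fun k _ hk s _ => hout k hk s) k hk s hs
  · exact hout k hk s

end IsLatticeFlow

lemma exists_hasDerivWithinAt_Icc_of_lipschitz_of_bounded {E : Type*} [NormedAddCommGroup E]
    [NormedSpace ℝ E] [CompleteSpace E] {F : E → E} {K M : ℝ≥0} (hF : LipschitzWith K F)
    (hM : ∀ x, ‖F x‖ ≤ M) (x₀ : E) (hS : 0 ≤ S) :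
    ∃ α : ℝ → E, α 0 = x₀ ∧ ∀ s ∈ Icc 0 S, HasDerivWithinAt α (F (α s)) (Icc 0 S) s := by
  lift S to ℝ≥0 using hS
  have hpl : IsPicardLindelof (fun _ => F) (⟨0, le_rfl, S.2⟩ : Icc (0 : ℝ) S) x₀ (M * S) 0 M K :=
    .of_time_independent (fun x _ => hM x) hF.lipschitzOnWith (by simp)
  exact hpl.exists_eq_forall_mem_Icc_hasDerivWithinAt₀

/-- The function on the lattice which is `v` on `A` and `δ` elsewhere. -/
noncomputable def extendConst (A : Finset (Fin d → ℤ)) (δ : ℝ) (v : A → ℝ) :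
    (Fin d → ℤ) → ℝ :=
  Function.extend Subtype.val v fun _ => δ

lemma extendConst_of_mem {δ : ℝ} (v : A → ℝ) {k : Fin d → ℤ} (hk : k ∈ A) :
    extendConst A δ v k = v ⟨k, hk⟩ :=
  Subtype.val_injective.extend_apply v (fun _ => δ) ⟨k, hk⟩

lemma extendConst_of_notMem {δ : ℝ} (v : A → ℝ) {k : Fin d → ℤ} (hk : k ∉ A) :
    extendConst A δ v k = δ :=
  Function.extend_apply' _ _ _ (by simpa using hk)

lemma abs_extendConst_sub_le {δ : ℝ} (v v' : A → ℝ) (k : Fin d → ℤ) :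
    |extendConst A δ v k - extendConst A δ v' k| ≤ ‖v - v'‖ := by
  by_cases hk : k ∈ A
  · rw [extendConst_of_mem v hk, extendConst_of_mem v' hk]
    exact norm_le_pi_norm (v - v') ⟨k, hk⟩
  · simp [extendConst_of_notMem _ hk]

lemma lipschitzWith_latticeLap_extendConst (hφL : LipschitzWith L φ) (c : ℝ≥0) (δ : ℝ) :
    LipschitzWith (c * (4 * d * L)) fun (v : A → ℝ) (k : A) =>
      c * latticeLap (fun j => φ (extendConst A δ v j)) k := by
  refine LipschitzWith.of_dist_le_mul fun v v' => ?_
  refine (dist_pi_le_iff (by positivity)).2 fun k => ?_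
  have hj : ∀ j, |φ (extendConst A δ v j) - φ (extendConst A δ v' j)| ≤ L * ‖v - v'‖ := fun j =>
    (hφL.dist_le_mul _ _).trans
      (mul_le_mul_of_nonneg_left (abs_extendConst_sub_le v v' j) L.2)
  rw [Real.dist_eq, dist_eq_norm, ← mul_sub, ← latticeLap_sub, abs_mul, NNReal.abs_eq]
  push_cast
  rw [mul_assoc (c : ℝ), mul_assoc _ (L : ℝ)]
  exact mul_le_mul_of_nonneg_left (abs_latticeLap_le hj _) c.2

lemma exists_isLatticeFlow (A : Finset (Fin d → ℤ)) (hc : 0 ≤ c) (hφL : LipschitzWith L φ)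
    {M : ℝ} (hφM : ∀ x, |φ x| ≤ M) {δ : ℝ} {w₀ : (Fin d → ℤ) → ℝ} (hw₀ : ∀ k ∉ A, w₀ k = δ)
    (hS : 0 ≤ S) : ∃ w, w 0 = w₀ ∧ IsLatticeFlow A c φ δ S w := by
  lift c to ℝ≥0 using hc
  lift M to ℝ≥0 using (abs_nonneg _).trans (hφM 0)
  have hbound : ∀ v : A → ℝ, ‖fun k : A => c * latticeLap (fun j => φ (extendConst A δ v j)) k‖ ≤
      (c * (4 * d * M) : ℝ≥0) := fun v =>
    (pi_norm_le_iff_of_nonneg (NNReal.coe_nonneg _)).2 fun k => by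
      rw [Real.norm_eq_abs, abs_mul, NNReal.abs_eq]
      exact mul_le_mul_of_nonneg_left (abs_latticeLap_le (fun j => hφM _) _) c.2
  obtain ⟨α, hα0, hα⟩ := exists_hasDerivWithinAt_Icc_of_lipschitz_of_bounded
    (lipschitzWith_latticeLap_extendConst hφL c δ) hbound (fun k => w₀ k) hS
  have hαk (k : A) (s) (hs : s ∈ Icc 0 S) := hasDerivWithinAt_pi.1 (hα s hs) k
  refine ⟨fun s => extendConst A δ (α s), funext fun k => ?_,
    fun k hk s => extendConst_of_notMem _ hk, fun k => ?_, fun k hk s hs => ?_⟩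
  · by_cases hk : k ∈ A
    · simp only [extendConst_of_mem _ hk, hα0]
    · simp only [extendConst_of_notMem _ hk, hw₀ k hk]
  · by_cases hk : k ∈ A
    · simp only [extendConst_of_mem _ hk]
      exact fun s hs => (hαk ⟨k, hk⟩ s hs).continuousWithinAt
    · simp only [extendConst_of_notMem _ hk]
      exact continuousOn_const
  · simp only [extendConst_of_mem _ hk]
    exact (hαk ⟨k, hk⟩ s (Ioo_subset_Icc_self hs)).hasDerivAt (Icc_mem_nhds hs.1 hs.2)

end LatticeFlow

section FastLatticeFlow

variable {d : ℕ} {A : Finset (Fin d → ℤ)} {c m δ S : ℝ} {w : ℝ → (Fin d → ℤ) → ℝ}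

/-- The power `s ^ m` frozen below `δ`, which makes the singular nonlinearity of the fast
diffusion equation globally Lipschitz. -/
noncomputable def truncPow (m δ s : ℝ) : ℝ := max s δ ^ m

lemma truncPow_of_le {s : ℝ} (h : δ ≤ s) : truncPow m δ s = s ^ m := by
  rw [truncPow, max_eq_left h]

lemma truncPow_mono (hm : 0 ≤ m) (hδ : 0 ≤ δ) : Monotone (truncPow m δ) := fun _ _ h =>
  Real.rpow_le_rpow (hδ.trans (le_max_right _ _)) (max_le_max_right _ h) hm

lemma lipschitzOnWith_rpow_Ici (hm0 : 0 ≤ m) (hm1 : m ≤ 1) (hδ : 0 < δ) :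
    LipschitzOnWith (m * δ ^ (m - 1)).toNNReal (fun x : ℝ => x ^ m) (Ici δ) := by
  have hne : ∀ x ∈ Ici δ, x ≠ 0 := fun x hx => (hδ.trans_le hx).ne'
  refine (convex_Ici δ).lipschitzOnWith_of_nnnorm_hasDerivWithin_le
    (fun x hx => (Real.hasDerivAt_rpow_const (.inl (hne x hx))).hasDerivWithinAt) fun x hx => ?_
  have hx0 : 0 ≤ x := hδ.le.trans hx
  rw [← NNReal.coe_le_coe, coe_nnnorm, Real.norm_of_nonneg (by positivity),
    Real.coe_toNNReal _ (by positivity)]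
  exact mul_le_mul_of_nonneg_left (Real.rpow_le_rpow_of_nonpos hδ hx (by linarith)) hm0

lemma lipschitzWith_truncPow (hm0 : 0 ≤ m) (hm1 : m ≤ 1) (hδ : 0 < δ) :
    LipschitzWith (m * δ ^ (m - 1)).toNNReal (truncPow m δ) := by
  have hmax : LipschitzWith 1 fun s : ℝ => max s δ := LipschitzWith.id.max_const δ
  have hcomp := lipschitzOnWith_univ.1 ((lipschitzOnWith_rpow_Ici hm0 hm1 hδ).comp
    hmax.lipschitzOnWith fun s _ => le_max_right s δ)
  rwa [mul_one] at hcomp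

/-- A solution of the fast diffusion equation `∂ₛ w = c Δ(w ^ m)` on `A`, with values at least
its boundary value `δ`. -/
structure IsFastLatticeFlow (A : Finset (Fin d → ℤ)) (c m δ S : ℝ) (w : ℝ → (Fin d → ℤ) → ℝ) :
    Prop extends IsLatticeFlow A c (fun x => x ^ m) δ S w where
  le : ∀ s ∈ Icc 0 S, ∀ k, δ ≤ w s k

lemma exists_isFastLatticeFlow (A : Finset (Fin d → ℤ)) (hc : 0 ≤ c) (hm0 : 0 ≤ m) (hm1 : m ≤ 1)
    (hδ : 0 < δ) (hS : 0 ≤ S) {w₀ : (Fin d → ℤ) → ℝ} (hδw₀ : ∀ k, δ ≤ w₀ k)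
    (hw₀ : ∀ k ∉ A, w₀ k = δ) : ∃ w, w 0 = w₀ ∧ IsFastLatticeFlow A c m δ S w := by
  have hw₀pos : ∀ k, 0 ≤ w₀ k := fun k => hδ.le.trans (hδw₀ k)
  set K := δ + ∑ k ∈ A, w₀ k
  have hδK : δ ≤ K := le_add_of_nonneg_right (Finset.sum_nonneg fun k _ => hw₀pos k)
  have hw₀K : ∀ k, w₀ k ≤ K := fun k => by
    by_cases hk : k ∈ A
    · linarith [Finset.single_le_sum (fun k _ => hw₀pos k) hk]
    · rwa [hw₀ k hk]
  set ψ : ℝ → ℝ := fun s => truncPow m δ (min s K)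
  have hψ : Monotone ψ := fun _ _ h => truncPow_mono hm0 hδ.le (min_le_min_right _ h)
  have hψL : LipschitzWith _ ψ :=
    (lipschitzWith_truncPow hm0 hm1 hδ).comp (LipschitzWith.id.min_const K)
  have hψK : ∀ s, |ψ s| ≤ K ^ m := fun s => by
    have hmax : 0 ≤ max (min s K) δ := hδ.le.trans (le_max_right _ _)
    have hψ0 : 0 ≤ ψ s := Real.rpow_nonneg hmax m
    rw [abs_of_nonneg hψ0]
    exact Real.rpow_le_rpow hmax (max_le (min_le_right _ _) hδK) hm0
  obtain ⟨w, rfl, hw⟩ := exists_isLatticeFlow A hc hψL hψK hw₀ hS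
  have hlow : ∀ s ∈ Icc 0 S, ∀ k, δ ≤ w s k := fun s hs => hw.boundary_le hc hψ hψL hδw₀ hs
  have hψw : ∀ s ∈ Icc 0 S, ∀ k, ψ (w s k) = w s k ^ m := fun s hs k => by
    rw [← truncPow_of_le (hlow s hs k)]
    exact congrArg (truncPow m δ) (min_eq_left (hw.le_const hc hψ hψL hw₀K hs k))
  refine ⟨w, rfl, ⟨hw.eq_of_notMem, hw.continuousOn, fun k hk s hs => ?_⟩, hlow⟩
  simpa only [hψw s (Ioo_subset_Icc_self hs)] using hw.hasDerivAt k hk s hs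

namespace IsFastLatticeFlow

-- For `μ ^ (1 - m) = 1 / l`, the rescaling `μ w(l ·)` is again a solution; for `l ≤ 1 ≤ μ` it
-- dominates `w` initially and on the boundary, hence everywhere.
lemma le_mul_rescaled (h : IsFastLatticeFlow A c m δ S w) (hc : 0 ≤ c) (hm0 : 0 ≤ m) (hm1 : m ≤ 1)
    (hδ : 0 < δ) {μ l : ℝ} (hμ : 1 ≤ μ) (hl0 : 0 < l) (hl1 : l ≤ 1) (hμl : μ * l = μ ^ m) {s : ℝ}
    (hs : s ∈ Icc 0 S) (k : Fin d → ℤ) : w s k ≤ μ * w (l * s) k := by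
  have hμ0 : 0 < μ := one_pos.trans_le hμ
  have hmemIcc : ∀ r ∈ Icc 0 S, l * r ∈ Icc 0 S := fun r hr =>
    ⟨mul_nonneg hl0.le hr.1, (mul_le_of_le_one_left hr.1 hl1).trans hr.2⟩
  have hmemIoo : ∀ r ∈ Ioo 0 S, l * r ∈ Ioo 0 S := fun r hr =>
    ⟨mul_pos hl0 hr.1, (mul_le_of_le_one_left hr.1.le hl1).trans_lt hr.2⟩
  have hle_mul : ∀ x, δ ≤ x → x ≤ μ * x := fun x hx =>
    le_mul_of_one_le_left (hδ.le.trans hx) hμ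
  by_cases hk : k ∈ A
  swap
  · rw [h.eq_of_notMem k hk, h.eq_of_notMem k hk]
    exact hle_mul δ le_rfl
  refine le_of_subsolution_of_supersolution (B := univ) (z := fun r j => μ * w (l * r) j)
    (z' := fun r k => μ * (c * latticeLap (fun j => w (l * r) j ^ m) k * l))
    (fun _ _ _ => ⟨trivial, trivial⟩) hc (truncPow_mono hm0 hδ.le)
    (lipschitzWith_truncPow hm0 hm1 hδ) (fun k _ => h.continuousOn k)
    (fun k _ => continuousOn_const.mul ((h.continuousOn k).comp (by fun_prop) hmemIcc))
    h.hasDerivAt (fun k hk r hr => ?_) (fun k _ r hr => ?_) (fun k _ r hr => ?_)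
    (fun k _ => ?_) (fun k _ hk r _ => ?_) k hk s hs
  · exact ((h.hasDerivAt k hk _ (hmemIoo r hr)).comp r
      (by simpa using (hasDerivAt_id r).const_mul l)).const_mul μ
  · simp only [truncPow_of_le (h.le r (Ioo_subset_Icc_self hr) _), le_refl]
  · have hlow := h.le _ (hmemIcc r (Ioo_subset_Icc_self hr))
    have hpow : (fun j => truncPow m δ (μ * w (l * r) j)) = fun j => μ ^ m * w (l * r) j ^ m :=
      funext fun j => by
        rw [truncPow_of_le ((hlow j).trans (hle_mul _ (hlow j))),
          Real.mul_rpow hμ0.le (hδ.le.trans (hlow j))]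
    rw [hpow, latticeLap_const_mul, ← hμl]
    exact le_of_eq (by ring)
  · simpa only [mul_zero] using hle_mul _ (h.le 0 (left_mem_Icc.2 (hs.1.trans hs.2)) k)
  · rw [h.eq_of_notMem k hk, h.eq_of_notMem k hk]
    exact hle_mul δ le_rfl

lemma benilan_crandall (h : IsFastLatticeFlow A c m δ S w) (hc : 0 ≤ c) (hm0 : 0 ≤ m)
    (hm1 : m < 1) (hδ : 0 < δ) {s s' : ℝ} (hs : 0 < s) (hss' : s ≤ s') (hs' : s' ≤ S)
    (k : Fin d → ℤ) : w s' k ≤ (s' / s) ^ (1 / (1 - m)) * w s k := by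
  have hs'0 : 0 < s' := hs.trans_le hss'
  have hm : 0 < 1 - m := sub_pos.2 hm1
  have hratio : 0 < s' / s := div_pos hs'0 hs
  have hμl : (s' / s) ^ (1 / (1 - m)) * (s / s') = ((s' / s) ^ (1 / (1 - m))) ^ m := by
    rw [← inv_div s' s, ← Real.rpow_neg_one (s' / s), ← Real.rpow_add hratio,
      ← Real.rpow_mul hratio.le]
    congr 1
    field_simp
    ring
  have hle := h.le_mul_rescaled hc hm0 hm1.le hδ
    (Real.one_le_rpow ((one_le_div hs).2 hss') (by positivity)) (div_pos hs hs'0)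
    ((div_le_one hs'0).2 hss') hμl ⟨hs'0.le, hs'⟩ k
  rwa [div_mul_cancel₀ s hs'0.ne'] at hle

end IsFastLatticeFlow

end FastLatticeFlow

section Potential

variable {d : ℕ} {A : Finset (Fin d → ℤ)} {c m δ S : ℝ} {w : ℝ → (Fin d → ℤ) → ℝ}
  {G Q : (Fin d → ℤ) → ℝ}

lemma latticeLap_nonneg_of_eq_zero {f : (Fin d → ℤ) → ℝ} {k : Fin d → ℤ} (hf : ∀ j, 0 ≤ f j)
    (hk : f k = 0) : 0 ≤ latticeLap f k :=
  Finset.sum_nonneg fun i _ => by linarith [hf (k + Pi.single i 1), hf (k - Pi.single i 1)]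

lemma neg_sum_mul_le_sum_mul_latticeLap (hc : 0 ≤ c) (hG : ∀ k, 0 ≤ G k)
    (hGA : ∀ k ∉ A, G k = 0) (hQ : ∀ k ∈ A, -Q k ≤ c * latticeLap G k)
    {v : (Fin d → ℤ) → ℝ} (hv : ∀ k, 0 ≤ v k) :
    -∑ k ∈ A, Q k * v k ≤ ∑ k ∈ A, G k * (c * latticeLap v k) := by
  have hGfin := hasFiniteSupport_of_forall_notMem hGA
  have houtside : ∀ k ∉ A, 0 ≤ latticeLap G k * v k := fun k hk =>
    mul_nonneg (latticeLap_nonneg_of_eq_zero hG (hGA k hk)) (hv k)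
  have hinside : ∑ k ∈ A, latticeLap G k * v k ≤ ∑' k, latticeLap G k * v k :=
    (summable_mul_of_hasFiniteSupport (hasFiniteSupport_latticeLap hGfin) v).sum_le_tsum A houtside
  calc -∑ k ∈ A, Q k * v k = ∑ k ∈ A, -Q k * v k := by
        simp only [neg_mul, Finset.sum_neg_distrib]
    _ ≤ ∑ k ∈ A, c * latticeLap G k * v k :=
        Finset.sum_le_sum fun k hk => mul_le_mul_of_nonneg_right (hQ k hk) (hv k)
    _ = c * ∑ k ∈ A, latticeLap G k * v k := by simp only [Finset.mul_sum, mul_assoc]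
    _ ≤ c * ∑' k, latticeLap G k * v k := mul_le_mul_of_nonneg_left hinside hc
    _ = c * ∑ k ∈ A, G k * latticeLap v k := by
        rw [← tsum_mul_latticeLap_comm hGfin, tsum_eq_sum fun k hk => by rw [hGA k hk, zero_mul]]
    _ = ∑ k ∈ A, G k * (c * latticeLap v k) := by
        simp only [Finset.mul_sum, mul_left_comm c]

lemma monotoneOn_Icc_of_hasDerivAt_nonneg {f f' : ℝ → ℝ} {a b : ℝ}
    (hf : ContinuousOn f (Icc a b)) (hf' : ∀ x ∈ Ioo a b, HasDerivAt f (f' x) x)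
    (hf'0 : ∀ x ∈ Ioo a b, 0 ≤ f' x) : MonotoneOn f (Icc a b) := by
  rw [← interior_Icc] at hf' hf'0
  exact monotoneOn_of_hasDerivWithinAt_nonneg (convex_Icc a b) hf
    (fun x hx => (hf' x hx).hasDerivWithinAt) hf'0

namespace IsLatticeFlow

variable {φ : ℝ → ℝ}

lemma continuousOn_sum_mul (h : IsLatticeFlow A c φ δ S w) (G : (Fin d → ℤ) → ℝ) :
    ContinuousOn (fun s => ∑ k ∈ A, G k * w s k) (Icc 0 S) :=
  continuousOn_finsetSum _ fun k _ => continuousOn_const.mul (h.continuousOn k)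

lemma hasDerivAt_sum_mul (h : IsLatticeFlow A c φ δ S w) (G : (Fin d → ℤ) → ℝ) {s : ℝ}
    (hs : s ∈ Ioo 0 S) :
    HasDerivAt (fun s => ∑ k ∈ A, G k * w s k)
      (∑ k ∈ A, G k * (c * latticeLap (fun j => φ (w s j)) k)) s :=
  HasDerivAt.fun_sum fun k hk => (h.hasDerivAt k hk s hs).const_mul _

end IsLatticeFlow

namespace IsFastLatticeFlow

lemma pos (h : IsFastLatticeFlow A c m δ S w) (hδ : 0 < δ) {s : ℝ} (hs : s ∈ Icc 0 S)
    (k : Fin d → ℤ) : 0 < w s k :=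
  hδ.trans_le (h.le s hs k)

lemma benilan_crandall_rpow (h : IsFastLatticeFlow A c m δ S w) (hc : 0 ≤ c) (hm0 : 0 ≤ m)
    (hm1 : m < 1) (hδ : 0 < δ) {t r : ℝ} (ht : 0 < t) (htr : t ≤ r) (hrS : r ≤ S)
    (k : Fin d → ℤ) :
    w r k ^ m ≤ r ^ (m / (1 - m)) * t ^ (-(m / (1 - m))) * w t k ^ m := by
  have hr : 0 < r := ht.trans_le htr
  calc w r k ^ m ≤ ((r / t) ^ (1 / (1 - m)) * w t k) ^ m :=
        Real.rpow_le_rpow (h.pos hδ ⟨hr.le, hrS⟩ k).le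
          (h.benilan_crandall hc hm0 hm1 hδ ht htr hrS k) hm0
    _ = (r / t) ^ (m / (1 - m)) * w t k ^ m := by
        rw [Real.mul_rpow (by positivity) (h.pos hδ ⟨ht.le, htr.trans hrS⟩ k).le,
          ← Real.rpow_mul (by positivity), one_div_mul_eq_div]
    _ = r ^ (m / (1 - m)) * t ^ (-(m / (1 - m))) * w t k ^ m := by
        rw [Real.div_rpow hr.le ht.le, Real.rpow_neg ht.le, div_eq_mul_inv]

lemma sum_mul_rpow_le (h : IsFastLatticeFlow A c m δ S w) (hc : 0 ≤ c) (hm0 : 0 ≤ m) (hm1 : m < 1)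
    (hδ : 0 < δ) (hQ0 : ∀ k ∈ A, 0 ≤ Q k) {t r : ℝ} (ht : 0 < t) (htr : t ≤ r) (hrS : r ≤ S) :
    ∑ k ∈ A, Q k * w r k ^ m ≤
      r ^ (m / (1 - m)) * (t ^ (-(m / (1 - m))) * ∑ k ∈ A, Q k * w t k ^ m) := by
  rw [← mul_assoc, Finset.mul_sum]
  refine Finset.sum_le_sum fun k hk => ?_
  rw [mul_left_comm]
  exact mul_le_mul_of_nonneg_left (h.benilan_crandall_rpow hc hm0 hm1 hδ ht htr hrS k) (hQ0 k hk)

-- The potential `∑ G w` loses at most `∑ Q w(r) ^ m` per unit time, and by the Bénilan–Crandall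
-- inequality this rate is at most `(r / t) ^ (m / (1 - m))` times its value at time `t`.
lemma monotoneOn_sum_mul_add_rpow (h : IsFastLatticeFlow A c m δ S w) (hc : 0 ≤ c) (hm0 : 0 ≤ m)
    (hm1 : m < 1) (hδ : 0 < δ) (hG : ∀ k, 0 ≤ G k) (hGA : ∀ k ∉ A, G k = 0)
    (hQ0 : ∀ k ∈ A, 0 ≤ Q k) (hQ : ∀ k ∈ A, -Q k ≤ c * latticeLap G k) {t : ℝ} (ht : 0 < t) :
    MonotoneOn (fun r => ∑ k ∈ A, G k * w r k + (1 - m) * r ^ (1 / (1 - m)) *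
      (t ^ (-(m / (1 - m))) * ∑ k ∈ A, Q k * w t k ^ m)) (Icc t S) := by
  set M := t ^ (-(m / (1 - m))) * ∑ k ∈ A, Q k * w t k ^ m
  have hm : 1 - m ≠ 0 := by linarith
  have hrpow : ∀ r : ℝ, 0 < r →
      HasDerivAt (fun r => (1 - m) * r ^ (1 / (1 - m)) * M) (r ^ (m / (1 - m)) * M) r := by
    intro r hr
    have hder := ((Real.hasDerivAt_rpow_const (p := 1 / (1 - m)) (.inl hr.ne')).const_mul
      (1 - m)).mul_const M
    rwa [show 1 / (1 - m) - 1 = m / (1 - m) by field_simp; ring, ← mul_assoc (1 - m),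
      mul_one_div_cancel hm, one_mul] at hder
  refine monotoneOn_Icc_of_hasDerivAt_nonneg
    (((h.continuousOn_sum_mul G).mono (Icc_subset_Icc_left ht.le)).add fun r hr =>
      (hrpow r (ht.trans_le hr.1)).continuousAt.continuousWithinAt)
    (fun r hr => (h.hasDerivAt_sum_mul G ⟨ht.trans hr.1, hr.2⟩).add (hrpow r (ht.trans hr.1)))
    fun r hr => ?_
  have hloss := neg_sum_mul_le_sum_mul_latticeLap hc hG hGA hQ (v := fun k => w r k ^ m)
    fun k => Real.rpow_nonneg (h.pos hδ ⟨(ht.trans hr.1).le, hr.2.le⟩ k).le m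
  linarith [h.sum_mul_rpow_le hc hm0 hm1 hδ hQ0 ht hr.1.le hr.2.le]

lemma sum_mul_le_add_rpow_mul (h : IsFastLatticeFlow A c m δ S w) (hc : 0 ≤ c) (hm0 : 0 ≤ m)
    (hm1 : m < 1) (hδ : 0 < δ) (hG : ∀ k, 0 ≤ G k) (hGA : ∀ k ∉ A, G k = 0)
    (hQ0 : ∀ k ∈ A, 0 ≤ Q k) (hQ : ∀ k ∈ A, -Q k ≤ c * latticeLap G k) {t s : ℝ} (ht : 0 < t)
    (hts : t ≤ s) (hsS : s ≤ S) :
    ∑ k ∈ A, G k * w t k ≤ ∑ k ∈ A, G k * w s k +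
      s ^ (1 / (1 - m)) * (t ^ (-(m / (1 - m))) * ∑ k ∈ A, Q k * w t k ^ m) := by
  have hs : 0 < s := ht.trans_le hts
  have hM : 0 ≤ t ^ (-(m / (1 - m))) * ∑ k ∈ A, Q k * w t k ^ m :=
    mul_nonneg (by positivity) <| Finset.sum_nonneg fun k hk =>
      mul_nonneg (hQ0 k hk) (Real.rpow_nonneg (h.pos hδ ⟨ht.le, hts.trans hsS⟩ k).le m)
  have hmono := h.monotoneOn_sum_mul_add_rpow hc hm0 hm1 hδ hG hGA hQ0 hQ ht
    ⟨le_rfl, hts.trans hsS⟩ ⟨hts, hsS⟩ hts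
  have hinit : 0 ≤ (1 - m) * t ^ (1 / (1 - m)) :=
    mul_nonneg (by linarith) (by positivity)
  have hfinal : (1 - m) * s ^ (1 / (1 - m)) ≤ s ^ (1 / (1 - m)) :=
    mul_le_of_le_one_left (by positivity) (by linarith)
  linarith [mul_nonneg hinit hM, mul_le_mul_of_nonneg_right hfinal hM]

end IsFastLatticeFlow

end Potential

section LatticeBall

variable {d n : ℕ}

/-- The squared Euclidean length of a lattice vector. -/
noncomputable def latticeNormSq (k : Fin d → ℤ) : ℝ := ∑ i, (k i : ℝ) ^ 2

lemma latticeNormSq_nonneg (k : Fin d → ℤ) : 0 ≤ latticeNormSq k :=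
  Finset.sum_nonneg fun _ _ => sq_nonneg _

@[simp]
lemma latticeNormSq_zero : latticeNormSq (0 : Fin d → ℤ) = 0 := by simp [latticeNormSq]

lemma latticeNormSq_add_single (k : Fin d → ℤ) (i : Fin d) (z : ℤ) :
    latticeNormSq (k + Pi.single i z) = latticeNormSq k + 2 * z * k i + z ^ 2 := by
  have hterm : ∀ j, (((k + Pi.single i z : Fin d → ℤ) j : ℤ) : ℝ) ^ 2 =
      (k j : ℝ) ^ 2 + if j = i then (2 * z * k i + z ^ 2 : ℝ) else 0 := by
    intro j
    rcases eq_or_ne j i with rfl | hji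
    · simp; ring
    · simp [hji]
  simp only [latticeNormSq, hterm, Finset.sum_add_distrib, Finset.sum_ite_eq', Finset.mem_univ,
    if_true, add_assoc]

lemma latticeNormSq_add_single_one (k : Fin d → ℤ) (i : Fin d) :
    latticeNormSq (k + Pi.single i 1) = latticeNormSq k + 2 * k i + 1 := by
  simpa using latticeNormSq_add_single k i 1

lemma latticeNormSq_sub_single_one (k : Fin d → ℤ) (i : Fin d) :
    latticeNormSq (k - Pi.single i 1) = latticeNormSq k - 2 * k i + 1 := by
  simpa [sub_eq_add_neg, ← Pi.single_neg] using latticeNormSq_add_single k i (-1)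

open Classical in
/-- The lattice points of length less than `2n`. After scaling by the mesh `1 / n` they fill the
ball of radius `2`. -/
noncomputable def latticeBall (d n : ℕ) : Finset (Fin d → ℤ) :=
  (Fintype.piFinset fun _ => Finset.Icc (-(2 * n : ℤ)) (2 * n)).filter
    fun k => latticeNormSq k < 4 * (n : ℝ) ^ 2

lemma mem_latticeBall {k : Fin d → ℤ} :
    k ∈ latticeBall d n ↔ latticeNormSq k < 4 * (n : ℝ) ^ 2 := by
  simp only [latticeBall, Finset.mem_filter, Fintype.mem_piFinset, Finset.mem_Icc,
    and_iff_right_iff_imp]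
  intro hk i
  have hki : (k i : ℝ) ^ 2 ≤ latticeNormSq k :=
    Finset.single_le_sum (f := fun i => (k i : ℝ) ^ 2) (fun _ _ => sq_nonneg _)
      (Finset.mem_univ i)
  have habs := abs_lt_of_sq_lt_sq' (hki.trans_lt (hk.trans_eq (by ring : _ = (2 * (n : ℝ)) ^ 2)))
    (by positivity)
  exact ⟨by exact_mod_cast habs.1.le, by exact_mod_cast habs.2.le⟩

lemma card_latticeBall_le (hn : 1 ≤ n) : ((latticeBall d n).card : ℝ) ≤ (n : ℝ) ^ d * 5 ^ d := by
  have hcard : (latticeBall d n).card ≤ (n * 5) ^ d := by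
    refine (Finset.card_filter_le _ _).trans ?_
    rw [Fintype.card_piFinset]
    simp only [Int.card_Icc, Finset.prod_const, Finset.card_univ, Fintype.card_fin]
    exact Nat.pow_le_pow_left (by omega) d
  calc ((latticeBall d n).card : ℝ) ≤ ((n * 5) ^ d : ℕ) := by exact_mod_cast hcard
    _ = (n : ℝ) ^ d * 5 ^ d := by push_cast; exact mul_pow _ _ _

/-- The Riemann sum, with mesh `1 / n`, over the ball of radius `2`. -/
noncomputable def gridSum (n : ℕ) (f : (Fin d → ℤ) → ℝ) : ℝ :=
  ((n : ℝ) ^ d)⁻¹ * ∑ k ∈ latticeBall d n, f k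

variable {f g : (Fin d → ℤ) → ℝ}

lemma gridSum_mono (hfg : ∀ k ∈ latticeBall d n, f k ≤ g k) : gridSum n f ≤ gridSum n g :=
  mul_le_mul_of_nonneg_left (Finset.sum_le_sum hfg) (by positivity)

lemma gridSum_nonneg (hf : ∀ k ∈ latticeBall d n, 0 ≤ f k) : 0 ≤ gridSum n f :=
  mul_nonneg (by positivity) (Finset.sum_nonneg hf)

lemma gridSum_add (f g : (Fin d → ℤ) → ℝ) :
    gridSum n (fun k => f k + g k) = gridSum n f + gridSum n g := by
  rw [gridSum, gridSum, gridSum, Finset.sum_add_distrib, mul_add]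

lemma gridSum_const_mul (c : ℝ) (f : (Fin d → ℤ) → ℝ) :
    gridSum n (fun k => c * f k) = c * gridSum n f := by
  rw [gridSum, gridSum, ← Finset.mul_sum, mul_left_comm]

lemma gridSum_const_le (hn : 1 ≤ n) {c : ℝ} (hc : 0 ≤ c) :
    gridSum (d := d) n (fun _ => c) ≤ 5 ^ d * c := by
  rw [gridSum, Finset.sum_const, nsmul_eq_mul, ← mul_assoc]
  refine mul_le_mul_of_nonneg_right ?_ hc
  rw [inv_mul_le_iff₀ (pow_pos (Nat.cast_pos.2 hn) d)]
  exact card_latticeBall_le hn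

end LatticeBall

section Mass

variable {d n : ℕ} {m : ℝ}

lemma rpow_add_mul_sub_le_rpow {a b p : ℝ} (ha : 0 < a) (hb : 0 ≤ b) (hp : 1 ≤ p) :
    a ^ p + p * a ^ (p - 1) * (b - a) ≤ b ^ p := by
  have hbernoulli := one_add_mul_self_le_rpow_one_add (s := b / a - 1) (p := p)
    (by linarith [div_nonneg hb ha.le]) hp
  rw [add_sub_cancel, Real.div_rpow hb ha.le, le_div_iff₀ (by positivity)] at hbernoulli
  refine le_of_eq_of_le ?_ hbernoulli
  rw [Real.rpow_sub_one ha.ne']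
  field_simp

lemma rpow_le_rpow_add_mul_sub {a b p : ℝ} (ha : 0 < a) (hb : 0 ≤ b) (hp0 : 0 ≤ p) (hp1 : p ≤ 1) :
    b ^ p ≤ a ^ p + p * a ^ (p - 1) * (b - a) := by
  have hbernoulli := rpow_one_add_le_one_add_mul_self (s := b / a - 1) (p := p)
    (by linarith [div_nonneg hb ha.le]) hp0 hp1
  rw [add_sub_cancel, Real.div_rpow hb ha.le, div_le_iff₀ (by positivity)] at hbernoulli
  refine hbernoulli.trans_eq ?_
  rw [Real.rpow_sub_one ha.ne']
  field_simp

/-- The cutoff `(2 - |x|²)₊ ^ (1 / (1 - m))` at `x = k / n`. With this exponent its Laplacian is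
bounded below by a multiple of its own `m`-th power. -/
noncomputable def massCutoff (m : ℝ) (n : ℕ) (k : Fin d → ℤ) : ℝ :=
  max (2 - latticeNormSq k / (n : ℝ) ^ 2) 0 ^ (1 / (1 - m))

lemma massCutoff_nonneg (m : ℝ) (n : ℕ) (k : Fin d → ℤ) : 0 ≤ massCutoff m n k :=
  Real.rpow_nonneg (le_max_right _ _) _

lemma massCutoff_eq_zero (hm1 : m < 1) (hn : 1 ≤ n) {k : Fin d → ℤ}
    (hk : 2 * (n : ℝ) ^ 2 ≤ latticeNormSq k) : massCutoff m n k = 0 := by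
  rw [massCutoff,
    max_eq_right (sub_nonpos.2 ((le_div_iff₀ (pow_pos (Nat.cast_pos.2 hn) 2)).2 hk)),
    Real.zero_rpow (one_div_pos.2 (sub_pos.2 hm1)).ne']

lemma massCutoff_eq_zero_of_notMem (hm1 : m < 1) (hn : 1 ≤ n) {k : Fin d → ℤ}
    (hk : k ∉ latticeBall d n) : massCutoff m n k = 0 :=
  massCutoff_eq_zero hm1 hn <| by
    linarith [not_lt.1 (mt mem_latticeBall.2 hk), sq_nonneg (n : ℝ)]

lemma massCutoff_le (hm1 : m < 1) (k : Fin d → ℤ) : massCutoff m n k ≤ 2 ^ (1 / (1 - m)) :=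
  Real.rpow_le_rpow (le_max_right _ _)
    (max_le (sub_le_self _ (div_nonneg (latticeNormSq_nonneg k) (sq_nonneg _))) zero_le_two)
    (one_div_pos.2 (sub_pos.2 hm1)).le

lemma one_le_massCutoff (hm1 : m < 1) {k : Fin d → ℤ} (hk : latticeNormSq k ≤ (n : ℝ) ^ 2) :
    1 ≤ massCutoff m n k :=
  Real.one_le_rpow
    (le_max_of_le_left (by linarith [div_le_one_of_le₀ hk (sq_nonneg (n : ℝ))]))
    (one_div_pos.2 (sub_pos.2 hm1)).le

lemma massCutoff_second_diff_ge (hm0 : 0 ≤ m) (hm1 : m < 1) (hn : 1 ≤ n) {k : Fin d → ℤ}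
    (hk : latticeNormSq k < 2 * (n : ℝ) ^ 2) (i : Fin d) :
    -(2 / (1 - m) * massCutoff m n k ^ m / (n : ℝ) ^ 2) ≤
      massCutoff m n (k + Pi.single i 1) + massCutoff m n (k - Pi.single i 1)
        - 2 * massCutoff m n k := by
  have hm : 0 < 1 - m := sub_pos.2 hm1
  set a := 2 - latticeNormSq k / (n : ℝ) ^ 2
  have ha : 0 < a := sub_pos.2 ((div_lt_iff₀ (pow_pos (Nat.cast_pos.2 hn) 2)).2 hk)
  have hp : 1 ≤ 1 / (1 - m) := one_le_one_div hm (by linarith)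
  have hcutoff : massCutoff m n k = a ^ (1 / (1 - m)) := by rw [massCutoff, max_eq_left ha.le]
  have hcutoff_rpow : massCutoff m n k ^ m = a ^ (1 / (1 - m) - 1) := by
    rw [hcutoff, ← Real.rpow_mul ha.le]
    congr 1
    field_simp
    ring
  have htangent : ∀ j : Fin d → ℤ, massCutoff m n k +
      1 / (1 - m) * massCutoff m n k ^ m * (2 - latticeNormSq j / (n : ℝ) ^ 2 - a) ≤
        massCutoff m n j := by
    intro j
    rw [hcutoff_rpow, hcutoff]
    refine le_trans ?_ (rpow_add_mul_sub_le_rpow ha (le_max_right _ _) hp)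
    gcongr
    exact le_max_left _ _
  have hplus := htangent (k + Pi.single i 1)
  have hminus := htangent (k - Pi.single i 1)
  have hsum : (2 - latticeNormSq (k + Pi.single i 1) / (n : ℝ) ^ 2 - a) +
      (2 - latticeNormSq (k - Pi.single i 1) / (n : ℝ) ^ 2 - a) = -2 / (n : ℝ) ^ 2 := by
    rw [latticeNormSq_add_single_one, latticeNormSq_sub_single_one]
    simp only [a]
    ring
  linear_combination hplus + hminus - (1 / (1 - m) * massCutoff m n k ^ m) * hsum

lemma latticeLap_massCutoff_ge (hm0 : 0 < m) (hm1 : m < 1) (hn : 1 ≤ n) (k : Fin d → ℤ) :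
    -(2 * d / (1 - m) * massCutoff m n k ^ m) ≤ (n : ℝ) ^ 2 * latticeLap (massCutoff m n) k := by
  have hn0 : (n : ℝ) ≠ 0 := Nat.cast_ne_zero.2 (by omega)
  rcases le_or_gt (2 * (n : ℝ) ^ 2) (latticeNormSq k) with hk | hk
  · have hzero := massCutoff_eq_zero hm1 hn hk
    rw [hzero, Real.zero_rpow hm0.ne', mul_zero, neg_zero]
    exact mul_nonneg (sq_nonneg _) (latticeLap_nonneg_of_eq_zero (massCutoff_nonneg m n) hzero)
  · have hsum := Finset.sum_le_sum fun (i : Fin d) (_ : i ∈ Finset.univ) =>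
      massCutoff_second_diff_ge hm0.le hm1 hn hk i
    rw [Finset.sum_const, Finset.card_univ, Fintype.card_fin, nsmul_eq_mul] at hsum
    refine le_of_eq_of_le ?_ (mul_le_mul_of_nonneg_left hsum (sq_nonneg (n : ℝ)))
    field_simp

lemma gridSum_rpow_le (hm0 : 0 ≤ m) (hm1 : m ≤ 1) (hn : 1 ≤ n) {f : (Fin d → ℤ) → ℝ}
    (hf : ∀ k ∈ latticeBall d n, 0 ≤ f k) (hpos : 0 < gridSum n f) :
    gridSum n (fun k => f k ^ m) ≤ (1 + 5 ^ d) * gridSum n f ^ m := by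
  set Y := gridSum n f
  have htangent : ∀ k ∈ latticeBall d n, f k ^ m ≤ Y ^ m + m * Y ^ (m - 1) * f k := fun k hk => by
    have hmY : 0 ≤ m * Y ^ (m - 1) * Y := by positivity
    linarith [rpow_le_rpow_add_mul_sub hpos (hf k hk) hm0 hm1]
  calc gridSum n (fun k => f k ^ m) ≤ gridSum n (fun k => Y ^ m + m * Y ^ (m - 1) * f k) :=
        gridSum_mono htangent
    _ = gridSum (d := d) n (fun _ => Y ^ m) + m * Y ^ m := by
        rw [gridSum_add, gridSum_const_mul, mul_assoc, Real.rpow_sub_one hpos.ne',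
          div_mul_cancel₀ _ hpos.ne']
    _ ≤ 5 ^ d * Y ^ m + 1 * Y ^ m :=
        add_le_add (gridSum_const_le hn (by positivity)) (by gcongr)
    _ = (1 + 5 ^ d) * Y ^ m := by ring

lemma neg_rpow_gridSum_massCutoff_le (hm0 : 0 < m) (hm1 : m < 1) (hn : 1 ≤ n)
    {f : (Fin d → ℤ) → ℝ} (hf : ∀ k, 0 ≤ f k)
    (hpos : 0 < gridSum n fun k => massCutoff m n k * f k) :
    -(2 * d * (1 + 5 ^ d) / (1 - m) * gridSum n (fun k => massCutoff m n k * f k) ^ m) ≤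
      gridSum n fun k => massCutoff m n k * ((n : ℝ) ^ 2 * latticeLap (fun j => f j ^ m) k) := by
  have hjensen := mul_le_mul_of_nonneg_left
    (gridSum_rpow_le hm0.le hm1.le hn
      (fun k _ => mul_nonneg (massCutoff_nonneg m n k) (hf k)) hpos)
    (div_nonneg (by positivity) (sub_pos.2 hm1).le : 0 ≤ 2 * (d : ℝ) / (1 - m))
  have hrate : gridSum n (fun k => 2 * d / (1 - m) * massCutoff m n k ^ m * f k ^ m) =
      2 * d / (1 - m) * gridSum n fun k => (massCutoff m n k * f k) ^ m := by
    simp only [Real.mul_rpow (massCutoff_nonneg m n _) (hf _), mul_assoc, gridSum_const_mul]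
  have hloss : -gridSum n (fun k => 2 * d / (1 - m) * massCutoff m n k ^ m * f k ^ m) ≤
      gridSum n fun k => massCutoff m n k * ((n : ℝ) ^ 2 * latticeLap (fun j => f j ^ m) k) := by
    rw [gridSum, gridSum, ← mul_neg]
    exact mul_le_mul_of_nonneg_left
      (neg_sum_mul_le_sum_mul_latticeLap (sq_nonneg (n : ℝ)) (massCutoff_nonneg m n)
        (fun k hk => massCutoff_eq_zero_of_notMem hm1 hn hk)
        (fun k _ => latticeLap_massCutoff_ge hm0 hm1 hn k)
        fun k => Real.rpow_nonneg (hf k) m)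
      (by positivity)
  rw [hrate] at hloss
  linear_combination hloss + hjensen

lemma gridSum_massCutoff_mul_pos (hm1 : m < 1) (hn : 1 ≤ n) {f : (Fin d → ℤ) → ℝ}
    (hf : ∀ k, 0 < f k) : 0 < gridSum n fun k => massCutoff m n k * f k := by
  have hn0 : (0 : ℝ) < n := Nat.cast_pos.2 hn
  refine mul_pos (inv_pos.2 (pow_pos hn0 d)) <| Finset.sum_pos'
    (fun k _ => mul_nonneg (massCutoff_nonneg m n k) (hf k).le)
    ⟨0, mem_latticeBall.2 ?_, mul_pos (one_pos.trans_le (one_le_massCutoff hm1 ?_)) (hf 0)⟩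
  all_goals rw [latticeNormSq_zero]; positivity

lemma add_rpow_le_two_rpow_mul {x y p : ℝ} (hx : 0 ≤ x) (hy : 0 ≤ y) (hp : 0 ≤ p) :
    (x + y) ^ p ≤ 2 ^ p * (x ^ p + y ^ p) := by
  wlog hxy : x ≤ y generalizing x y
  · rw [add_comm x, add_comm (x ^ p)]
    exact this hy hx (le_of_not_ge hxy)
  calc (x + y) ^ p ≤ (2 * y) ^ p := Real.rpow_le_rpow (by positivity) (by linarith) hp
    _ = 2 ^ p * y ^ p := Real.mul_rpow zero_le_two hy
    _ ≤ 2 ^ p * (x ^ p + y ^ p) :=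
        mul_le_mul_of_nonneg_left (le_add_of_nonneg_left (by positivity)) (by positivity)

lemma le_of_neg_rpow_le_deriv (hm1 : m < 1) {Y Y' : ℝ → ℝ} {K s : ℝ} (hs : 0 ≤ s) (hK : 0 ≤ K)
    (hY : ContinuousOn Y (Icc 0 s)) (hpos : ∀ r ∈ Icc 0 s, 0 < Y r)
    (hder : ∀ r ∈ Ioo 0 s, HasDerivAt Y (Y' r) r)
    (hle : ∀ r ∈ Ioo 0 s, -(K / (1 - m) * Y r ^ m) ≤ Y' r) :
    Y 0 ≤ 2 ^ (1 / (1 - m)) * (Y s + K ^ (1 / (1 - m)) * s ^ (1 / (1 - m))) := by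
  have hm : 0 < 1 - m := sub_pos.2 hm1
  have hYs := hpos s ⟨hs, le_rfl⟩
  have hY0 := hpos 0 ⟨le_rfl, hs⟩
  have hmono : MonotoneOn (fun r => Y r ^ (1 - m) + K * r) (Icc 0 s) := by
    refine monotoneOn_Icc_of_hasDerivAt_nonneg
      ((hY.rpow_const fun r hr => .inl (hpos r hr).ne').add (by fun_prop))
      (fun r hr => ((hder r hr).rpow_const (.inl (hpos r (Ioo_subset_Icc_self hr)).ne')).add
        ((hasDerivAt_id r).const_mul K)) fun r hr => ?_
    have hYr := hpos r (Ioo_subset_Icc_self hr)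
    have hscaled := mul_le_mul_of_nonneg_right (hle r hr)
      (by positivity : 0 ≤ (1 - m) * Y r ^ (1 - m - 1))
    have hone : Y r ^ m * Y r ^ (1 - m - 1) = 1 := by rw [← Real.rpow_add hYr]; simp
    have hK' : K / (1 - m) * (1 - m) = K := div_mul_cancel₀ _ hm.ne'
    linear_combination hscaled + Y r ^ m * Y r ^ (1 - m - 1) * hK' + K * hone
  have hroot : ∀ y : ℝ, 0 < y → (y ^ (1 - m)) ^ (1 / (1 - m)) = y := fun y hy => by
    rw [← Real.rpow_mul hy.le, mul_one_div_cancel hm.ne', Real.rpow_one]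
  have hpow : Y 0 ^ (1 - m) ≤ Y s ^ (1 - m) + K * s := by
    simpa using hmono ⟨le_rfl, hs⟩ ⟨hs, le_rfl⟩ hs
  calc Y 0 = (Y 0 ^ (1 - m)) ^ (1 / (1 - m)) := (hroot _ hY0).symm
    _ ≤ (Y s ^ (1 - m) + K * s) ^ (1 / (1 - m)) := by gcongr
    _ ≤ 2 ^ (1 / (1 - m)) * ((Y s ^ (1 - m)) ^ (1 / (1 - m)) + (K * s) ^ (1 / (1 - m))) :=
        add_rpow_le_two_rpow_mul (by positivity) (by positivity) (by positivity)
    _ = 2 ^ (1 / (1 - m)) * (Y s + K ^ (1 / (1 - m)) * s ^ (1 / (1 - m))) := by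
        rw [hroot _ hYs, Real.mul_rpow hK hs]

lemma IsFastLatticeFlow.gridSum_massCutoff_le {δ S : ℝ} {w : ℝ → (Fin d → ℤ) → ℝ}
    (h : IsFastLatticeFlow (latticeBall d n) ((n : ℝ) ^ 2) m δ S w)
    (hn : 1 ≤ n) (hm0 : 0 < m) (hm1 : m < 1) (hδ : 0 < δ) {s : ℝ} (hs0 : 0 ≤ s) (hsS : s ≤ S) :
    gridSum n (fun k => massCutoff m n k * w 0 k) ≤ 2 ^ (1 / (1 - m)) *
      (gridSum n (fun k => massCutoff m n k * w s k) +
        (2 * d * (1 + 5 ^ d)) ^ (1 / (1 - m)) * s ^ (1 / (1 - m))) := by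
  have hIcc : ∀ r ∈ Icc 0 s, r ∈ Icc 0 S := fun r hr => ⟨hr.1, hr.2.trans hsS⟩
  have hpos : ∀ r ∈ Icc 0 s, 0 < gridSum n fun k => massCutoff m n k * w r k := fun r hr =>
    gridSum_massCutoff_mul_pos hm1 hn (h.pos hδ (hIcc r hr))
  exact le_of_neg_rpow_le_deriv (Y := fun r => gridSum n fun k => massCutoff m n k * w r k)
    hm1 hs0 (by positivity) ((continuousOn_const.mul (h.continuousOn_sum_mul _)).mono hIcc) hpos
    (fun r hr => (h.hasDerivAt_sum_mul _ ⟨hr.1, hr.2.trans_le hsS⟩).const_mul _)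
    fun r hr => neg_rpow_gridSum_massCutoff_le hm0 hm1 hn
      (fun k => (h.pos hδ (hIcc r (Ioo_subset_Icc_self hr)) k).le)
      (hpos r (Ioo_subset_Icc_self hr))

end Mass

section Extinction

-- The derivative in `z` is the square of `r * z ^ ((a - 1) / 2) - z ^ ((b - 1) / 2)`.
lemma monotoneOn_sq_mul_rpow_sub_add {a b : ℝ} (ha : 0 < a) (hb : 0 < b) (r : ℝ) {x y : ℝ}
    (hy : 0 < y) : MonotoneOn (fun z : ℝ => r ^ 2 * (z ^ a / a) -
      2 * r * (z ^ ((a + b) / 2) / ((a + b) / 2)) + z ^ b / b) (Icc y x) := by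
  have hpos : ∀ z ∈ Icc y x, 0 < z := fun z hz => hy.trans_le hz.1
  have hpow : ∀ c : ℝ, c ≠ 0 → ∀ z ∈ Icc y x,
      HasDerivAt (fun z => z ^ c / c) (z ^ (c - 1)) z := by
    intro c hc z hz
    have := (Real.hasDerivAt_rpow_const (p := c) (.inl (hpos z hz).ne')).div_const c
    rwa [mul_div_cancel_left₀ _ hc] at this
  have hder : ∀ z ∈ Icc y x, HasDerivAt (fun z => r ^ 2 * (z ^ a / a) -
        2 * r * (z ^ ((a + b) / 2) / ((a + b) / 2)) + z ^ b / b)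
      (r ^ 2 * z ^ (a - 1) - 2 * r * z ^ ((a + b) / 2 - 1) + z ^ (b - 1)) z := fun z hz =>
    (((hpow a ha.ne' z hz).const_mul _).sub ((hpow _ (by positivity) z hz).const_mul _)).add
      (hpow b hb.ne' z hz)
  refine monotoneOn_Icc_of_hasDerivAt_nonneg
    (fun z hz => (hder z hz).continuousAt.continuousWithinAt)
    (fun z hz => hder z (Ioo_subset_Icc_self hz)) fun z hz => ?_
  have hsplit : ∀ c e : ℝ, z ^ ((c + e) / 2 - 1) = z ^ ((c - 1) / 2) * z ^ ((e - 1) / 2) := by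
    intro c e
    rw [← Real.rpow_add (hpos z (Ioo_subset_Icc_self hz))]
    ring_nf
  have hsq : ∀ c : ℝ, z ^ (c - 1) = z ^ ((c - 1) / 2) * z ^ ((c - 1) / 2) := fun c => by
    rw [← hsplit, add_self_div_two]
  rw [hsq a, hsq b, hsplit a b]
  linear_combination sq_nonneg (r * z ^ ((a - 1) / 2) - z ^ ((b - 1) / 2))

lemma stroock_varopoulos {a b x y : ℝ} (ha : 0 < a) (hb : 0 < b) (hx : 0 < x) (hy : 0 < y) :
    4 * a * b / (a + b) ^ 2 * (x ^ ((a + b) / 2) - y ^ ((a + b) / 2)) ^ 2 ≤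
      (x ^ a - y ^ a) * (x ^ b - y ^ b) := by
  wlog hyx : y ≤ x generalizing x y
  · linear_combination this hy hx (le_of_not_ge hyx)
  have hdiscrim := discrim_le_zero (a := (x ^ a - y ^ a) / a)
    (b := -(2 * (x ^ ((a + b) / 2) - y ^ ((a + b) / 2)) / ((a + b) / 2)))
    (c := (x ^ b - y ^ b) / b) fun r => by
      linear_combination
        monotoneOn_sq_mul_rpow_sub_add ha hb r hy ⟨le_rfl, hyx⟩ ⟨hyx, le_rfl⟩ hyx
  calc 4 * a * b / (a + b) ^ 2 * (x ^ ((a + b) / 2) - y ^ ((a + b) / 2)) ^ 2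
      = a * b / 4 * discrim ((x ^ a - y ^ a) / a)
          (-(2 * (x ^ ((a + b) / 2) - y ^ ((a + b) / 2)) / ((a + b) / 2))) ((x ^ b - y ^ b) / b) +
          (x ^ a - y ^ a) * (x ^ b - y ^ b) := by
        unfold discrim; field_simp; ring
    _ ≤ (x ^ a - y ^ a) * (x ^ b - y ^ b) := by
        linear_combination a * b / 4 * hdiscrim

section CriticalExponent

variable {d : ℕ} {m : ℝ}

lemma three_le_of_lt_critical (hm0 : 0 < m) (hmc : m < ((d : ℝ) - 2) / d) : 3 ≤ d := by
  have hpos : 0 < ((d : ℝ) - 2) / d := hm0.trans hmc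
  have hd2 : (0 : ℝ) < d - 2 := by
    by_contra! hneg
    exact hpos.not_ge (div_nonpos_of_nonpos_of_nonneg hneg d.cast_nonneg)
  have : 2 < d := by exact_mod_cast sub_pos.1 hd2
  omega

lemma lt_one_of_lt_critical (hm0 : 0 < m) (hmc : m < ((d : ℝ) - 2) / d) : m < 1 := by
  have hd : (0 : ℝ) < d := Nat.cast_pos.2 (by have := three_le_of_lt_critical hm0 hmc; omega)
  exact hmc.trans ((div_lt_one hd).2 (by linarith))

lemma one_lt_critical_exponent (hm0 : 0 < m) (hmc : m < ((d : ℝ) - 2) / d) :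
    1 < d * (1 - m) / 2 := by
  have hd : (0 : ℝ) < d := Nat.cast_pos.2 (by have := three_le_of_lt_critical hm0 hmc; omega)
  rw [lt_div_iff₀ hd] at hmc
  linarith

end CriticalExponent

section Dissipation

variable {d : ℕ} {a b δ : ℝ} {v : (Fin d → ℤ) → ℝ}

lemma mul_dirichletEnergy_le_neg_sum_mul_latticeLap {A : Finset (Fin d → ℤ)} (ha : 0 < a)
    (hb : 0 < b) (hv : ∀ k, 0 < v k) (hvA : ∀ k ∉ A, v k = δ) :
    4 * a * b / (a + b) ^ 2 * dirichletEnergy (fun k => v k ^ ((a + b) / 2) - δ ^ ((a + b) / 2)) ≤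
      -∑ k ∈ A, (v k ^ a - δ ^ a) * latticeLap (fun j => v j ^ b) k := by
  have hzero : ∀ c : ℝ, ∀ k ∉ A, v k ^ c - δ ^ c = 0 := fun c k hk => by rw [hvA k hk, sub_self]
  have hfin : ∀ c : ℝ, (fun k => v k ^ c - δ ^ c).HasFiniteSupport := fun c =>
    hasFiniteSupport_of_forall_notMem (hzero c)
  rw [← tsum_eq_sum (L := .unconditional _) (fun k hk => by rw [hzero a k hk, zero_mul]),
    tsum_mul_latticeLap (hfin a), neg_neg, dirichletEnergy, ← tsum_mul_left]
  refine Summable.tsum_le_tsum (fun k => ?_) (.mul_left _ (summable_sum fun i _ =>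
    summable_sq_sub (hfin _) _)) (summable_sum fun i _ =>
      summable_mul_of_hasFiniteSupport (hasFiniteSupport_diff (hfin a) _) _)
  rw [Finset.mul_sum]
  refine Finset.sum_le_sum fun i _ => ?_
  simp only [sub_sub_sub_cancel_right]
  exact stroock_varopoulos ha hb (hv _) (hv k)

lemma inv_pow_rpow_sub_two_div {n : ℕ} (hn : 1 ≤ n) (hd : d ≠ 0) :
    (((n : ℝ) ^ d)⁻¹) ^ (((d : ℝ) - 2) / d) = ((n : ℝ) ^ d)⁻¹ * (n : ℝ) ^ 2 := by
  have hn0 : (0 : ℝ) < n := Nat.cast_pos.2 hn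
  rw [Real.inv_rpow (by positivity), ← Real.rpow_natCast, ← Real.rpow_mul hn0.le,
    mul_div_cancel₀ _ (Nat.cast_ne_zero.2 hd), Real.rpow_sub hn0, Real.rpow_two]
  field_simp

lemma exists_mul_gridSum_rpow_le_neg_gridSum_mul_latticeLap (hd : 3 ≤ d) (ha : 0 < a)
    (hb : 0 < b) : ∃ c, 0 < c ∧ ∀ n : ℕ, 1 ≤ n → ∀ δ : ℝ, 0 < δ → ∀ v : (Fin d → ℤ) → ℝ,
      (∀ k, δ ≤ v k) → (∀ k ∉ latticeBall d n, v k = δ) →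
      c * gridSum n (fun k => (v k ^ ((a + b) / 2) - δ ^ ((a + b) / 2)) ^ (2 * (d : ℝ) / (d - 2)))
          ^ (((d : ℝ) - 2) / d) ≤
        -gridSum n fun k =>
          (v k ^ a - δ ^ a) * ((n : ℝ) ^ 2 * latticeLap (fun j => v j ^ b) k) := by
  have hd3 : (3 : ℝ) ≤ d := by exact_mod_cast hd
  obtain ⟨C, hC, hsobolev⟩ := exists_sobolev_const hd
  obtain ⟨κ, hκ⟩ : ∃ κ, κ = 4 * a * b / (a + b) ^ 2 := ⟨_, rfl⟩
  have hκ0 : 0 < κ := by rw [hκ]; positivity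
  refine ⟨κ / C, by positivity, fun n hn δ hδ v hv hvA => ?_⟩
  obtain ⟨f, hf⟩ : ∃ f : (Fin d → ℤ) → ℝ,
      f = fun k => v k ^ ((a + b) / 2) - δ ^ ((a + b) / 2) := ⟨_, rfl⟩
  have hfk : ∀ k, v k ^ ((a + b) / 2) - δ ^ ((a + b) / 2) = f k := fun k => by rw [hf]
  have hf0 : ∀ k, 0 ≤ f k := fun k =>
    hfk k ▸ sub_nonneg.2 (Real.rpow_le_rpow hδ.le (hv k) (by positivity))
  have hfA : ∀ k ∉ latticeBall d n, f k = 0 := fun k hk => by rw [← hfk, hvA k hk, sub_self]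
  have hsum0 : 0 ≤ ∑ k ∈ latticeBall d n, f k ^ (2 * (d : ℝ) / (d - 2)) :=
    Finset.sum_nonneg fun k _ => Real.rpow_nonneg (hf0 k) _
  have hdissip := mul_dirichletEnergy_le_neg_sum_mul_latticeLap ha hb
    (fun k => hδ.trans_le (hv k)) hvA
  have hsob := hsobolev f (hasFiniteSupport_of_forall_notMem hfA) hf0
  rw [tsum_eq_sum fun k hk => by
    rw [hfA k hk, Real.zero_rpow (div_pos (by positivity) (by linarith)).ne']] at hsob
  rw [← hκ, ← hf] at hdissip
  simp only [hfk, gridSum]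
  rw [Real.mul_rpow (by positivity) hsum0, inv_pow_rpow_sub_two_div hn (by omega)]
  calc κ / C * (((n : ℝ) ^ d)⁻¹ * (n : ℝ) ^ 2 *
        (∑ k ∈ latticeBall d n, f k ^ (2 * (d : ℝ) / (d - 2))) ^ (((d : ℝ) - 2) / d))
      ≤ κ / C * (((n : ℝ) ^ d)⁻¹ * (n : ℝ) ^ 2 * (C * dirichletEnergy f)) := by gcongr
    _ = ((n : ℝ) ^ d)⁻¹ * (n : ℝ) ^ 2 * (κ * dirichletEnergy f) := by field_simp
    _ ≤ ((n : ℝ) ^ d)⁻¹ * (n : ℝ) ^ 2 *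
          -∑ k ∈ latticeBall d n, (v k ^ a - δ ^ a) * latticeLap (fun j => v j ^ b) k := by gcongr
    _ = -(((n : ℝ) ^ d)⁻¹ * ∑ k ∈ latticeBall d n,
          (v k ^ a - δ ^ a) * ((n : ℝ) ^ 2 * latticeLap (fun j => v j ^ b) k)) := by
        simp only [mul_left_comm _ ((n : ℝ) ^ 2), ← Finset.mul_sum]
        ring

end Dissipation

section Entropy

/-- The primitive of `x ^ (p - 1) - δ ^ (p - 1)` normalised to be positive on `[δ, ∞)`; its sum
along a lattice flow with boundary value `δ` replaces the `p`-th power of the `L ^ p` norm. -/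
noncomputable def entropyDensity (p δ x : ℝ) : ℝ := x ^ p / p - δ ^ (p - 1) * x + δ ^ p

variable {p δ x : ℝ}

lemma entropyDensity_le (hp : 1 ≤ p) (hδ : 0 ≤ δ) (hx : 0 ≤ x) :
    entropyDensity p δ x ≤ x ^ p + δ ^ p := by
  have hdiv : x ^ p / p ≤ x ^ p := div_le_self (Real.rpow_nonneg hx _) hp
  have hlin : 0 ≤ δ ^ (p - 1) * x := by positivity
  unfold entropyDensity
  linarith

lemma entropyDensity_pos (hp : 1 ≤ p) (hδ : 0 < δ) (hx : 0 ≤ x) : 0 < entropyDensity p δ x := by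
  have hp0 : 0 < p := one_pos.trans_le hp
  have htangent := div_le_div_of_nonneg_right (rpow_add_mul_sub_le_rpow hδ hx hp) hp0.le
  have hδp : δ ^ (p - 1) * δ = δ ^ p := by rw [← Real.rpow_add_one hδ.ne', sub_add_cancel]
  have hsplit : (δ ^ p + p * δ ^ (p - 1) * (x - δ)) / p =
      δ ^ p / p + δ ^ (p - 1) * x - δ ^ p := by
    rw [← hδp]; field_simp; ring
  have hpos : 0 < δ ^ p / p := by positivity
  unfold entropyDensity
  linarith

lemma hasDerivAt_entropyDensity (hp : p ≠ 0) (hx : x ≠ 0) :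
    HasDerivAt (entropyDensity p δ) (x ^ (p - 1) - δ ^ (p - 1)) x := by
  have hder := (((Real.hasDerivAt_rpow_const (p := p) (.inl hx)).div_const p).sub
    ((hasDerivAt_id x).const_mul (δ ^ (p - 1)))).add_const (δ ^ p)
  rwa [mul_div_cancel_left₀ _ hp, mul_one] at hder

variable {d n : ℕ} {v : (Fin d → ℤ) → ℝ}

lemma gridSum_entropyDensity_le (hn : 1 ≤ n) (hp : 1 ≤ p) (hδ : 0 ≤ δ) (hv : ∀ k, 0 ≤ v k) :
    gridSum n (fun k => entropyDensity p δ (v k)) ≤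
      gridSum n (fun k => v k ^ p) + 5 ^ d * δ ^ p :=
  calc gridSum n (fun k => entropyDensity p δ (v k))
      ≤ gridSum n (fun k => v k ^ p + δ ^ p) :=
        gridSum_mono fun k _ => entropyDensity_le hp hδ (hv k)
    _ = gridSum n (fun k => v k ^ p) + gridSum n (fun _ => δ ^ p) := gridSum_add _ _
    _ ≤ gridSum n (fun k => v k ^ p) + 5 ^ d * δ ^ p := by
        gcongr
        exact gridSum_const_le hn (by positivity)

lemma gridSum_entropyDensity_pos (hn : 1 ≤ n) (hp : 1 ≤ p) (hδ : 0 < δ) (hv : ∀ k, 0 ≤ v k) :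
    0 < gridSum n fun k => entropyDensity p δ (v k) := by
  refine mul_pos (inv_pos.2 (pow_pos (Nat.cast_pos.2 hn) d)) (Finset.sum_pos
    (fun k _ => entropyDensity_pos hp hδ (hv k)) ⟨0, mem_latticeBall.2 ?_⟩)
  rw [latticeNormSq_zero]
  positivity

lemma gridSum_rpow_mul_le {β q : ℝ} (hn : 1 ≤ n) (hβ : 0 ≤ β) (hq : 0 ≤ q) (hδ : 0 ≤ δ)
    (hv : ∀ k, δ ≤ v k) : gridSum n (fun k => v k ^ (β * q)) ≤
      2 ^ q * gridSum n (fun k => (v k ^ β - δ ^ β) ^ q) + 5 ^ d * (2 ^ q * δ ^ (β * q)) := by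
  calc gridSum n (fun k => v k ^ (β * q))
      ≤ gridSum n (fun k => 2 ^ q * (v k ^ β - δ ^ β) ^ q + 2 ^ q * δ ^ (β * q)) := by
        refine gridSum_mono fun k _ => ?_
        have hsplit := add_rpow_le_two_rpow_mul (sub_nonneg.2 (Real.rpow_le_rpow hδ (hv k) hβ))
          (Real.rpow_nonneg hδ β) hq
        rwa [sub_add_cancel, ← Real.rpow_mul (hδ.trans (hv k)), ← Real.rpow_mul hδ,
          mul_add] at hsplit
    _ = 2 ^ q * gridSum n (fun k => (v k ^ β - δ ^ β) ^ q) +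
          gridSum n (fun _ => 2 ^ q * δ ^ (β * q)) := by rw [gridSum_add, gridSum_const_mul]
    _ ≤ _ := by
        gcongr
        exact gridSum_const_le hn (by positivity)

lemma le_add_rpow_mul_rpow (hp : 1 ≤ p) (hδ : 0 < δ) (hx : 0 < x) :
    x ≤ δ + δ ^ (1 - p) * x ^ p := by
  rcases le_total x δ with hxδ | hδx
  · exact hxδ.trans (le_add_of_nonneg_right (by positivity))
  · calc x = x ^ (1 - p) * x ^ p := by rw [← Real.rpow_add hx]; simp
      _ ≤ δ ^ (1 - p) * x ^ p := by
          exact mul_le_mul_of_nonneg_right (Real.rpow_le_rpow_of_nonpos hδ hδx (by linarith))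
            (by positivity)
      _ ≤ δ + δ ^ (1 - p) * x ^ p := le_add_of_nonneg_left hδ.le

lemma gridSum_le_of_gridSum_rpow_le {K : ℝ} (hn : 1 ≤ n) (hp : 1 ≤ p) (hδ : 0 < δ)
    (hv : ∀ k, 0 < v k) (hK : gridSum n (fun k => v k ^ p) ≤ K * δ ^ p) :
    gridSum n v ≤ (5 ^ d + K) * δ := by
  have hδp : δ ^ (1 - p) * δ ^ p = δ := by rw [← Real.rpow_add hδ]; simp
  calc gridSum n v ≤ gridSum n (fun k => δ + δ ^ (1 - p) * v k ^ p) :=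
        gridSum_mono fun k _ => le_add_rpow_mul_rpow hp hδ (hv k)
    _ = gridSum n (fun _ => δ) + δ ^ (1 - p) * gridSum n (fun k => v k ^ p) := by
        rw [gridSum_add, gridSum_const_mul]
    _ ≤ 5 ^ d * δ + δ ^ (1 - p) * (K * δ ^ p) := by
        gcongr
        exact gridSum_const_le hn hδ.le
    _ = (5 ^ d + K) * δ := by rw [mul_left_comm, hδp, add_mul]

namespace IsFastLatticeFlow

variable {m c S : ℝ} {w : ℝ → (Fin d → ℤ) → ℝ}

lemma continuousOn_gridSum_entropyDensity {A : Finset (Fin d → ℤ)}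
    (h : IsFastLatticeFlow A c m δ S w) (hδ : 0 < δ) :
    ContinuousOn (fun s => gridSum n fun k => entropyDensity p δ (w s k)) (Icc 0 S) :=
  continuousOn_const.mul (continuousOn_finsetSum _ fun k _ =>
    ((((h.continuousOn k).rpow_const fun _ hs => .inl (h.pos hδ hs k).ne').div_const _).sub
      (continuousOn_const.mul (h.continuousOn k))).add continuousOn_const)

lemma hasDerivAt_gridSum_entropyDensity (h : IsFastLatticeFlow (latticeBall d n) c m δ S w)
    (hp : p ≠ 0) (hδ : 0 < δ) {s : ℝ} (hs : s ∈ Ioo 0 S) :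
    HasDerivAt (fun s => gridSum n fun k => entropyDensity p δ (w s k))
      (gridSum n fun k =>
        (w s k ^ (p - 1) - δ ^ (p - 1)) * (c * latticeLap (fun j => w s j ^ m) k)) s :=
  (HasDerivAt.fun_sum fun k hk =>
    (hasDerivAt_entropyDensity hp (h.pos hδ (Ioo_subset_Icc_self hs) k).ne').comp s
      (h.hasDerivAt k hk s hs)).const_mul _

end IsFastLatticeFlow

end Entropy

lemma mul_lt_rpow_of_deriv_le_neg_rpow {E E' : ℝ → ℝ} {K γ τ : ℝ} (hγ : 0 < γ) (hτ : 0 ≤ τ)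
    (hE : ContinuousOn E (Icc 0 τ)) (hpos : ∀ r ∈ Icc 0 τ, 0 < E r)
    (hder : ∀ r ∈ Ioo 0 τ, HasDerivAt E (E' r) r)
    (hle : ∀ r ∈ Ioo 0 τ, E' r ≤ -(K / γ * E r ^ (1 - γ))) :
    K * τ < E 0 ^ γ := by
  have hmono : MonotoneOn (fun r => -(E r ^ γ + K * r)) (Icc 0 τ) := by
    refine monotoneOn_Icc_of_hasDerivAt_nonneg
      ((hE.rpow_const fun r hr => .inl (hpos r hr).ne').add (by fun_prop)).neg
      (fun r hr => (((hder r hr).rpow_const (.inl (hpos r (Ioo_subset_Icc_self hr)).ne')).add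
        ((hasDerivAt_id r).const_mul K)).neg) fun r hr => ?_
    have hEr := hpos r (Ioo_subset_Icc_self hr)
    have hscaled := mul_le_mul_of_nonneg_right (hle r hr)
      (by positivity : 0 ≤ γ * E r ^ (γ - 1))
    have hone : E r ^ (1 - γ) * E r ^ (γ - 1) = 1 := by rw [← Real.rpow_add hEr]; simp
    have hK : K / γ * γ = K := div_mul_cancel₀ _ hγ.ne'
    linear_combination hscaled - E r ^ (1 - γ) * E r ^ (γ - 1) * hK - K * hone
  have hends := hmono ⟨le_rfl, hτ⟩ ⟨hτ, le_rfl⟩ hτ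
  have hEτ := Real.rpow_pos_of_pos (hpos τ ⟨hτ, le_rfl⟩) γ
  simp only [mul_zero, add_zero] at hends
  linarith

section ExtinctionTime

variable {d : ℕ} {m : ℝ}

lemma half_critical_exponent_mul_sobolev_exponent (hd : 3 ≤ d) (m : ℝ) :
    (d * (1 - m) / 2 - 1 + m) / 2 * (2 * (d : ℝ) / (d - 2)) = d * (1 - m) / 2 := by
  have hd2 : (d : ℝ) - 2 ≠ 0 := by
    have : (3 : ℝ) ≤ d := by exact_mod_cast hd
    linarith
  field_simp
  ring

/- The alternative is according to whether the excess of `v` over its boundary value `δ` is of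
order `δ` or dominates the entropy; in the latter case the Sobolev inequality applies. -/
lemma exists_gridSum_le_or_dissipation_le {p : ℝ} (hd : 3 ≤ d) (hp : 1 < p) (hm : 0 < m)
    (hpm : (p - 1 + m) / 2 * (2 * (d : ℝ) / (d - 2)) = p) :
    ∃ K, 0 < K ∧ ∀ n : ℕ, 1 ≤ n → ∀ δ : ℝ, 0 < δ → ∀ v : (Fin d → ℤ) → ℝ,
      (∀ k, δ ≤ v k) → (∀ k ∉ latticeBall d n, v k = δ) →
      gridSum n v ≤ K * δ ∨
        gridSum n (fun k => (v k ^ (p - 1) - δ ^ (p - 1)) *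
            ((n : ℝ) ^ 2 * latticeLap (fun j => v j ^ m) k)) ≤
          -(K⁻¹ * gridSum n (fun k => entropyDensity p δ (v k)) ^ (((d : ℝ) - 2) / d)) := by
  have hd3 : (3 : ℝ) ≤ d := by exact_mod_cast hd
  obtain ⟨c, hc, hdissip⟩ :=
    exists_mul_gridSum_rpow_le_neg_gridSum_mul_latticeLap hd (sub_pos.2 hp) hm
  have hq : 0 < 2 * (d : ℝ) / (d - 2) := div_pos (by linarith) (by linarith)
  have hθ : 0 ≤ ((d : ℝ) - 2) / d := div_nonneg (by linarith) (by linarith)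
  generalize 2 * (d : ℝ) / (d - 2) = q at hpm hq hdissip
  generalize ((d : ℝ) - 2) / d = θ at hθ hdissip ⊢
  obtain ⟨L, hL⟩ : ∃ L : ℝ, L = 2 ^ q + 5 ^ d * (2 ^ q + 1) := ⟨_, rfl⟩
  have hL0 : 0 < L := by rw [hL]; positivity
  refine ⟨max (5 ^ d + L) (L ^ θ / c), by positivity, fun n hn δ hδ v hv hvA => ?_⟩
  have hvpos : ∀ k, 0 < v k := fun k => hδ.trans_le (hv k)
  have hpow := gridSum_rpow_mul_le hn (by linarith : 0 ≤ (p - 1 + m) / 2) hq.le hδ.le hv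
  have hent := gridSum_entropyDensity_le hn hp.le hδ.le fun k => (hvpos k).le
  have hent0 := gridSum_entropyDensity_pos hn hp.le hδ fun k => (hvpos k).le
  specialize hdissip n hn δ hδ v hv hvA
  rw [hpm] at hpow
  generalize gridSum n (fun k => (v k ^ ((p - 1 + m) / 2) - δ ^ ((p - 1 + m) / 2)) ^ q) = F
    at hpow hdissip
  rcases le_or_gt F (δ ^ p) with hsmall | hlarge
  · refine .inl ((gridSum_le_of_gridSum_rpow_le (K := L) hn hp.le hδ hvpos ?_).trans
      (mul_le_mul_of_nonneg_right (le_max_left _ _) hδ.le))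
    rw [hL]
    have hδp : 0 < 5 ^ d * δ ^ p := by positivity
    linear_combination hpow + 2 ^ q * hsmall + hδp
  · have hEF : gridSum n (fun k => entropyDensity p δ (v k)) ≤ L * F := by
      rw [hL]
      linear_combination hent + hpow + 5 ^ d * (2 ^ q + 1) * hlarge
    have hF0 : 0 < F := (Real.rpow_pos_of_pos hδ p).trans hlarge
    refine .inr (le_neg_of_le_neg (le_trans ?_ hdissip))
    rw [inv_mul_le_iff₀ (by positivity)]
    calc gridSum n (fun k => entropyDensity p δ (v k)) ^ θ ≤ (L * F) ^ θ := by gcongr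
      _ = L ^ θ / c * (c * F ^ θ) := by rw [Real.mul_rpow hL0.le hF0.le]; field_simp
      _ ≤ max (5 ^ d + L) (L ^ θ / c) * (c * F ^ θ) := by
          gcongr
          exact le_max_right _ _

lemma IsFastLatticeFlow.exists_extinction_const (hm0 : 0 < m) (hmc : m < ((d : ℝ) - 2) / d) :
    ∃ C, 0 < C ∧ ∀ n : ℕ, 1 ≤ n → ∀ δ S : ℝ, 0 < δ → 0 ≤ S → ∀ w : ℝ → (Fin d → ℤ) → ℝ,
      IsFastLatticeFlow (latticeBall d n) ((n : ℝ) ^ 2) m δ S w →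
      ∀ X, gridSum n (fun k => w 0 k ^ (d * (1 - m) / 2)) + 5 ^ d * δ ^ (d * (1 - m) / 2) ≤ X →
      C * X ^ (2 / (d : ℝ)) < S →
      ∃ s ∈ Ioo 0 S, s ≤ C * X ^ (2 / (d : ℝ)) ∧ gridSum n (w s) ≤ C * δ := by
  have hd := three_le_of_lt_critical hm0 hmc
  have hd1 : (1 : ℝ) ≤ d := by exact_mod_cast (by omega : 1 ≤ d)
  have hp := one_lt_critical_exponent hm0 hmc
  obtain ⟨K, hK, hdecay⟩ := exists_gridSum_le_or_dissipation_le hd hp hm0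
    (half_critical_exponent_mul_sobolev_exponent hd m)
  rw [show ((d : ℝ) - 2) / d = 1 - 2 / d by field_simp] at hdecay
  generalize (d : ℝ) * (1 - m) / 2 = p at hp hdecay ⊢
  refine ⟨K * d, by positivity, fun n hn δ S hδ hS0 w h X hX hS => ?_⟩
  have hpos : ∀ r ∈ Icc 0 S, 0 < gridSum n fun k => entropyDensity p δ (w r k) := fun r hr =>
    gridSum_entropyDensity_pos hn hp.le hδ fun k => (h.pos hδ hr k).le
  have hinit : gridSum n (fun k => entropyDensity p δ (w 0 k)) ≤ X :=
    (gridSum_entropyDensity_le hn hp.le hδ.le fun k => (h.pos hδ ⟨le_rfl, hS0⟩ k).le).trans hX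
  have hX0 : 0 < X := (hpos 0 ⟨le_rfl, hS0⟩).trans_le hinit
  obtain ⟨τ, hτ⟩ : ∃ τ, τ = K * d * X ^ (2 / (d : ℝ)) := ⟨_, rfl⟩
  have hτ0 : 0 < τ := by rw [hτ]; positivity
  rw [← hτ] at hS ⊢
  suffices hsmall : ∃ s ∈ Ioo 0 τ, gridSum n (w s) ≤ K * δ by
    obtain ⟨s, hs, hws⟩ := hsmall
    exact ⟨s, ⟨hs.1, hs.2.trans hS⟩, hs.2.le, hws.trans
      (mul_le_mul_of_nonneg_right (le_mul_of_one_le_right hK.le hd1) hδ.le)⟩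
  by_contra! hlarge
  have hIcc : ∀ r ∈ Icc 0 τ, r ∈ Icc 0 S := fun r hr => ⟨hr.1, hr.2.trans hS.le⟩
  have hlt := mul_lt_rpow_of_deriv_le_neg_rpow (K := K⁻¹ * (2 / d)) (γ := 2 / d) (by positivity)
    hτ0.le ((h.continuousOn_gridSum_entropyDensity hδ).mono hIcc)
    (fun r hr => hpos r (hIcc r hr))
    (fun r hr => h.hasDerivAt_gridSum_entropyDensity (by linarith) hδ ⟨hr.1, hr.2.trans hS⟩)
    fun r hr => by
      rw [mul_div_cancel_right₀ _ (by positivity)]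
      exact (hdecay n hn δ hδ (w r) (h.le r (hIcc r (Ioo_subset_Icc_self hr)))
        fun k hk => h.eq_of_notMem k hk r).resolve_left (hlarge r hr).not_ge
  have hXpow : 0 < X ^ (2 / (d : ℝ)) := by positivity
  have hEX := Real.rpow_le_rpow (hpos 0 ⟨le_rfl, hS0⟩).le hinit (by positivity : 0 ≤ 2 / (d : ℝ))
  have hKτ : K⁻¹ * (2 / d) * τ = 2 * X ^ (2 / (d : ℝ)) := by rw [hτ]; field_simp
  linarith

end ExtinctionTime

end Extinction

section LatticeEstimate

variable {d n : ℕ} {m δ : ℝ}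

/-- A lattice potential `G` of charge at most `Q`: a nonnegative function supported in the lattice
ball with `-Q ≤ ΔG` there, which is at most `hi` everywhere and at least `lo` where the cutoff
`massCutoff m n` does not vanish. -/
structure IsLatticePotential (n : ℕ) (lo hi : ℝ) (G Q : (Fin d → ℤ) → ℝ) : Prop where
  eq_zero_of_notMem : ∀ k ∉ latticeBall d n, G k = 0
  nonneg : ∀ k, 0 ≤ G k
  le_hi : ∀ k, G k ≤ hi
  lo_le : ∀ k, latticeNormSq k < 2 * (n : ℝ) ^ 2 → lo ≤ G k
  charge_nonneg : ∀ k, 0 ≤ Q k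
  neg_charge_le : ∀ k ∈ latticeBall d n, -Q k ≤ (n : ℝ) ^ 2 * latticeLap G k

namespace IsLatticePotential

variable {lo hi : ℝ} {G Q : (Fin d → ℤ) → ℝ}

lemma lo_le_hi (h : IsLatticePotential n lo hi G Q) (hn : 1 ≤ n) : lo ≤ hi :=
  (h.lo_le 0 (by rw [latticeNormSq_zero]; positivity)).trans (h.le_hi 0)

lemma massCutoff_le_mul (h : IsLatticePotential n lo hi G Q) (hlo : 0 < lo) (hn : 1 ≤ n)
    (hm1 : m < 1) (k : Fin d → ℤ) : massCutoff m n k ≤ 2 ^ (1 / (1 - m)) / lo * G k := by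
  rcases lt_or_ge (latticeNormSq k) (2 * (n : ℝ) ^ 2) with hk | hk
  · calc massCutoff m n k ≤ 2 ^ (1 / (1 - m)) := massCutoff_le hm1 k
      _ = 2 ^ (1 / (1 - m)) / lo * lo := (div_mul_cancel₀ _ hlo.ne').symm
      _ ≤ 2 ^ (1 / (1 - m)) / lo * G k := by
          gcongr
          exact h.lo_le k hk
  · rw [massCutoff_eq_zero hm1 hn hk]
    exact mul_nonneg (by positivity) (h.nonneg k)

lemma gridSum_massCutoff_mul_le (h : IsLatticePotential n lo hi G Q) (hlo : 0 < lo) (hn : 1 ≤ n)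
    (hm1 : m < 1) {v : (Fin d → ℤ) → ℝ} (hv : ∀ k, 0 ≤ v k) :
    gridSum n (fun k => massCutoff m n k * v k) ≤
      2 ^ (1 / (1 - m)) / lo * gridSum n (fun k => G k * v k) := by
  rw [← gridSum_const_mul]
  refine gridSum_mono fun k _ => ?_
  rw [← mul_assoc]
  exact mul_le_mul_of_nonneg_right (h.massCutoff_le_mul hlo hn hm1 k) (hv k)

lemma gridSum_mul_le (h : IsLatticePotential n lo hi G Q) {v : (Fin d → ℤ) → ℝ}
    (hv : ∀ k, 0 ≤ v k) : gridSum n (fun k => G k * v k) ≤ hi * gridSum n v := by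
  rw [← gridSum_const_mul]
  exact gridSum_mono fun k _ => mul_le_mul_of_nonneg_right (h.le_hi k) (hv k)

end IsLatticePotential

lemma gridSum_max_rpow_le {p : ℝ} {g : (Fin d → ℤ) → ℝ} (hn : 1 ≤ n) (hδ : 0 ≤ δ)
    (hg : ∀ k, 0 ≤ g k) :
    gridSum n (fun k => max δ (g k) ^ p) ≤ gridSum n (fun k => g k ^ p) + 5 ^ d * δ ^ p :=
  calc gridSum n (fun k => max δ (g k) ^ p) ≤ gridSum n (fun k => g k ^ p + δ ^ p) := by
        refine gridSum_mono fun k _ => ?_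
        rcases max_choice δ (g k) with hmax | hmax <;> rw [hmax]
        · exact le_add_of_nonneg_left (Real.rpow_nonneg (hg k) p)
        · exact le_add_of_nonneg_right (Real.rpow_nonneg hδ p)
    _ ≤ gridSum n (fun k => g k ^ p) + 5 ^ d * δ ^ p := by
        rw [gridSum_add]
        gcongr
        exact gridSum_const_le hn (Real.rpow_nonneg hδ p)

lemma gridSum_le_gridSum_massCutoff_mul_max {g : (Fin d → ℤ) → ℝ} (hm1 : m < 1)
    (hg : ∀ k, 0 ≤ g k) (hg0 : ∀ k, (n : ℝ) ^ 2 < latticeNormSq k → g k = 0) :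
    gridSum n g ≤ gridSum n (fun k => massCutoff m n k * max δ (g k)) := by
  refine gridSum_mono fun k _ => ?_
  rcases lt_or_ge ((n : ℝ) ^ 2) (latticeNormSq k) with hk | hk
  · rw [hg0 k hk]
    exact mul_nonneg (massCutoff_nonneg m n k) (le_max_right _ _)
  · calc g k ≤ max δ (g k) := le_max_right _ _
      _ ≤ massCutoff m n k * max δ (g k) :=
          le_mul_of_one_le_left ((hg k).trans (le_max_right _ _)) (one_le_massCutoff hm1 hk)

variable {S lo hi : ℝ} {w : ℝ → (Fin d → ℤ) → ℝ} {G Q : (Fin d → ℤ) → ℝ}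

lemma IsLatticePotential.gridSum_mul_rpow_nonneg (hG : IsLatticePotential n lo hi G Q)
    {v : (Fin d → ℤ) → ℝ} (hv : ∀ k, 0 ≤ v k) : 0 ≤ gridSum n (fun k => Q k * v k ^ m) :=
  gridSum_nonneg fun k _ => mul_nonneg (hG.charge_nonneg k) (Real.rpow_nonneg (hv k) m)

namespace IsFastLatticeFlow

lemma gridSum_mul_le_add_rpow_mul (h : IsFastLatticeFlow (latticeBall d n) ((n : ℝ) ^ 2) m δ S w)
    (hG : IsLatticePotential n lo hi G Q) (hm0 : 0 < m) (hm1 : m < 1) (hδ : 0 < δ)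
    {s t : ℝ} (ht : 0 < t) (hts : t ≤ s) (hsS : s ≤ S) :
    gridSum n (fun k => G k * w t k) ≤ gridSum n (fun k => G k * w s k) +
      s ^ (1 / (1 - m)) * (t ^ (-(m / (1 - m))) * gridSum n (fun k => Q k * w t k ^ m)) := by
  have hsum := h.sum_mul_le_add_rpow_mul (by positivity) hm0.le hm1 hδ hG.nonneg
    hG.eq_zero_of_notMem (fun k _ => hG.charge_nonneg k) hG.neg_charge_le ht hts hsS
  unfold gridSum
  linear_combination ((n : ℝ) ^ d)⁻¹ * hsum

/- For `s ≤ t` the mass at time `s` already controls the initial mass; for `t ≤ s` the potential at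
time `t` is compared with the one at time `s`. -/
lemma gridSum_massCutoff_zero_le
    (h : IsFastLatticeFlow (latticeBall d n) ((n : ℝ) ^ 2) m δ S w)
    (hG : IsLatticePotential n lo hi G Q) (hlo : 0 < lo) (hn : 1 ≤ n) (hm0 : 0 < m) (hm1 : m < 1)
    (hδ : 0 < δ) {s t : ℝ} (hs : s ∈ Icc 0 S) (ht : t ∈ Ioc 0 S) :
    gridSum n (fun k => massCutoff m n k * w 0 k) ≤ 2 ^ (1 / (1 - m)) *
      (2 ^ (1 / (1 - m)) / lo * (hi * gridSum n (w s) +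
        s ^ (1 / (1 - m)) * (t ^ (-(m / (1 - m))) * gridSum n (fun k => Q k * w t k ^ m))) +
      (2 * d * (1 + 5 ^ d)) ^ (1 / (1 - m)) * t ^ (1 / (1 - m))) := by
  have hws := fun k => (h.pos hδ hs k).le
  have hwt := fun k => (h.pos hδ (Ioc_subset_Icc_self ht) k).le
  have hGs := hG.gridSum_mul_le hws
  have hrem : 0 ≤ s ^ (1 / (1 - m)) *
      (t ^ (-(m / (1 - m))) * gridSum n (fun k => Q k * w t k ^ m)) :=
    mul_nonneg (Real.rpow_nonneg hs.1 _)
      (mul_nonneg (Real.rpow_nonneg ht.1.le _) (hG.gridSum_mul_rpow_nonneg hwt))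
  rcases le_total s t with hst | hts
  · refine (h.gridSum_massCutoff_le hn hm0 hm1 hδ hs.1 hs.2).trans ?_
    have hmass := hG.gridSum_massCutoff_mul_le hlo hn hm1 hws
    have hpow : s ^ (1 / (1 - m)) ≤ t ^ (1 / (1 - m)) :=
      Real.rpow_le_rpow hs.1 hst (one_div_nonneg.2 (sub_nonneg.2 hm1.le))
    exact mul_le_mul_of_nonneg_left (add_le_add
      (hmass.trans (mul_le_mul_of_nonneg_left (by linarith) (by positivity)))
      (mul_le_mul_of_nonneg_left hpow (by positivity))) (by positivity)
  · refine (h.gridSum_massCutoff_le hn hm0 hm1 hδ ht.1.le ht.2).trans ?_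
    have hmass := hG.gridSum_massCutoff_mul_le hlo hn hm1 hwt
    have hpot := h.gridSum_mul_le_add_rpow_mul hG hm0 hm1 hδ ht.1 hts hs.2
    gcongr
    exact hmass.trans (mul_le_mul_of_nonneg_left (by linarith) (by positivity))

lemma exists_extinction_const_of_init_eq_max (hm0 : 0 < m) (hmc : m < ((d : ℝ) - 2) / d) :
    ∃ C, 0 < C ∧ ∀ n : ℕ, 1 ≤ n → ∀ δ S : ℝ, 0 < δ → 0 ≤ S → ∀ w : ℝ → (Fin d → ℤ) → ℝ,
      IsFastLatticeFlow (latticeBall d n) ((n : ℝ) ^ 2) m δ S w →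
      ∀ g : (Fin d → ℤ) → ℝ, (∀ k, 0 ≤ g k) → (∀ k, w 0 k = max δ (g k)) →
      ∀ X, gridSum n (fun k => g k ^ (d * (1 - m) / 2)) +
        2 * 5 ^ d * δ ^ (d * (1 - m) / 2) ≤ X → C * X ^ (2 / (d : ℝ)) < S →
      ∃ s ∈ Ioo 0 S, s ^ (1 / (1 - m)) ≤ C ^ (1 / (1 - m)) * X ^ (2 / (d * (1 - m))) ∧
        gridSum n (w s) ≤ C * δ := by
  have hm1 := lt_one_of_lt_critical hm0 hmc
  obtain ⟨C, hC, hext⟩ := exists_extinction_const hm0 hmc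
  refine ⟨C, hC, fun n hn δ S hδ hS0 w h g hg hwg X hX hS => ?_⟩
  have hX0 : 0 ≤ X := le_trans (add_nonneg (gridSum_nonneg fun k _ => Real.rpow_nonneg (hg k) _)
    (by positivity)) hX
  have hinit : gridSum n (fun k => w 0 k ^ (d * (1 - m) / 2)) +
      5 ^ d * δ ^ (d * (1 - m) / 2) ≤ X := by
    simp only [hwg]
    have hmax := gridSum_max_rpow_le (p := d * (1 - m) / 2) hn hδ.le hg
    linarith
  obtain ⟨s, hs, hsX, hws⟩ := hext n hn δ S hδ hS0 w h X hinit hS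
  refine ⟨s, hs, ?_, hws⟩
  rw [show 2 / (d * (1 - m)) = 2 / (d : ℝ) * (1 / (1 - m)) by rw [div_mul_div_comm, mul_one],
    Real.rpow_mul hX0, ← Real.mul_rpow hC.le (by positivity)]
  exact Real.rpow_le_rpow hs.1.le hsX (one_div_nonneg.2 (sub_nonneg.2 hm1.le))

lemma exists_gridSum_le_const (hm0 : 0 < m) (hmc : m < ((d : ℝ) - 2) / d) (hlo : 0 < lo) :
    ∃ C, 0 < C ∧ ∀ n : ℕ, 1 ≤ n → ∀ δ S : ℝ, 0 < δ → ∀ w : ℝ → (Fin d → ℤ) → ℝ,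
      IsFastLatticeFlow (latticeBall d n) ((n : ℝ) ^ 2) m δ S w →
      ∀ g : (Fin d → ℤ) → ℝ, (∀ k, 0 ≤ g k) → (∀ k, w 0 k = max δ (g k)) →
      (∀ k, (n : ℝ) ^ 2 < latticeNormSq k → g k = 0) →
      ∀ (G Q : (Fin d → ℤ) → ℝ) (hi : ℝ), IsLatticePotential n lo hi G Q → ∀ t ∈ Ioc 0 S,
      ∀ X, gridSum n (fun k => g k ^ (d * (1 - m) / 2)) +
        2 * 5 ^ d * δ ^ (d * (1 - m) / 2) ≤ X → C * X ^ (2 / (d : ℝ)) < S →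
      gridSum n g ≤ C * t ^ (1 / (1 - m)) + C * (hi * δ) +
        C * (X ^ (2 / (d * (1 - m))) *
          (t ^ (-(m / (1 - m))) * gridSum n (fun k => Q k * w t k ^ m))) := by
  have hm1 := lt_one_of_lt_critical hm0 hmc
  obtain ⟨Ce, hCe, hext⟩ := exists_extinction_const_of_init_eq_max hm0 hmc
  obtain ⟨A, hA⟩ : ∃ A : ℝ, A = 2 ^ (1 / (1 - m)) * (2 ^ (1 / (1 - m)) / lo) := ⟨_, rfl⟩
  have hA0 : 0 < A := by rw [hA]; positivity
  obtain ⟨B, hB⟩ : ∃ B : ℝ,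
    B = 2 ^ (1 / (1 - m)) * (2 * d * (1 + 5 ^ d)) ^ (1 / (1 - m)) := ⟨_, rfl⟩
  have hB0 : 0 ≤ B := by rw [hB]; positivity
  refine ⟨B + A * Ce + A * Ce ^ (1 / (1 - m)) + Ce, by positivity, ?_⟩
  intro n hn δ S hδ w h g hg hwg hg0 G Q hi hG t ht X hX hS
  have hX0 : 0 ≤ X := le_trans (add_nonneg (gridSum_nonneg fun k _ => Real.rpow_nonneg (hg k) _)
    (by positivity)) hX
  obtain ⟨s, hs, hspow, hws⟩ := hext n hn δ S hδ (ht.1.le.trans ht.2) w h g hg hwg X hX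
    (lt_of_le_of_lt (mul_le_mul_of_nonneg_right (le_add_of_nonneg_left (by positivity))
      (by positivity)) hS)
  have hhi : 0 < hi := hlo.trans_le (hG.lo_le_hi hn)
  have hR : 0 ≤ t ^ (-(m / (1 - m))) * gridSum n (fun k => Q k * w t k ^ m) :=
    mul_nonneg (Real.rpow_nonneg ht.1.le _)
      (hG.gridSum_mul_rpow_nonneg fun k => (h.pos hδ (Ioc_subset_Icc_self ht) k).le)
  have hT : 0 ≤ t ^ (1 / (1 - m)) := Real.rpow_nonneg ht.1.le _
  have hslack : 0 ≤ (A * Ce + A * Ce ^ (1 / (1 - m)) + Ce) * t ^ (1 / (1 - m)) +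
      (B + A * Ce ^ (1 / (1 - m)) + Ce) * (hi * δ) + (B + A * Ce + Ce) *
        (X ^ (2 / (d * (1 - m))) *
          (t ^ (-(m / (1 - m))) * gridSum n (fun k => Q k * w t k ^ m))) := by
    positivity
  calc gridSum n g ≤ gridSum n (fun k => massCutoff m n k * w 0 k) := by
        simpa only [hwg] using gridSum_le_gridSum_massCutoff_mul_max hm1 hg hg0
    _ ≤ _ := h.gridSum_massCutoff_zero_le hG hlo hn hm0 hm1 hδ (Ioo_subset_Icc_self hs) ht
    _ = A * (hi * gridSum n (w s) + s ^ (1 / (1 - m)) *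
          (t ^ (-(m / (1 - m))) * gridSum n (fun k => Q k * w t k ^ m))) +
          B * t ^ (1 / (1 - m)) := by rw [hA, hB]; ring
    _ ≤ A * (hi * (Ce * δ) + Ce ^ (1 / (1 - m)) * X ^ (2 / (d * (1 - m))) *
          (t ^ (-(m / (1 - m))) * gridSum n (fun k => Q k * w t k ^ m))) +
          B * t ^ (1 / (1 - m)) := by gcongr
    _ ≤ _ := by linear_combination hslack

end IsFastLatticeFlow

end LatticeEstimate

section Consistency

lemma abs_second_diff_sub_le {f f' f'' : ℝ → ℝ} {h η : ℝ} (hh : 0 ≤ h) (hη : 0 ≤ η)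
    (hf : ∀ s ∈ Icc (-h) h, HasDerivAt f (f' s) s)
    (hf' : ∀ s ∈ Icc (-h) h, HasDerivAt f' (f'' s) s)
    (hf'' : ∀ s ∈ Icc (-h) h, |f'' s - f'' 0| ≤ η) :
    |f h + f (-h) - 2 * f 0 - h ^ 2 * f'' 0| ≤ 2 * η * h ^ 2 := by
  have hmem : ∀ s ∈ Icc 0 h, s ∈ Icc (-h) h ∧ -s ∈ Icc (-h) h := fun s hs =>
    ⟨⟨by linarith [hs.1], hs.2⟩, ⟨neg_le_neg hs.2, by linarith [hs.1]⟩⟩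
  have deriv_first : ∀ s ∈ Icc 0 h, HasDerivWithinAt (fun s => f s + f (-s) - s ^ 2 * f'' 0)
      (f' s - f' (-s) - 2 * s * f'' 0) (Icc 0 h) s := fun s hs =>
    ((((hf s (hmem s hs).1).add ((hf (-s) (hmem s hs).2).comp s (hasDerivAt_neg s))).sub
      ((hasDerivAt_pow 2 s).mul_const (f'' 0))).congr_deriv (by norm_num; ring)).hasDerivWithinAt
  have deriv_second : ∀ s ∈ Icc 0 h, HasDerivWithinAt (fun s => f' s - f' (-s) - 2 * s * f'' 0)
      (f'' s + f'' (-s) - 2 * f'' 0) (Icc 0 h) s := fun s hs =>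
    ((((hf' s (hmem s hs).1).sub ((hf' (-s) (hmem s hs).2).comp s (hasDerivAt_neg s))).sub
      (((hasDerivAt_id s).const_mul 2).mul_const (f'' 0))).congr_deriv
        (by ring)).hasDerivWithinAt
  have bound_second : ∀ s ∈ Icc 0 h, ‖f'' s + f'' (-s) - 2 * f'' 0‖ ≤ 2 * η := fun s hs =>
    calc |f'' s + f'' (-s) - 2 * f'' 0| = |(f'' s - f'' 0) + (f'' (-s) - f'' 0)| := by
          congr 1; ring
      _ ≤ |f'' s - f'' 0| + |f'' (-s) - f'' 0| := abs_add_le _ _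
      _ ≤ 2 * η := by linarith [hf'' s (hmem s hs).1, hf'' (-s) (hmem s hs).2]
  have h0 : (0 : ℝ) ∈ Icc 0 h := left_mem_Icc.2 hh
  have bound_first : ∀ s ∈ Icc 0 h, ‖f' s - f' (-s) - 2 * s * f'' 0‖ ≤ 2 * η * h := by
    intro s hs
    have hle := (convex_Icc 0 h).norm_image_sub_le_of_norm_hasDerivWithin_le deriv_second
      bound_second h0 hs
    simp only [neg_zero, sub_self, mul_zero, zero_mul, sub_zero, Real.norm_of_nonneg hs.1] at hle
    exact hle.trans (mul_le_mul_of_nonneg_left hs.2 (by positivity))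
  have hle := (convex_Icc 0 h).norm_image_sub_le_of_norm_hasDerivWithin_le deriv_first
    bound_first h0 (right_mem_Icc.2 hh)
  rw [Real.norm_eq_abs, sub_zero, Real.norm_of_nonneg hh, neg_zero] at hle
  calc |f h + f (-h) - 2 * f 0 - h ^ 2 * f'' 0|
      = |f h + f (-h) - h ^ 2 * f'' 0 - (f 0 + f 0 - 0 ^ 2 * f'' 0)| := by congr 1; ring
    _ ≤ 2 * η * h * h := hle
    _ = 2 * η * h ^ 2 := by ring

variable {F : Type*} [NormedAddCommGroup F] [NormedSpace ℝ F]

lemma hasDerivAt_along_line {f : F → ℝ} {f' : ℝ} {p v : F} {s : ℝ}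
    (h : HasLineDerivAt ℝ f f' (p + s • v) v) : HasDerivAt (fun s => f (p + s • v)) f' s := by
  have hshift : HasDerivAt (fun r : ℝ => f (p + s • v + r • v)) f' (s - s) := by
    rw [sub_self]
    exact h
  have heq : (fun r : ℝ => f (p + s • v + (r - s) • v)) = fun r => f (p + r • v) := by
    funext r
    rw [add_assoc, ← add_smul, add_sub_cancel]
  simpa only [heq] using hshift.comp_sub_const s s

variable [ProperSpace F] {Q K : Set F} {η : ℝ}

lemma exists_abs_second_diff_sub_le {g g' g'' : F → ℝ} {v : F} (hQ : IsOpen Q)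
    (hg : ∀ p ∈ Q, HasLineDerivAt ℝ g (g' p) p v)
    (hg' : ∀ p ∈ Q, HasLineDerivAt ℝ g' (g'' p) p v) (hg'' : ContinuousOn g'' Q)
    (hK : IsCompact K) (hKQ : K ⊆ Q) (hη : 0 < η) :
    ∃ h₀ > 0, ∀ h, 0 < h → h ≤ h₀ → ∀ p ∈ K,
      |g (p + h • v) + g (p - h • v) - 2 * g p - h ^ 2 * g'' p| ≤ η * h ^ 2 := by
  obtain ⟨r, hr, hrQ⟩ := hK.exists_cthickening_subset_open hQ hKQ
  obtain ⟨δ, hδ, hunif⟩ := Metric.uniformContinuousOn_iff.1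
    (hK.cthickening.uniformContinuousOn_of_continuous (hg''.mono hrQ)) (η / 2) (half_pos hη)
  have hv : 0 < ‖v‖ + 1 := by positivity
  refine ⟨min r (δ / 2) / (‖v‖ + 1), by positivity, fun h hh hh₀ p hp => ?_⟩
  have hstep : ∀ s ∈ Icc (-h) h, dist (p + s • v) p ≤ min r (δ / 2) := fun s hs =>
    calc dist (p + s • v) p = |s| * ‖v‖ := by
          rw [dist_eq_norm, add_sub_cancel_left, norm_smul, Real.norm_eq_abs]
      _ ≤ h * (‖v‖ + 1) := by
          gcongr
          · exact abs_le.2 hs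
          · linarith
      _ ≤ min r (δ / 2) := (le_div_iff₀ hv).1 hh₀
  have hmem : ∀ s ∈ Icc (-h) h, p + s • v ∈ cthickening r K := fun s hs =>
    mem_cthickening_of_dist_le _ p r K hp ((hstep s hs).trans (min_le_left _ _))
  have hosc : ∀ s ∈ Icc (-h) h, |g'' (p + s • v) - g'' (p + (0 : ℝ) • v)| ≤ η / 2 := by
    intro s hs
    rw [zero_smul, add_zero, ← Real.dist_eq]
    refine (hunif _ (hmem s hs) _ (self_subset_cthickening K hp) ?_).le
    linarith [(hstep s hs).trans (min_le_right _ _)]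
  have hdiff := abs_second_diff_sub_le hh.le (half_pos hη).le
    (fun s hs => hasDerivAt_along_line (hg _ (hrQ (hmem s hs))))
    (fun s hs => hasDerivAt_along_line (hg' _ (hrQ (hmem s hs)))) hosc
  simpa only [neg_smul, zero_smul, add_zero, ← sub_eq_add_neg, mul_div_cancel₀ η two_ne_zero]
    using hdiff

lemma exists_abs_sum_second_diff_sub_le {ι : Type*} [Fintype ι] {g : F → ℝ} {g' g'' : ι → F → ℝ}
    {v : ι → F} (hQ : IsOpen Q) (hg : ∀ i, ∀ p ∈ Q, HasLineDerivAt ℝ g (g' i p) p (v i))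
    (hg' : ∀ i, ∀ p ∈ Q, HasLineDerivAt ℝ (g' i) (g'' i p) p (v i))
    (hg'' : ∀ i, ContinuousOn (g'' i) Q) (hK : IsCompact K) (hKQ : K ⊆ Q) (hη : 0 < η) :
    ∃ h₀ > 0, ∀ h, 0 < h → h ≤ h₀ → ∀ p ∈ K,
      |∑ i, (g (p + h • v i) + g (p - h • v i) - 2 * g p) - h ^ 2 * ∑ i, g'' i p| ≤
        η * h ^ 2 := by
  have hη' : 0 < η / (Fintype.card ι + 1) := by positivity
  choose h₀ hh₀ hle using fun i =>
    exists_abs_second_diff_sub_le hQ (hg i) (hg' i) (hg'' i) hK hKQ hη'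
  obtain ⟨h₁, hh₁, hh₁le⟩ : ∃ h₁ > 0, ∀ i, h₁ ≤ h₀ i := by
    rcases isEmpty_or_nonempty ι with hι | hι
    · exact ⟨1, one_pos, hι.elim⟩
    · exact ⟨Finset.univ.inf' Finset.univ_nonempty h₀,
        (Finset.lt_inf'_iff _).2 fun i _ => hh₀ i, fun i => Finset.inf'_le _ (Finset.mem_univ i)⟩
  refine ⟨h₁, hh₁, fun h hh hhle p hp => ?_⟩
  rw [Finset.mul_sum, ← Finset.sum_sub_distrib]
  calc |∑ i, (g (p + h • v i) + g (p - h • v i) - 2 * g p - h ^ 2 * g'' i p)|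
      ≤ ∑ i, |g (p + h • v i) + g (p - h • v i) - 2 * g p - h ^ 2 * g'' i p| :=
        Finset.abs_sum_le_sum_abs _ _
    _ ≤ ∑ _i : ι, η / (Fintype.card ι + 1) * h ^ 2 :=
        Finset.sum_le_sum fun i _ => hle i h hh (hhle.trans (hh₁le i)) p hp
    _ = Fintype.card ι / (Fintype.card ι + 1) * (η * h ^ 2) := by
        rw [Finset.sum_const, Finset.card_univ, nsmul_eq_mul]
        ring
    _ ≤ η * h ^ 2 := by
        refine mul_le_of_le_one_left (by positivity) ?_
        rw [div_le_one (by positivity)]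
        linarith

end Consistency

section Grid

variable {d n : ℕ}

/-- The point of `ℝ^d` with integer coordinates `k` in the grid of mesh `h` centred at `x₀`. -/
noncomputable def gridPoint (x₀ : EuclideanSpace ℝ (Fin d)) (h : ℝ) (k : Fin d → ℤ) :
    EuclideanSpace ℝ (Fin d) :=
  x₀ + h • WithLp.toLp 2 (fun i => (k i : ℝ))

variable (x₀ : EuclideanSpace ℝ (Fin d)) (h : ℝ) (k : Fin d → ℤ)

lemma gridPoint_add_single (i : Fin d) :
    gridPoint x₀ h (k + Pi.single i 1) =
      gridPoint x₀ h k + h • EuclideanSpace.single i (1 : ℝ) := by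
  ext j
  rcases eq_or_ne j i with rfl | hj
  · simp [gridPoint, mul_add, add_assoc]
  · simp [gridPoint, hj]

lemma gridPoint_sub_single (i : Fin d) :
    gridPoint x₀ h (k - Pi.single i 1) =
      gridPoint x₀ h k - h • EuclideanSpace.single i (1 : ℝ) := by
  rw [eq_sub_iff_add_eq, ← gridPoint_add_single, sub_add_cancel]

lemma latticeLap_comp_gridPoint (g : EuclideanSpace ℝ (Fin d) → ℝ) :
    latticeLap (fun k => g (gridPoint x₀ h k)) k =
      ∑ i, (g (gridPoint x₀ h k + h • EuclideanSpace.single i (1 : ℝ)) +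
        g (gridPoint x₀ h k - h • EuclideanSpace.single i (1 : ℝ)) - 2 * g (gridPoint x₀ h k)) := by
  simp only [latticeLap, gridPoint_add_single, gridPoint_sub_single]

lemma norm_gridPoint_sub_sq : ‖gridPoint x₀ h k - x₀‖ ^ 2 = h ^ 2 * latticeNormSq k := by
  rw [gridPoint, add_sub_cancel_left, norm_smul, mul_pow, EuclideanSpace.norm_sq_eq]
  simp [latticeNormSq]

variable {k}

lemma gridPoint_mem_closedBall {R c : ℝ} (hR : 0 ≤ R) (hc : 0 ≤ c) (hn : 1 ≤ n)
    (hk : latticeNormSq k ≤ c ^ 2 * (n : ℝ) ^ 2) :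
    gridPoint x₀ (R / n) k ∈ closedBall x₀ (c * R) := by
  rw [mem_closedBall, dist_eq_norm]
  refine le_of_sq_le_sq ?_ (mul_nonneg hc hR)
  calc ‖gridPoint x₀ (R / n) k - x₀‖ ^ 2 = (R / n) ^ 2 * latticeNormSq k :=
        norm_gridPoint_sub_sq x₀ _ k
    _ ≤ (R / n) ^ 2 * (c ^ 2 * (n : ℝ) ^ 2) := by gcongr
    _ = (c * (R / n * n)) ^ 2 := by ring
    _ = (c * R) ^ 2 := by rw [div_mul_cancel₀ R (Nat.cast_ne_zero.2 (by lia))]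

end Grid

section SpaceLap

variable {d : ℕ}

lemma fderiv_slice_apply {E : Type*} [NormedAddCommGroup E] [NormedSpace ℝ E] {f : ℝ × E → ℝ}
    {t : ℝ} {y : E} (hf : DifferentiableAt ℝ f (t, y)) (v : E) :
    fderiv ℝ (fun y => f (t, y)) y v = fderiv ℝ f (t, y) (0, v) := by
  have hslice : HasFDerivAt (fun y => f (t, y))
      ((fderiv ℝ f (t, y)).comp (ContinuousLinearMap.inr ℝ ℝ E)) y :=
    hf.hasFDerivAt.comp y (hasFDerivAt_prodMk_right (𝕜 := ℝ) t y)
  simp [hslice.fderiv]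

variable {Q K : Set (ℝ × EuclideanSpace ℝ (Fin d))} {g : ℝ × EuclideanSpace ℝ (Fin d) → ℝ}

lemma spaceLap_slice_eq_sum (hQ : IsOpen Q) (hg : DifferentiableOn ℝ g Q)
    (hg' : ∀ i : Fin d,
      DifferentiableOn ℝ (fun p => fderiv ℝ g p (0, EuclideanSpace.single i 1)) Q)
    {p : ℝ × EuclideanSpace ℝ (Fin d)} (hp : p ∈ Q) :
    spaceLap (fun y => g (p.1, y)) p.2 = ∑ i : Fin d,
      fderiv ℝ (fun p => fderiv ℝ g p (0, EuclideanSpace.single i 1)) p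
        (0, EuclideanSpace.single i 1) := by
  obtain ⟨t, x⟩ := p
  refine Finset.sum_congr rfl fun i _ => ?_
  have hslice : (fun y => fderiv ℝ (fun y => g (t, y)) y (EuclideanSpace.single i 1)) =ᶠ[nhds x]
      fun y => fderiv ℝ g (t, y) (0, EuclideanSpace.single i 1) := by
    filter_upwards [(Continuous.prodMk_right t).continuousAt.eventually (hQ.mem_nhds hp)] with y hy
    exact fderiv_slice_apply (hg.differentiableAt (hQ.mem_nhds hy)) _
  rw [hslice.fderiv_eq]
  exact fderiv_slice_apply ((hg' i).differentiableAt (hQ.mem_nhds hp)) _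

lemma exists_abs_sum_second_diff_sub_spaceLap_le (hQ : IsOpen Q) (hg : ContDiffOn ℝ 2 g Q)
    (hK : IsCompact K) (hKQ : K ⊆ Q) {η : ℝ} (hη : 0 < η) :
    ∃ h₀ > 0, ∀ h, 0 < h → h ≤ h₀ → ∀ p ∈ K,
      |∑ i : Fin d, (g (p.1, p.2 + h • EuclideanSpace.single i (1 : ℝ)) +
          g (p.1, p.2 - h • EuclideanSpace.single i (1 : ℝ)) - 2 * g p) -
        h ^ 2 * spaceLap (fun y => g (p.1, y)) p.2| ≤ η * h ^ 2 := by
  set v : Fin d → ℝ × EuclideanSpace ℝ (Fin d) := fun i => (0, EuclideanSpace.single i 1) with hv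
  have hg' : ∀ i, ContDiffOn ℝ 1 (fun p => fderiv ℝ g p (v i)) Q := fun i =>
    (hg.fderiv_of_isOpen hQ (by norm_num)).clm_apply contDiffOn_const
  have hg'' : ∀ i, ContDiffOn ℝ 0 (fun p => fderiv ℝ (fun p => fderiv ℝ g p (v i)) p (v i)) Q :=
    fun i => ((hg' i).fderiv_of_isOpen hQ (by norm_num)).clm_apply contDiffOn_const
  have hdg := hg.differentiableOn two_ne_zero
  have hdg' := fun i => (hg' i).differentiableOn one_ne_zero
  obtain ⟨h₀, hh₀, hle⟩ := exists_abs_sum_second_diff_sub_le hQ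
    (fun i p hp => (hdg.differentiableAt (hQ.mem_nhds hp)).hasFDerivAt.hasLineDerivAt (v i))
    (fun i p hp => ((hdg' i).differentiableAt (hQ.mem_nhds hp)).hasFDerivAt.hasLineDerivAt (v i))
    (fun i => (hg'' i).continuousOn) hK hKQ hη
  refine ⟨h₀, hh₀, fun h hh hhle p hp => ?_⟩
  rw [spaceLap_slice_eq_sum hQ hdg hdg' (hKQ hp)]
  have hadd : ∀ i, p + h • v i = (p.1, p.2 + h • EuclideanSpace.single i (1 : ℝ)) := fun i => by
    ext <;> simp [hv]
  have hsub : ∀ i, p - h • v i = (p.1, p.2 - h • EuclideanSpace.single i (1 : ℝ)) := fun i => by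
    ext <;> simp [hv]
  simpa only [hadd, hsub] using hle h hh hhle p hp

end SpaceLap

section RegularizedPotential

variable {d n : ℕ} {ρ η : ℝ}

/-- The Newtonian potential of `ℝ^d`, smoothed at scale `ρ`. -/
noncomputable def regPotential (d : ℕ) (ρ : ℝ) (x : EuclideanSpace ℝ (Fin d)) : ℝ :=
  (‖x‖ ^ 2 + ρ ^ 2) ^ (-((d - 2 : ℝ) / 2))

/-- The charge density `-Δ (regPotential d ρ)`: an approximate identity of width `ρ`, up to a
constant factor. -/
noncomputable def regKernel (d : ℕ) (ρ : ℝ) (x : EuclideanSpace ℝ (Fin d)) : ℝ :=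
  d * (d - 2) * (ρ ^ 2 * (‖x‖ ^ 2 + ρ ^ 2) ^ (-((d + 2 : ℝ) / 2)))

lemma regKernel_nonneg (hd : 2 ≤ d) (x : EuclideanSpace ℝ (Fin d)) : 0 ≤ regKernel d ρ x := by
  have hd2 : (0 : ℝ) ≤ d - 2 := sub_nonneg.2 (by exact_mod_cast hd)
  exact mul_nonneg (mul_nonneg d.cast_nonneg hd2) (by positivity)

lemma norm_add_smul_single_sq (x : EuclideanSpace ℝ (Fin d)) (i : Fin d) (s : ℝ) :
    ‖x + s • EuclideanSpace.single i (1 : ℝ)‖ ^ 2 = ‖x‖ ^ 2 + s * (2 * x i) + s ^ 2 := by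
  rw [norm_add_sq_real, inner_smul_right, norm_smul, mul_pow, EuclideanSpace.inner_single_right]
  simp only [conj_trivial, mul_one, norm_eq_abs, sq_abs, PiLp.norm_single, one_pow, one_mul]
  ring

lemma hasLineDerivAt_norm_sq_add_rpow {c : ℝ} (hc : 0 < c) (b : ℝ) (i : Fin d)
    (x : EuclideanSpace ℝ (Fin d)) :
    HasLineDerivAt ℝ (fun x : EuclideanSpace ℝ (Fin d) => (‖x‖ ^ 2 + c) ^ b)
      (2 * x i * (b * (‖x‖ ^ 2 + c) ^ (b - 1))) x (EuclideanSpace.single i 1) := by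
  have hsq : HasDerivAt (fun s : ℝ => ‖x + s • EuclideanSpace.single i (1 : ℝ)‖ ^ 2 + c)
      (2 * x i) 0 := by
    simp only [norm_add_smul_single_sq]
    exact (((((hasDerivAt_id (0 : ℝ)).mul_const (2 * x i)).const_add (‖x‖ ^ 2)).add
      (hasDerivAt_pow 2 0)).add_const c).congr_deriv (by norm_num)
  have hpow := hsq.rpow_const (p := b) (Or.inl (by positivity))
  rw [zero_smul, add_zero] at hpow
  exact hpow.congr_deriv (by ring)

lemma hasLineDerivAt_mul_norm_sq_add_rpow {c : ℝ} (hc : 0 < c) (b : ℝ) (i : Fin d)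
    (x : EuclideanSpace ℝ (Fin d)) :
    HasLineDerivAt ℝ (fun x : EuclideanSpace ℝ (Fin d) => 2 * x i * (b * (‖x‖ ^ 2 + c) ^ (b - 1)))
      (2 * b * (‖x‖ ^ 2 + c) ^ (b - 1) +
        4 * b * (b - 1) * (‖x‖ ^ 2 + c) ^ (b - 2) * x i ^ 2) x (EuclideanSpace.single i 1) := by
  have hcoord : HasDerivAt (fun s : ℝ => (x + s • EuclideanSpace.single i (1 : ℝ)) i) 1 0 := by
    simpa using (hasDerivAt_id (0 : ℝ)).const_add (x i)
  have hprod := (hcoord.const_mul 2).mul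
    ((hasLineDerivAt_norm_sq_add_rpow hc (b - 1) i x).const_mul b)
  simp only [zero_smul, add_zero, show b - 1 - 1 = b - 2 by ring] at hprod
  exact hprod.congr_deriv (by ring)

lemma sum_second_deriv_regPotential (hρ : 0 < ρ) (x : EuclideanSpace ℝ (Fin d)) :
    ∑ i, (2 * (-((d - 2 : ℝ) / 2)) * (‖x‖ ^ 2 + ρ ^ 2) ^ (-((d - 2 : ℝ) / 2) - 1) +
      4 * (-((d - 2 : ℝ) / 2)) * (-((d - 2 : ℝ) / 2) - 1) *
        (‖x‖ ^ 2 + ρ ^ 2) ^ (-((d - 2 : ℝ) / 2) - 2) * x i ^ 2) = -regKernel d ρ x := by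
  have hq : ‖x‖ ^ 2 + ρ ^ 2 ≠ 0 := by positivity
  have hexp : (‖x‖ ^ 2 + ρ ^ 2) ^ (-((d - 2 : ℝ) / 2) - 1) =
      (‖x‖ ^ 2 + ρ ^ 2) ^ (-((d + 2 : ℝ) / 2)) * (‖x‖ ^ 2 + ρ ^ 2) := by
    rw [← Real.rpow_add_one hq]
    congr 1
    ring
  rw [Finset.sum_add_distrib, Finset.sum_const, ← Finset.mul_sum,
    ← EuclideanSpace.real_norm_sq_eq, Finset.card_univ, Fintype.card_fin, nsmul_eq_mul, hexp,
    show -((d - 2 : ℝ) / 2) - 2 = -((d + 2 : ℝ) / 2) by ring, regKernel]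
  ring

lemma exists_neg_regKernel_le_latticeLap (hρ : 0 < ρ) (hη : 0 < η) :
    ∃ n₀ : ℕ, ∀ n, n₀ ≤ n → 1 ≤ n → ∀ k ∈ latticeBall d n,
      -(regKernel d ρ (gridPoint 0 (1 / n) k) + η) ≤
        (n : ℝ) ^ 2 * latticeLap (fun k => regPotential d ρ (gridPoint 0 (1 / n) k)) k := by
  have hcont : ∀ b : ℝ, Continuous fun x : EuclideanSpace ℝ (Fin d) => (‖x‖ ^ 2 + ρ ^ 2) ^ b :=
    fun b => Continuous.rpow_const (by fun_prop) fun x => Or.inl (by positivity)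
  have hcont' : ∀ (a b b' b'' : ℝ) (i : Fin d), Continuous fun x : EuclideanSpace ℝ (Fin d) =>
      a * (‖x‖ ^ 2 + ρ ^ 2) ^ b + b' * (‖x‖ ^ 2 + ρ ^ 2) ^ b'' * x i ^ 2 := fun a b b' b'' i =>
    (continuous_const.mul (hcont b)).add
      ((continuous_const.mul (hcont b'')).mul (by fun_prop))
  obtain ⟨h₀, hh₀, hle⟩ := exists_abs_sum_second_diff_sub_le (g := regPotential d ρ)
    isOpen_univ
    (fun i p _ => hasLineDerivAt_norm_sq_add_rpow (sq_pos_of_pos hρ) (-((d - 2 : ℝ) / 2)) i p)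
    (fun i p _ => hasLineDerivAt_mul_norm_sq_add_rpow (sq_pos_of_pos hρ) (-((d - 2 : ℝ) / 2)) i p)
    (fun i => (hcont' _ _ _ _ i).continuousOn)
    (isCompact_closedBall (0 : EuclideanSpace ℝ (Fin d)) (2 * 1)) (subset_univ _) hη
  obtain ⟨n₀, hn₀⟩ := exists_nat_gt (1 / h₀)
  refine ⟨n₀, fun n hn hn1 k hk => ?_⟩
  have hn' : (0 : ℝ) < n := Nat.cast_pos.2 hn1
  have hmesh : 1 / (n : ℝ) ≤ h₀ := by
    rw [one_div_le hn' hh₀]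
    exact hn₀.le.trans (Nat.cast_le.2 hn)
  have hmem := gridPoint_mem_closedBall (0 : EuclideanSpace ℝ (Fin d)) zero_le_one zero_le_two hn1
    ((mem_latticeBall.1 hk).le.trans_eq (by norm_num))
  have hlap := (abs_le.1 (hle (1 / n) (by positivity) hmesh _ hmem)).1
  rw [sum_second_deriv_regPotential hρ] at hlap
  rw [latticeLap_comp_gridPoint]
  calc -(regKernel d ρ (gridPoint 0 (1 / n) k) + η)
      = (n : ℝ) ^ 2 * ((1 / n : ℝ) ^ 2 * -regKernel d ρ (gridPoint 0 (1 / n) k) -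
          η * (1 / n : ℝ) ^ 2) := by field_simp; ring
    _ ≤ _ := mul_le_mul_of_nonneg_left (by linear_combination hlap) (sq_nonneg _)

/-- The minimum of the truncated potential `regPotential d ρ - regPotential d ρ |_{|x| = 2}` over
`|x|² ≤ 2` is at least this constant, for all `ρ ≤ 1`. -/
noncomputable def potentialLowerBound (d : ℕ) : ℝ :=
  3 ^ (-((d - 2 : ℝ) / 2)) * (1 - (5 / 3) ^ (-((d - 2 : ℝ) / 2)))

lemma potentialLowerBound_pos (hd : 3 ≤ d) : 0 < potentialLowerBound d := by
  have hd3 : (3 : ℝ) ≤ d := by exact_mod_cast hd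
  refine mul_pos (by positivity) (sub_pos.2 ?_)
  exact Real.rpow_lt_one_of_one_lt_of_neg (by norm_num) (by linarith)

lemma potentialLowerBound_le (hd : 2 ≤ d) (hρ : 0 ≤ ρ) (hρ1 : ρ ≤ 1) :
    potentialLowerBound d ≤
      (2 + ρ ^ 2) ^ (-((d - 2 : ℝ) / 2)) - (4 + ρ ^ 2) ^ (-((d - 2 : ℝ) / 2)) := by
  have hd2 : (2 : ℝ) ≤ d := by exact_mod_cast hd
  have hexp : -((d - 2 : ℝ) / 2) ≤ 0 := by linarith
  have hρ2 : ρ ^ 2 ≤ 1 := pow_le_one₀ hρ hρ1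
  have hratio : (5 / 3 : ℝ) ^ (-((d - 2 : ℝ) / 2)) ≤ 1 :=
    Real.rpow_le_one_of_one_le_of_nonpos (by norm_num) hexp
  calc potentialLowerBound d
      ≤ (2 + ρ ^ 2) ^ (-((d - 2 : ℝ) / 2)) * (1 - (5 / 3) ^ (-((d - 2 : ℝ) / 2))) :=
        mul_le_mul_of_nonneg_right
          (Real.rpow_le_rpow_of_nonpos (by positivity) (by linarith) hexp) (by linarith)
    _ = (2 + ρ ^ 2) ^ (-((d - 2 : ℝ) / 2)) - (5 / 3 * (2 + ρ ^ 2)) ^ (-((d - 2 : ℝ) / 2)) := by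
        rw [Real.mul_rpow (by norm_num) (by positivity)]
        ring
    _ ≤ _ := sub_le_sub_left
        (Real.rpow_le_rpow_of_nonpos (by positivity) (by linarith) hexp) _

lemma regPotential_le_rpow (hd : 2 ≤ d) {x : EuclideanSpace ℝ (Fin d)} {r : ℝ} (hr : 0 < r)
    (hx : r ≤ ‖x‖ ^ 2 + ρ ^ 2) : regPotential d ρ x ≤ r ^ (-((d - 2 : ℝ) / 2)) := by
  have hd2 : (2 : ℝ) ≤ d := by exact_mod_cast hd
  exact Real.rpow_le_rpow_of_nonpos hr hx (by linarith)

lemma rpow_le_regPotential (hd : 2 ≤ d) (hρ : 0 < ρ) {x : EuclideanSpace ℝ (Fin d)} {r : ℝ}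
    (hx : ‖x‖ ^ 2 + ρ ^ 2 ≤ r) : r ^ (-((d - 2 : ℝ) / 2)) ≤ regPotential d ρ x := by
  have hd2 : (2 : ℝ) ≤ d := by exact_mod_cast hd
  exact Real.rpow_le_rpow_of_nonpos (by positivity) hx (by linarith)

lemma latticeLap_le_latticeLap_max_sub {P : (Fin d → ℤ) → ℝ} {c : ℝ} {k : Fin d → ℤ}
    (hk : c ≤ P k) : latticeLap P k ≤ latticeLap (fun k => max (P k - c) 0) k := by
  refine Finset.sum_le_sum fun i _ => ?_
  dsimp only
  rw [max_eq_left (sub_nonneg.2 hk)]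
  linarith [le_max_left (P (k + Pi.single i 1) - c) 0, le_max_left (P (k - Pi.single i 1) - c) 0]

lemma norm_gridPoint_zero_sq (hn : 1 ≤ n) (k : Fin d → ℤ) :
    ‖gridPoint (0 : EuclideanSpace ℝ (Fin d)) (1 / n) k‖ ^ 2 * (n : ℝ) ^ 2 = latticeNormSq k := by
  have hsq := norm_gridPoint_sub_sq (0 : EuclideanSpace ℝ (Fin d)) (1 / n) k
  rw [sub_zero] at hsq
  rw [hsq]
  field_simp

lemma exists_isLatticePotential (hd : 2 ≤ d) (hρ : 0 < ρ) (hρ1 : ρ ≤ 1) (hη : 0 < η) :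
    ∃ n₀ : ℕ, ∀ n, n₀ ≤ n → 1 ≤ n → ∃ G : (Fin d → ℤ) → ℝ,
      IsLatticePotential n (potentialLowerBound d) ((ρ ^ 2) ^ (-((d - 2 : ℝ) / 2))) G
        (fun k => regKernel d ρ (gridPoint 0 (1 / n) k) + η) := by
  obtain ⟨n₀, hlap⟩ := exists_neg_regKernel_le_latticeLap (d := d) hρ hη
  refine ⟨n₀, fun n hn hn1 => ?_⟩
  have hnsq : (0 : ℝ) < (n : ℝ) ^ 2 := pow_pos (Nat.cast_pos.2 hn1) 2
  have hnorm := norm_gridPoint_zero_sq (d := d) hn1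
  set P : (Fin d → ℤ) → ℝ := fun k => regPotential d ρ (gridPoint 0 (1 / n) k)
  set c : ℝ := (4 + ρ ^ 2) ^ (-((d - 2 : ℝ) / 2))
  have hc0 : 0 ≤ c := by positivity
  refine ⟨fun k => max (P k - c) 0, fun k hk => max_eq_right (sub_nonpos.2 ?_),
    fun k => le_max_right _ _, fun k => max_le ?_ (by positivity), fun k hk => ?_,
    fun k => add_nonneg (regKernel_nonneg hd _) hη.le, fun k hk => ?_⟩
  · refine regPotential_le_rpow hd (by positivity) (add_le_add_left ?_ _)
    rw [mem_latticeBall, not_lt, ← hnorm] at hk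
    exact le_of_mul_le_mul_right hk hnsq
  · exact (sub_le_self _ hc0).trans
      (regPotential_le_rpow hd (by positivity) (le_add_of_nonneg_left (sq_nonneg _)))
  · refine le_max_of_le_left ((potentialLowerBound_le hd hρ.le hρ1).trans (sub_le_sub_right ?_ _))
    refine rpow_le_regPotential hd hρ (add_le_add_left ?_ _)
    rw [← hnorm] at hk
    exact (lt_of_mul_lt_mul_right hk hnsq.le).le
  · refine (hlap n hn hn1 k hk).trans (mul_le_mul_of_nonneg_left ?_ hnsq.le)
    refine latticeLap_le_latticeLap_max_sub (rpow_le_regPotential hd hρ (add_le_add_left ?_ _))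
    rw [mem_latticeBall, ← hnorm] at hk
    exact (lt_of_mul_lt_mul_right hk hnsq.le).le

end RegularizedPotential

section RiemannSum

open Filter
open scoped Pointwise

variable {d n : ℕ} {s : Set (EuclideanSpace ℝ (Fin d))}

lemma gridPoint_zero_mem_ball_iff (hn : 1 ≤ n) {r : ℝ} (hr : 0 ≤ r) (k : Fin d → ℤ) :
    gridPoint 0 (1 / n) k ∈ ball (0 : EuclideanSpace ℝ (Fin d)) r ↔
      latticeNormSq k < r ^ 2 * (n : ℝ) ^ 2 := by
  rw [mem_ball_zero_iff, ← norm_gridPoint_zero_sq hn, ← sq_lt_sq₀ (norm_nonneg _) hr]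
  exact (mul_lt_mul_iff_left₀ (pow_pos (Nat.cast_pos.2 hn) 2)).symm

lemma mem_latticeBall_iff_gridPoint_mem (hn : 1 ≤ n) {k : Fin d → ℤ} :
    k ∈ latticeBall d n ↔ gridPoint 0 (1 / n) k ∈ ball (0 : EuclideanSpace ℝ (Fin d)) 2 := by
  rw [mem_latticeBall, gridPoint_zero_mem_ball_iff hn zero_le_two]
  norm_num

lemma gridPoint_injective (x₀ : EuclideanSpace ℝ (Fin d)) {h : ℝ} (hh : h ≠ 0) :
    Function.Injective (gridPoint x₀ h) := by
  intro k l hkl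
  have hvec := smul_right_injective _ hh (add_left_cancel hkl)
  funext i
  exact_mod_cast congrFun (WithLp.toLp_injective 2 hvec) i

lemma toLp_preimage_inter_smul_span (hn : 1 ≤ n) (hs : s ⊆ ball 0 2)
    [DecidablePred fun k => gridPoint 0 (1 / n) k ∈ s] :
    WithLp.toLp 2 ⁻¹' s ∩
        ((n : ℝ)⁻¹ • (Submodule.span ℤ (range (Pi.basisFun ℝ (Fin d)))) : Set (Fin d → ℝ)) =
      ((latticeBall d n).filter fun k => gridPoint 0 (1 / n) k ∈ s).image
        fun k => WithLp.ofLp (gridPoint 0 (1 / n) k) := by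
  have hn0 : (n : ℝ) ≠ 0 := Nat.cast_ne_zero.2 (by omega)
  have : NeZero n := ⟨by omega⟩
  ext x
  simp only [Finset.coe_image, Finset.coe_filter, mem_inter_iff, mem_image, mem_preimage,
    mem_ofPred_eq]
  have hgrid : x ∈ ((n : ℝ)⁻¹ • (Submodule.span ℤ (range (Pi.basisFun ℝ (Fin d)))) :
      Set (Fin d → ℝ)) ↔ ∃ k, WithLp.ofLp (gridPoint 0 (1 / n) k) = x := by
    rw [← Submodule.coe_pointwise_smul, SetLike.mem_coe,
      BoxIntegral.unitPartition.mem_smul_span_iff]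
    refine Classical.skolem.trans (exists_congr fun k => ?_)
    rw [funext_iff]
    refine forall_congr' fun i => ?_
    simp only [gridPoint, zero_add, PiLp.smul_apply, smul_eq_mul, algebraMap_int_eq,
      Int.coe_castRingHom]
    rw [one_div_mul_eq_div, div_eq_iff hn0, mul_comm]
  rw [hgrid]
  constructor
  · rintro ⟨hx, k, rfl⟩
    exact ⟨k, ⟨(mem_latticeBall_iff_gridPoint_mem hn).2 (hs hx), hx⟩, rfl⟩
  · rintro ⟨k, ⟨-, hk⟩, rfl⟩
    exact ⟨hk, k, rfl⟩

lemma tsum_toLp_preimage_inter_smul_span (hn : 1 ≤ n) (hs : s ⊆ ball 0 2)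
    (F : EuclideanSpace ℝ (Fin d) → ℝ) :
    ∑' x : ↑(WithLp.toLp 2 ⁻¹' s ∩
        ((n : ℝ)⁻¹ • (Submodule.span ℤ (range (Pi.basisFun ℝ (Fin d)))) : Set (Fin d → ℝ))),
        F (WithLp.toLp 2 x) =
      ∑ k ∈ latticeBall d n, s.indicator F (gridPoint 0 (1 / n) k) := by
  classical
  have hh : (1 / n : ℝ) ≠ 0 := one_div_ne_zero (Nat.cast_ne_zero.2 (by omega))
  rw [toLp_preimage_inter_smul_span hn hs, Finset.tsum_subtype' _ fun x => F (WithLp.toLp 2 x),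
    Finset.sum_image fun k _ l _ hkl => gridPoint_injective 0 hh (WithLp.ofLp_injective 2 hkl),
    Finset.sum_filter]
  exact Finset.sum_congr rfl fun k _ => (indicator_apply s F _).symm

lemma tendsto_gridSum_setIntegral {F : EuclideanSpace ℝ (Fin d) → ℝ} (hF : Continuous F)
    (hs : s ⊆ ball 0 2) (hsm : MeasurableSet s) (hfr : volume (frontier s) = 0) :
    Tendsto (fun n : ℕ => gridSum n fun k => s.indicator F (gridPoint 0 (1 / n) k)) atTop
      (nhds (∫ x in s, F x)) := by
  have hcont : Continuous (WithLp.toLp 2 : (Fin d → ℝ) → EuclideanSpace ℝ (Fin d)) :=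
    PiLp.continuous_toLp 2 _
  have hvol := PiLp.volume_preserving_toLp (Fin d)
  have hbdd : Bornology.IsBounded (WithLp.toLp 2 ⁻¹' s : Set (Fin d → ℝ)) := by
    refine (isBounded_iff_subset_closedBall 0).2 ⟨2, fun x hx => ?_⟩
    rw [mem_closedBall_zero_iff, pi_norm_le_iff_of_nonneg zero_le_two]
    exact fun i => (PiLp.norm_apply_le (WithLp.toLp 2 x : EuclideanSpace ℝ (Fin d)) i).trans
      (mem_ball_zero_iff.1 (hs hx)).le
  have hfr' : volume (frontier (WithLp.toLp 2 ⁻¹' s : Set (Fin d → ℝ))) = 0 := by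
    rw [← hvol.measure_preimage isClosed_frontier.measurableSet.nullMeasurableSet] at hfr
    exact (PiLp.homeomorph 2 fun _ : Fin d => ℝ).symm.preimage_frontier s ▸ hfr
  have hlim := tendsto_tsum_div_pow_atTop_integral _ (fun x => F (WithLp.toLp 2 x))
    (hF.comp hcont) hbdd (hcont.measurable hsm) hfr'
  rw [hvol.setIntegral_preimage_emb (MeasurableEquiv.toLp 2 (Fin d → ℝ)).measurableEmbedding F s]
    at hlim
  refine hlim.congr' ?_
  filter_upwards [eventually_ge_atTop 1] with n hn
  rw [gridSum, ← tsum_toLp_preimage_inter_smul_span hn hs, Fintype.card_fin, div_eq_inv_mul]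

lemma tendsto_gridSum_integral_ball {F : EuclideanSpace ℝ (Fin d) → ℝ} {r : ℝ}
    (hF : ContinuousOn F (closedBall 0 r)) (hr : r ≤ 2) :
    Tendsto (fun n : ℕ => gridSum n fun k => (ball 0 r).indicator F (gridPoint 0 (1 / n) k)) atTop
      (nhds (∫ x in ball 0 r, F x)) := by
  obtain ⟨H, hH⟩ := ContinuousMap.exists_restrict_eq isClosed_closedBall
    ⟨(closedBall 0 r).domRestrict F, hF.domRestrict⟩
  have hHF : EqOn H F (ball 0 r) := fun x hx =>
    DFunLike.congr_fun hH (⟨x, ball_subset_closedBall hx⟩ : closedBall (0 : EuclideanSpace ℝ _) r)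
  rw [← setIntegral_congr_fun measurableSet_ball hHF, ← indicator_congr hHF]
  exact tendsto_gridSum_setIntegral H.continuous (ball_subset_ball hr) measurableSet_ball
    ((convex_ball 0 r).addHaar_frontier volume)

end RiemannSum

section RegularizedKernel

open Filter

variable {d n : ℕ} {ρ : ℝ}

lemma regKernel_eq_scaled (hρ : 0 < ρ) (x : EuclideanSpace ℝ (Fin d)) :
    regKernel d ρ x = (ρ ^ d)⁻¹ * regKernel d 1 (ρ⁻¹ • x) := by
  have hbase : ‖ρ⁻¹ • x‖ ^ 2 + 1 ^ 2 = (‖x‖ ^ 2 + ρ ^ 2) / ρ ^ 2 := by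
    rw [norm_smul, Real.norm_of_nonneg (inv_nonneg.2 hρ.le)]
    field_simp
  have hscale : (ρ ^ 2) ^ (-((d + 2 : ℝ) / 2)) = (ρ ^ d)⁻¹ * (ρ ^ 2)⁻¹ := by
    rw [← mul_inv, ← pow_add, ← Real.rpow_natCast ρ (d + 2), ← Real.rpow_natCast ρ 2,
      ← Real.rpow_mul hρ.le, ← Real.rpow_neg hρ.le]
    congr 1
    push_cast
    ring
  rw [regKernel, regKernel, hbase, Real.div_rpow (by positivity) (by positivity), hscale]
  field_simp

lemma continuous_regKernel (hρ : 0 < ρ) : Continuous (regKernel d ρ) :=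
  continuous_const.mul (continuous_const.mul
    (Continuous.rpow_const (by fun_prop) fun x => Or.inl (by positivity)))

lemma integrable_regKernel_one : Integrable (regKernel d 1) := by
  have hintegrable := integrable_rpow_neg_one_add_norm_sq (E := EuclideanSpace ℝ (Fin d))
    (μ := volume) (r := d + 2) (by simp)
  refine (hintegrable.const_mul ((d : ℝ) * (d - 2))).congr (Eventually.of_forall fun x => ?_)
  simp only [regKernel]
  rw [one_pow, one_mul, add_comm (1 : ℝ), neg_div]

lemma integrable_regKernel (hρ : 0 < ρ) : Integrable (regKernel d ρ) := by
  rw [funext (regKernel_eq_scaled hρ)]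
  exact ((integrable_comp_smul_iff volume _ (inv_ne_zero hρ.ne')).2
    integrable_regKernel_one).const_mul _

lemma integral_regKernel (hρ : 0 < ρ) :
    ∫ x : EuclideanSpace ℝ (Fin d), regKernel d ρ x = ∫ x, regKernel d 1 x := by
  rw [funext (regKernel_eq_scaled hρ), integral_const_mul,
    Measure.integral_comp_inv_smul_of_nonneg volume _ hρ.le, smul_eq_mul,
    finrank_euclideanSpace, Fintype.card_fin, inv_mul_cancel_left₀ (pow_pos hρ d).ne']

lemma exists_gridSum_regKernel_le (hd : 2 ≤ d) :
    ∃ K > 0, ∀ ρ > 0, ∀ᶠ n : ℕ in atTop,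
      gridSum n (fun k => regKernel d ρ (gridPoint 0 (1 / n) k)) ≤ K := by
  have hnonneg : ∀ ρ x, 0 ≤ regKernel d ρ x := fun ρ => regKernel_nonneg hd
  have hmass : 0 ≤ ∫ x, regKernel d 1 x := integral_nonneg (hnonneg 1)
  refine ⟨(∫ x, regKernel d 1 x) + 1, by positivity, fun ρ hρ => ?_⟩
  have hle : ∫ x in ball 0 2, regKernel d ρ x ≤ ∫ x, regKernel d 1 x :=
    (setIntegral_le_integral (integrable_regKernel hρ) (Eventually.of_forall (hnonneg ρ))).trans_eq
      (integral_regKernel hρ)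
  have hlim := tendsto_gridSum_integral_ball (continuous_regKernel (d := d) hρ).continuousOn
    (le_refl 2)
  filter_upwards [hlim.eventually_le_const (hle.trans_lt (lt_add_one _)),
    eventually_ge_atTop 1] with n hn hn1
  refine (gridSum_mono fun k hk => ?_).trans hn
  rw [indicator_of_mem ((mem_latticeBall_iff_gridPoint_mem hn1).1 hk)]

lemma regKernel_le_of_le_norm (hd : 2 ≤ d) (hρ : 0 ≤ ρ) (hρ1 : ρ ≤ 1) {r : ℝ} (hr : 0 < r)
    {x : EuclideanSpace ℝ (Fin d)} (hx : r ≤ ‖x‖) :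
    regKernel d ρ x ≤ d * (d - 2) * (r ^ 2) ^ (-((d + 2 : ℝ) / 2)) * ρ := by
  have hcoef : (0 : ℝ) ≤ d * (d - 2) :=
    mul_nonneg d.cast_nonneg (sub_nonneg.2 (by exact_mod_cast hd))
  have hpow : (‖x‖ ^ 2 + ρ ^ 2) ^ (-((d + 2 : ℝ) / 2)) ≤ (r ^ 2) ^ (-((d + 2 : ℝ) / 2)) := by
    refine Real.rpow_le_rpow_of_nonpos (by positivity) ?_ (by linarith [d.cast_nonneg (α := ℝ)])
    exact (pow_le_pow_left₀ hr.le hx 2).trans (le_add_of_nonneg_right (sq_nonneg ρ))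
  calc regKernel d ρ x ≤ d * (d - 2) * (ρ * (r ^ 2) ^ (-((d + 2 : ℝ) / 2))) :=
        mul_le_mul_of_nonneg_left
          (mul_le_mul (pow_le_of_le_one hρ hρ1 two_ne_zero) hpow (by positivity) hρ) hcoef
    _ = _ := by ring

lemma exists_gridSum_regKernel_mul_le (hd : 2 ≤ d) :
    ∃ K > 0, ∀ r ξ B : ℝ, 0 < r → 0 < ξ → 0 ≤ B → ∃ ρ ∈ Ioc (0 : ℝ) 1, ∀ᶠ n : ℕ in atTop,
      ∀ (b : (Fin d → ℤ) → ℝ) (β : ℝ), 0 ≤ β → (∀ k ∈ latticeBall d n, b k ∈ Icc 0 B) →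
        (∀ k ∈ latticeBall d n, gridPoint 0 (1 / n) k ∈ ball (0 : EuclideanSpace ℝ (Fin d)) r →
          b k ≤ β) →
        gridSum n (fun k => (regKernel d ρ (gridPoint 0 (1 / n) k) + ρ) * b k) ≤ K * β + ξ := by
  obtain ⟨K, hK, hsum⟩ := exists_gridSum_regKernel_le hd
  refine ⟨K, hK, fun r ξ B hr hξ hB => ?_⟩
  obtain ⟨c, hc⟩ : ∃ c, c = d * (d - 2) * (r ^ 2) ^ (-((d + 2 : ℝ) / 2)) := ⟨_, rfl⟩
  have hc0 : 0 ≤ c := hc ▸ mul_nonneg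
    (mul_nonneg d.cast_nonneg (sub_nonneg.2 (by exact_mod_cast hd))) (by positivity)
  have hD : 0 < 5 ^ d * ((c + 1) * (B + 1)) := by positivity
  obtain ⟨ρ, ⟨hρ, hρ1⟩, hρD⟩ : ∃ ρ ∈ Ioc (0 : ℝ) 1, ρ * (5 ^ d * ((c + 1) * (B + 1))) ≤ ξ :=
    ⟨min 1 (ξ / _), ⟨lt_min one_pos (div_pos hξ hD), min_le_left _ _⟩,
      (le_div_iff₀ hD).1 (min_le_right _ _)⟩
  refine ⟨ρ, ⟨hρ, hρ1⟩, ?_⟩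
  filter_upwards [hsum ρ hρ, eventually_ge_atTop 1] with n hn hn1 b β hβ hb hbβ
  have hterm : ∀ k ∈ latticeBall d n, (regKernel d ρ (gridPoint 0 (1 / n) k) + ρ) * b k ≤
      β * regKernel d ρ (gridPoint 0 (1 / n) k) + (c + 1) * ρ * B := by
    intro k hk
    have hker := regKernel_nonneg (ρ := ρ) hd (gridPoint 0 (1 / n) k)
    have hlin : ρ * b k ≤ ρ * B := mul_le_mul_of_nonneg_left (hb k hk).2 hρ.le
    rcases lt_or_ge ‖gridPoint (0 : EuclideanSpace ℝ (Fin d)) (1 / n) k‖ r with hnear | hfar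
    · have hmain := mul_le_mul_of_nonneg_left (hbβ k hk (mem_ball_zero_iff.2 hnear)) hker
      have hrest : 0 ≤ c * ρ * B := by positivity
      linarith
    · have hmain := mul_le_mul (hc ▸ regKernel_le_of_le_norm hd hρ.le hρ1 hr hfar) (hb k hk).2
        (hb k hk).1 (by positivity)
      linarith [mul_nonneg hβ hker]
  calc gridSum n (fun k => (regKernel d ρ (gridPoint 0 (1 / n) k) + ρ) * b k)
      ≤ β * gridSum n (fun k => regKernel d ρ (gridPoint 0 (1 / n) k)) +
          gridSum (d := d) n (fun _ => (c + 1) * ρ * B) := by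
        rw [← gridSum_const_mul, ← gridSum_add]
        exact gridSum_mono hterm
    _ ≤ β * K + 5 ^ d * ((c + 1) * ρ * B) :=
        add_le_add (mul_le_mul_of_nonneg_left hn hβ) (gridSum_const_le hn1 (by positivity))
    _ ≤ K * β + ρ * (5 ^ d * ((c + 1) * (B + 1))) := by
        have hslack : 0 ≤ 5 ^ d * ((c + 1) * ρ) := by positivity
        linear_combination hslack
    _ ≤ K * β + ξ := by linarith

end RegularizedKernel

section LatticeComparison

variable {d : ℕ} {m : ℝ}

lemma one_add_rpow_mul_le {e θ M V z S : ℝ} (hm0 : 0 ≤ m) (hm1 : m ≤ 1) (hθ : 0 ≤ θ)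
    (hθe : θ ≤ e) (he : e ≤ 1) (hV : |V| ≤ M) (hz : M + 1 ≤ z) (hS : S ≤ V + θ / 2) :
    (1 + e) ^ m * S ≤ e * z + (1 + e) * V := by
  have he0 : 0 ≤ e := hθ.trans hθe
  obtain ⟨b, hb⟩ : ∃ b, b = (1 + e) ^ m := ⟨_, rfl⟩
  have hb1 : 1 ≤ b := hb ▸ Real.one_le_rpow (by linarith) hm0
  have hbe : b ≤ 1 + e := hb ▸ Real.rpow_le_self_of_one_le (by linarith) hm1
  have hM : 0 ≤ M := (abs_nonneg V).trans hV
  have hVM : (1 + e - b) * -V ≤ e * M :=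
    mul_le_mul_of_nonneg (by linarith) ((neg_le_abs V).trans hV) (sub_nonneg.2 hbe) hM
  rw [← hb]
  calc b * S ≤ b * (V + θ / 2) := by gcongr
    _ = (1 + e) * V + (1 + e - b) * -V + b * (θ / 2) := by ring
    _ ≤ (1 + e) * V + e * M + 2 * (θ / 2) := by
        gcongr
        linarith
    _ ≤ e * (M + 1) + (1 + e) * V := by linarith
    _ ≤ e * z + (1 + e) * V := by gcongr

lemma latticeLap_mul_rpow {a : ℝ} {f : (Fin d → ℤ) → ℝ} {k : Fin d → ℤ} (ha : 0 ≤ a)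
    (hk : 0 ≤ f k) (hf : ∀ i, 0 ≤ f (k + Pi.single i 1) ∧ 0 ≤ f (k - Pi.single i 1)) :
    latticeLap (fun j => (a * f j) ^ m) k = a ^ m * latticeLap (fun j => f j ^ m) k := by
  rw [← latticeLap_const_mul]
  refine Finset.sum_congr rfl fun i _ => ?_
  simp only [mul_rpow ha (hf i).1, mul_rpow ha (hf i).2, mul_rpow ha hk]

variable {A : Finset (Fin d → ℤ)} {B : Set (Fin d → ℤ)} {c δ δ₀ S t L M : ℝ}
  {w z V : ℝ → (Fin d → ℤ) → ℝ}

lemma IsFastLatticeFlow.le_of_supersolution (h : IsFastLatticeFlow A c m δ S w)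
    (hAB : ∀ k ∈ A, ∀ i, k + Pi.single i 1 ∈ B ∧ k - Pi.single i 1 ∈ B) (hA : ↑A ⊆ B)
    (hc : 0 ≤ c) (hm0 : 0 ≤ m) (hm1 : m ≤ 1) (hδ : 0 < δ) (htS : t ≤ S)
    (hz : ∀ k ∈ A, ∀ s ∈ Icc 0 t, HasDerivAt (fun s => z s k) (V s k) s)
    (hzB : ∀ k ∈ B, ∀ s ∈ Icc 0 t, δ ≤ z s k)
    (hzV : ∀ k ∈ A, ∀ s ∈ Icc 0 t, c * latticeLap (fun j => z s j ^ m) k ≤ V s k)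
    (h0 : ∀ k ∈ A, w 0 k ≤ z 0 k) : ∀ k ∈ A, ∀ s ∈ Icc 0 t, w s k ≤ z s k := by
  refine le_of_subsolution_of_supersolution hAB hc (truncPow_mono hm0 hδ.le)
    (lipschitzWith_truncPow hm0 hm1 hδ) (z' := V)
    (w' := fun s k => c * latticeLap (fun j => w s j ^ m) k)
    (fun k _ => (h.continuousOn k).mono (Icc_subset_Icc_right htS))
    (fun k hk s hs => (hz k hk s hs).continuousAt.continuousWithinAt)
    (fun k hk s hs => h.hasDerivAt k hk s (Ioo_subset_Ioo_right htS hs))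
    (fun k hk s hs => hz k hk s (Ioo_subset_Icc_self hs)) (fun k _ s hs => ?_)
    (fun k hk s hs => ?_) h0 (fun k hk hkA s hs => ?_)
  · have hw := h.le s (Icc_subset_Icc_right htS (Ioo_subset_Icc_self hs))
    simp only [truncPow_of_le (hw _), le_refl]
  · have hs' := Ioo_subset_Icc_self hs
    refine le_of_eq_of_le (congrArg (c * ·) (Finset.sum_congr rfl fun i _ => ?_)) (hzV k hk s hs')
    simp only [truncPow_of_le (hzB _ (hAB k hk i).1 s hs'),
      truncPow_of_le (hzB _ (hAB k hk i).2 s hs'), truncPow_of_le (hzB k (hA hk) s hs')]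
  · exact (h.eq_of_notMem k hkA s).trans_le (hzB k hk s (Ioo_subset_Icc_self hs))

-- `(1 + e) z` with `e = exp (L (s - t))` is an exact supersolution: the growth `L e z` of the
-- factor pays both for the consistency error and for `(1 + e) ^ m` differing from `1 + e`.
lemma IsFastLatticeFlow.le_two_mul_of_approx_supersolution (h : IsFastLatticeFlow A c m δ S w)
    (hAB : ∀ k ∈ A, ∀ i, k + Pi.single i 1 ∈ B ∧ k - Pi.single i 1 ∈ B) (hA : ↑A ⊆ B)
    (hc : 0 ≤ c) (hm0 : 0 ≤ m) (hm1 : m ≤ 1) (hδ : 0 < δ) (hδ₀ : δ ≤ δ₀) (htS : t ≤ S)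
    (hL : 0 ≤ L) (hLM : M + 1 ≤ L * δ₀)
    (hz : ∀ k ∈ A, ∀ s ∈ Icc 0 t, HasDerivAt (fun s => z s k) (V s k) s)
    (hzB : ∀ k ∈ B, ∀ s ∈ Icc 0 t, δ₀ ≤ z s k) (hV : ∀ k ∈ A, ∀ s ∈ Icc 0 t, |V s k| ≤ M)
    (hzV : ∀ k ∈ A, ∀ s ∈ Icc 0 t,
      c * latticeLap (fun j => z s j ^ m) k ≤ V s k + exp (-(L * t)) / 2)
    (h0 : ∀ k ∈ A, w 0 k ≤ z 0 k) : ∀ k ∈ A, ∀ s ∈ Icc 0 t, w s k ≤ 2 * z s k := by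
  intro k hk s hs
  obtain ⟨e, he_def⟩ : ∃ e : ℝ → ℝ, e = fun s => exp (-(L * t)) * exp (L * s) := ⟨_, rfl⟩
  have he : ∀ s ∈ Icc 0 t, exp (-(L * t)) ≤ e s ∧ e s ≤ 1 := by
    intro s hs
    subst he_def
    refine ⟨le_mul_of_one_le_right (exp_pos _).le (one_le_exp (mul_nonneg hL hs.1)), ?_⟩
    beta_reduce
    rw [← exp_add, exp_le_one_iff]
    linarith [mul_le_mul_of_nonneg_left hs.2 hL]
  have he0 : ∀ s ∈ Icc 0 t, 0 ≤ e s := fun s hs => (exp_pos _).le.trans (he s hs).1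
  have hz0 : ∀ k ∈ B, ∀ s ∈ Icc 0 t, 0 ≤ z s k := fun k hk s hs =>
    (hδ.le.trans hδ₀).trans (hzB k hk s hs)
  have hge : ∀ k ∈ B, ∀ s ∈ Icc 0 t, z s k ≤ (1 + e s) * z s k := fun k hk s hs =>
    le_mul_of_one_le_left (hz0 k hk s hs) (le_add_of_nonneg_right (he0 s hs))
  have hderiv : ∀ k ∈ A, ∀ s ∈ Icc 0 t, HasDerivAt (fun s => (1 + e s) * z s k)
      (e s * (L * z s k) + (1 + e s) * V s k) s := fun k hk s hs => by
    subst he_def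
    exact ((((((hasDerivAt_id s).const_mul L).exp).const_mul _).const_add 1).mul
      (hz k hk s hs)).congr_deriv (by simp only [id_eq]; ring)
  have hsuper : ∀ k ∈ A, ∀ s ∈ Icc 0 t, c * latticeLap (fun j => ((1 + e s) * z s j) ^ m) k ≤
      e s * (L * z s k) + (1 + e s) * V s k := by
    intro k hk s hs
    rw [latticeLap_mul_rpow (add_nonneg zero_le_one (he0 s hs)) (hz0 k (hA hk) s hs) fun i =>
      ⟨hz0 _ (hAB k hk i).1 s hs, hz0 _ (hAB k hk i).2 s hs⟩, mul_left_comm]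
    exact one_add_rpow_mul_le hm0 hm1 (exp_pos _).le (he s hs).1 (he s hs).2 (hV k hk s hs)
      (hLM.trans (mul_le_mul_of_nonneg_left (hzB k (hA hk) s hs) hL)) (hzV k hk s hs)
  calc w s k ≤ (1 + e s) * z s k :=
        h.le_of_supersolution hAB hA hc hm0 hm1 hδ htS hderiv
          (fun k hk s hs => hδ₀.trans ((hzB k hk s hs).trans (hge k hk s hs))) hsuper
          (fun k hk => (h0 k hk).trans
            (hge k (hA hk) 0 (left_mem_Icc.2 (hs.1.trans hs.2)))) k hk s hs
    _ ≤ 2 * z s k :=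
        mul_le_mul_of_nonneg_right (by linarith [(he s hs).2]) (hz0 k (hA hk) s hs)

end LatticeComparison

section ClassicalSolutionComparison

variable {d n : ℕ} {m t : ℝ} {Q : Set (ℝ × EuclideanSpace ℝ (Fin d))}
  {u : ℝ → EuclideanSpace ℝ (Fin d) → ℝ}

namespace IsFDESol

lemma continuousOn (hu : IsFDESol m Q u) :
    ContinuousOn (fun p : ℝ × EuclideanSpace ℝ (Fin d) => u p.1 p.2) Q :=
  hu.2.1.continuousOn

lemma contDiffOn_rpow (hu : IsFDESol m Q u) (p : ℝ) :
    ContDiffOn ℝ 2 (fun q : ℝ × EuclideanSpace ℝ (Fin d) => u q.1 q.2 ^ p) Q :=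
  (hu.2.1.of_le (by norm_cast)).rpow_const_of_ne fun q hq => (hu.1 q hq).ne'

lemma differentiableAt (hu : IsFDESol m Q u) (hQ : IsOpen Q)
    {p : ℝ × EuclideanSpace ℝ (Fin d)} (hp : p ∈ Q) :
    DifferentiableAt ℝ (fun p : ℝ × EuclideanSpace ℝ (Fin d) => u p.1 p.2) p :=
  (hu.2.1.differentiableOn (by simp)).differentiableAt (hQ.mem_nhds hp)

lemma hasDerivAt_time (hu : IsFDESol m Q u) (hQ : IsOpen Q)
    {p : ℝ × EuclideanSpace ℝ (Fin d)} (hp : p ∈ Q) :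
    HasDerivAt (fun s => u s p.2) (spaceLap (fun y => u p.1 y ^ m) p.2) p.1 := by
  rw [← hu.2.2 p hp]
  exact ((hu.differentiableAt hQ hp).comp p.1 (f := fun s : ℝ => (s, p.2))
    (by fun_prop)).hasDerivAt

lemma continuousOn_spaceLap (hu : IsFDESol m Q u) (hQ : IsOpen Q) :
    ContinuousOn (fun p : ℝ × EuclideanSpace ℝ (Fin d) =>
      spaceLap (fun y => u p.1 y ^ m) p.2) Q := by
  have hfderiv := ((hu.2.1.fderiv_of_isOpen hQ (m := 0) (by simp)).clm_apply
    (contDiffOn_const (c := ((1 : ℝ), (0 : EuclideanSpace ℝ (Fin d)))))).continuousOn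
  refine hfderiv.congr ?_
  rintro ⟨s, x⟩ hp
  have hline : HasDerivAt (fun r : ℝ => (r, x)) ((1 : ℝ), (0 : EuclideanSpace ℝ (Fin d))) s :=
    (hasDerivAt_id s).prodMk (hasDerivAt_const s x)
  have hchain := (hu.differentiableAt hQ hp).hasFDerivAt.comp_hasDerivAt s hline
  exact (hu.hasDerivAt_time hQ hp).unique hchain

lemma exists_sq_mul_latticeLap_le (hu : IsFDESol m Q u) (hQ : IsOpen Q)
    {K : Set (ℝ × EuclideanSpace ℝ (Fin d))} (hK : IsCompact K) (hKQ : K ⊆ Q) {η : ℝ}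
    (hη : 0 < η) :
    ∃ n₀ : ℕ, ∀ n, n₀ ≤ n → 1 ≤ n → ∀ s k, (s, gridPoint 0 (1 / n) k) ∈ K →
      (n : ℝ) ^ 2 * latticeLap (fun j => u s (gridPoint 0 (1 / n) j) ^ m) k ≤
        spaceLap (fun y => u s y ^ m) (gridPoint 0 (1 / n) k) + η := by
  obtain ⟨h₀, hh₀, hcons⟩ :=
    exists_abs_sum_second_diff_sub_spaceLap_le hQ (hu.contDiffOn_rpow m) hK hKQ hη
  obtain ⟨n₀, hn₀⟩ := exists_nat_ge (1 / h₀)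
  refine ⟨n₀, fun n hn hn1 s k hk => ?_⟩
  have hn0 : (0 : ℝ) < n := Nat.cast_pos.2 hn1
  have hle : 1 / (n : ℝ) ≤ h₀ :=
    (one_div_le hn0 hh₀).2 (hn₀.trans (Nat.cast_le.2 hn))
  have hlap := (abs_le.1 (hcons (1 / n) (one_div_pos.2 hn0) hle _ hk)).2
  rw [← latticeLap_comp_gridPoint 0 (1 / n : ℝ) k (fun y => u s y ^ m)] at hlap
  calc (n : ℝ) ^ 2 * latticeLap (fun j => u s (gridPoint 0 (1 / n) j) ^ m) k
      ≤ (n : ℝ) ^ 2 * ((1 / n) ^ 2 * spaceLap (fun y => u s y ^ m) (gridPoint 0 (1 / n) k) +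
          η * (1 / n) ^ 2) := by
        gcongr
        linarith
    _ = _ := by field_simp

end IsFDESol

lemma gridPoint_neighbours_mem_closedBall (hn : 1 ≤ n) {k : Fin d → ℤ}
    (hk : k ∈ latticeBall d n) (i : Fin d) :
    gridPoint 0 (1 / n) (k + Pi.single i 1) ∈ closedBall (0 : EuclideanSpace ℝ (Fin d)) 3 ∧
      gridPoint 0 (1 / n) (k - Pi.single i 1) ∈ closedBall (0 : EuclideanSpace ℝ (Fin d)) 3 := by
  have hk2 : ‖gridPoint (0 : EuclideanSpace ℝ (Fin d)) (1 / n) k‖ < 2 :=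
    mem_ball_zero_iff.1 ((mem_latticeBall_iff_gridPoint_mem hn).1 hk)
  have hstep : ‖(1 / n : ℝ) • EuclideanSpace.single i (1 : ℝ)‖ ≤ 1 := by
    rw [norm_smul, PiLp.norm_single, norm_one, mul_one, norm_of_nonneg (by positivity)]
    exact (div_le_one (Nat.cast_pos.2 hn)).2 (Nat.one_le_cast.2 hn)
  rw [gridPoint_add_single, gridPoint_sub_single, mem_closedBall_zero_iff,
    mem_closedBall_zero_iff]
  exact ⟨(norm_add_le _ _).trans (by linarith), (norm_sub_le _ _).trans (by linarith)⟩

lemma IsFDESol.exists_latticeFlow_le_two_mul (hu : IsFDESol m Q u) (hQ : IsOpen Q) (hm0 : 0 ≤ m)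
    (hm1 : m ≤ 1) (ht : 0 ≤ t) (hKQ : Icc 0 t ×ˢ closedBall 0 3 ⊆ Q) :
    ∃ δ₀ > 0, (∀ x ∈ closedBall 0 3, δ₀ ≤ u 0 x) ∧ ∃ n₀ : ℕ, ∀ n, n₀ ≤ n → 1 ≤ n → ∀ δ S w,
      0 < δ → δ ≤ δ₀ → t ≤ S → IsFastLatticeFlow (latticeBall d n) ((n : ℝ) ^ 2) m δ S w →
      (∀ k ∈ latticeBall d n, w 0 k ≤ u 0 (gridPoint 0 (1 / n) k)) →
      ∀ k ∈ latticeBall d n, w t k ≤ 2 * u t (gridPoint 0 (1 / n) k) := by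
  have hK : IsCompact (Icc 0 t ×ˢ closedBall (0 : EuclideanSpace ℝ (Fin d)) 3) :=
    isCompact_Icc.prod (isCompact_closedBall _ _)
  have hne : (Icc 0 t ×ˢ closedBall (0 : EuclideanSpace ℝ (Fin d)) 3).Nonempty :=
    (nonempty_Icc.2 ht).prod (nonempty_closedBall.2 (by norm_num))
  obtain ⟨p, hp, hmin⟩ := hK.exists_isMinOn hne (hu.continuousOn.mono hKQ)
  obtain ⟨M, hM⟩ := hK.exists_bound_of_continuousOn ((hu.continuousOn_spaceLap hQ).mono hKQ)
  have hM0 : 0 ≤ M := (norm_nonneg _).trans (hM p hp)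
  obtain ⟨δ₀, hδ₀⟩ : ∃ δ₀, δ₀ = u p.1 p.2 := ⟨_, rfl⟩
  have hδ₀pos : 0 < δ₀ := hδ₀ ▸ hu.1 p (hKQ hp)
  have hlow : ∀ s ∈ Icc 0 t, ∀ x ∈ closedBall 0 3, δ₀ ≤ u s x := fun s hs x hx =>
    hδ₀.trans_le (hmin (mk_mem_prod hs hx))
  obtain ⟨n₀, hn₀⟩ := hu.exists_sq_mul_latticeLap_le hQ hK hKQ
    (half_pos (exp_pos (-((M + 1) / δ₀ * t))))
  refine ⟨δ₀, hδ₀pos, hlow 0 (left_mem_Icc.2 ht), n₀, fun n hn hn1 δ S w hδ hδδ₀ htS hw hw0 => ?_⟩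
  have hnbr := fun k (hk : k ∈ latticeBall d n) => gridPoint_neighbours_mem_closedBall hn1 hk
  have hball : ∀ k ∈ latticeBall d n,
      gridPoint 0 (1 / n) k ∈ closedBall (0 : EuclideanSpace ℝ (Fin d)) 3 := fun k hk =>
    (ball_subset_ball (by norm_num)).trans ball_subset_closedBall
      ((mem_latticeBall_iff_gridPoint_mem hn1).1 hk)
  exact fun k hk => hw.le_two_mul_of_approx_supersolution
    (B := {k | gridPoint 0 (1 / n) k ∈ closedBall (0 : EuclideanSpace ℝ (Fin d)) 3})
    (z := fun s k => u s (gridPoint 0 (1 / n) k)) hnbr hball (by positivity) hm0 hm1 hδ hδδ₀ htS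
    (by positivity) (div_mul_cancel₀ (M + 1) hδ₀pos.ne').ge
    (fun k hk s hs => hu.hasDerivAt_time hQ (p := (s, gridPoint 0 (1 / n) k))
      (hKQ (mk_mem_prod hs (hball k hk))))
    (fun k hk s hs => hlow s hs _ hk) (fun k hk s hs => hM _ (mk_mem_prod hs (hball k hk)))
    (fun k hk s hs => hn₀ n hn hn1 s k (mk_mem_prod hs (hball k hk))) hw0 k hk t
    (right_mem_Icc.2 ht)

end ClassicalSolutionComparison

section UnitEstimate

open Filter

variable {d n : ℕ} {m : ℝ}

lemma exists_gridSum_regKernel_mul_le_apply_zero (hd : 2 ≤ d) :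
    ∃ K > 0, ∀ f : EuclideanSpace ℝ (Fin d) → ℝ, ContinuousOn f (closedBall 0 2) →
      (∀ x ∈ closedBall 0 2, 0 ≤ f x) → ∀ ξ > 0, ∃ ρ ∈ Ioc (0 : ℝ) 1, ∀ᶠ n : ℕ in atTop,
        gridSum n (fun k => (regKernel d ρ (gridPoint 0 (1 / n) k) + ρ) *
          f (gridPoint 0 (1 / n) k)) ≤ K * f 0 + ξ := by
  obtain ⟨K, hK, hker⟩ := exists_gridSum_regKernel_mul_le hd
  refine ⟨K, hK, fun f hf hf0 ξ hξ => ?_⟩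
  have h0 : (0 : EuclideanSpace ℝ (Fin d)) ∈ closedBall 0 2 := mem_closedBall_self zero_le_two
  obtain ⟨B, hB⟩ := (isCompact_closedBall 0 2).exists_bound_of_continuousOn hf
  obtain ⟨r, hr, hrf⟩ := Metric.continuousOn_iff.1 hf 0 h0 (ξ / 2 / K) (by positivity)
  obtain ⟨ρ, hρ, hn⟩ := hker r (ξ / 2) B hr (half_pos hξ) ((norm_nonneg _).trans (hB 0 h0))
  refine ⟨ρ, hρ, ?_⟩
  filter_upwards [hn, eventually_ge_atTop 1] with n hn hn1
  have hmem : ∀ k ∈ latticeBall d n,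
      gridPoint 0 (1 / n) k ∈ closedBall (0 : EuclideanSpace ℝ (Fin d)) 2 := fun k hk =>
    ball_subset_closedBall ((mem_latticeBall_iff_gridPoint_mem hn1).1 hk)
  refine (hn (fun k => f (gridPoint 0 (1 / n) k)) (f 0 + ξ / 2 / K)
    (add_nonneg (hf0 0 h0) (by positivity))
    (fun k hk => ⟨hf0 _ (hmem k hk), (le_abs_self _).trans (hB _ (hmem k hk))⟩)
    (fun k hk hkr => ?_)).trans_eq ?_
  · linarith [(abs_lt.1 (hrf _ (hmem k hk) hkr)).2]
  · field_simp
    ring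

lemma exists_pos_mul_le_and_mul_rpow_le {p δ₀ ξ : ℝ} (hp : 0 < p) (hδ₀ : 0 < δ₀) (hξ : 0 < ξ)
    (a b : ℝ) : ∃ δ > 0, δ ≤ δ₀ ∧ a * δ ≤ ξ ∧ b * δ ^ p ≤ ξ := by
  have hlin : Tendsto (fun δ : ℝ => a * δ) (nhdsWithin 0 (Ioi 0)) (nhds 0) :=
    (Continuous.tendsto' (by fun_prop) 0 0 (mul_zero a)).mono_left nhdsWithin_le_nhds
  have hrpow : Tendsto (fun δ : ℝ => b * δ ^ p) (nhdsWithin 0 (Ioi 0)) (nhds 0) :=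
    (((continuous_rpow_const hp.le).const_mul b).tendsto' 0 0
      (by rw [zero_rpow hp.ne', mul_zero])).mono_left nhdsWithin_le_nhds
  have hIoc : ∀ᶠ δ in nhdsWithin (0 : ℝ) (Ioi 0), δ ∈ Ioc 0 δ₀ := Ioc_mem_nhdsGT hδ₀
  obtain ⟨δ, ⟨hδ, hδδ₀⟩, ha, hb⟩ := (hIoc.and
    ((hlin.eventually_le_const hξ).and (hrpow.eventually_le_const hξ))).exists
  exact ⟨δ, hδ, hδδ₀, ha, hb⟩

lemma indicator_rpow {α : Type*} {s : Set α} {f : α → ℝ} {p : ℝ} (hp : p ≠ 0) (x : α) :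
    s.indicator f x ^ p = s.indicator (fun y => f y ^ p) x :=
  (congrFun (indicator_comp_of_zero (g := fun y : ℝ => y ^ p) (zero_rpow hp)) x).symm

lemma indicator_ball_gridPoint_eq_zero (hn : 1 ≤ n) (f : EuclideanSpace ℝ (Fin d) → ℝ)
    {k : Fin d → ℤ} (hk : (n : ℝ) ^ 2 < latticeNormSq k) :
    (ball (0 : EuclideanSpace ℝ (Fin d)) 1).indicator f (gridPoint 0 (1 / n) k) = 0 := by
  refine indicator_of_notMem (fun hmem => ?_) f
  rw [gridPoint_zero_mem_ball_iff hn zero_le_one] at hmem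
  linarith

variable {t : ℝ} {Q : Set (ℝ × EuclideanSpace ℝ (Fin d))} {u : ℝ → EuclideanSpace ℝ (Fin d) → ℝ}

lemma IsFDESol.exists_latticeFlow (hu : IsFDESol m Q u) (hQ : IsOpen Q) (hm0 : 0 ≤ m)
    (hm1 : m ≤ 1) (ht : 0 ≤ t) (hKQ : Icc 0 t ×ˢ closedBall 0 3 ⊆ Q) :
    ∃ δ₀ > 0, ∃ n₀ : ℕ, ∀ n, n₀ ≤ n → 1 ≤ n → ∀ δ S, 0 < δ → δ ≤ δ₀ → t ≤ S →
      ∃ w, IsFastLatticeFlow (latticeBall d n) ((n : ℝ) ^ 2) m δ S w ∧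
        (∀ k, w 0 k = max δ ((ball 0 1).indicator (u 0) (gridPoint 0 (1 / n) k))) ∧
        ∀ k ∈ latticeBall d n, w t k ≤ 2 * u t (gridPoint 0 (1 / n) k) := by
  obtain ⟨δ₀, hδ₀, hδu, n₀, hcmp⟩ := hu.exists_latticeFlow_le_two_mul hQ hm0 hm1 ht hKQ
  refine ⟨δ₀, hδ₀, n₀, fun n hn hn1 δ S hδ hδδ₀ htS => ?_⟩
  obtain ⟨w, hw0, hw⟩ := exists_isFastLatticeFlow (latticeBall d n) (sq_nonneg (n : ℝ)) hm0 hm1 hδ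
    (ht.trans htS)
    (w₀ := fun k => max δ ((ball 0 1).indicator (u 0) (gridPoint 0 (1 / n) k)))
    (fun k => le_max_left _ _) (fun k hk => by
      have hk4 : 4 * (n : ℝ) ^ 2 ≤ latticeNormSq k := not_lt.1 (mt mem_latticeBall.2 hk)
      have hn2 : 0 < (n : ℝ) ^ 2 := pow_pos (Nat.cast_pos.2 hn1) 2
      rw [indicator_ball_gridPoint_eq_zero hn1 (u 0) (by linarith), max_eq_left hδ.le])
  refine ⟨w, hw, congrFun hw0, hcmp n hn hn1 δ S w hδ hδδ₀ htS hw fun k hk => ?_⟩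
  have hu0 : δ₀ ≤ u 0 (gridPoint 0 (1 / n) k) := hδu _ ((ball_subset_ball (by norm_num)).trans
    ball_subset_closedBall ((mem_latticeBall_iff_gridPoint_mem hn1).1 hk))
  rw [hw0]
  exact max_le (hδδ₀.trans hu0)
    (indicator_apply_le' (fun _ => le_rfl) fun _ => hδ₀.le.trans hu0)

lemma exists_eventually_gridSum_indicator_le (hm0 : 0 < m) (hmc : m < (d - 2 : ℝ) / d) :
    ∃ C > 0, ∃ K > 0, ∀ (Q : Set (ℝ × EuclideanSpace ℝ (Fin d)))
      (u : ℝ → EuclideanSpace ℝ (Fin d) → ℝ) (t : ℝ), IsOpen Q → IsFDESol m Q u → 0 < t →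
      Icc 0 t ×ˢ closedBall 0 3 ⊆ Q → ∀ ξ > 0, ∀ᶠ n : ℕ in atTop, ∀ X,
        gridSum n (fun k => (ball 0 1).indicator (fun x => u 0 x ^ (d * (1 - m) / 2))
          (gridPoint 0 (1 / n) k)) + ξ ≤ X →
        gridSum n (fun k => (ball 0 1).indicator (u 0) (gridPoint 0 (1 / n) k)) ≤
          C * t ^ (1 / (1 - m)) + ξ + C * (X ^ (2 / (d * (1 - m))) *
            (t ^ (-(m / (1 - m))) * (K * (2 * u t 0) ^ m + ξ))) := by
  have hd := three_le_of_lt_critical hm0 hmc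
  have hm1 := lt_one_of_lt_critical hm0 hmc
  have hp := zero_lt_one.trans (one_lt_critical_exponent hm0 hmc)
  obtain ⟨C, hC, hflow⟩ :=
    IsFastLatticeFlow.exists_gridSum_le_const hm0 hmc (potentialLowerBound_pos hd)
  obtain ⟨K, hK, hker⟩ := exists_gridSum_regKernel_mul_le_apply_zero (by omega : 2 ≤ d)
  refine ⟨C, hC, K, hK, fun Q u t hQ hu ht hKQ ξ hξ => ?_⟩
  have hut : ∀ x ∈ closedBall 0 2, (t, x) ∈ Q := fun x hx =>
    hKQ (mk_mem_prod (right_mem_Icc.2 ht.le) (closedBall_subset_closedBall (by norm_num) hx))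
  obtain ⟨ρ, ⟨hρ, hρ1⟩, hρn⟩ := hker (fun x => (2 * u t x) ^ m)
    ((continuousOn_const.mul (hu.continuousOn.comp (by fun_prop) hut)).rpow_const
      fun _ _ => Or.inr hm0.le)
    (fun x hx => rpow_nonneg (mul_nonneg zero_le_two (hu.1 _ (hut x hx)).le) m) ξ hξ
  obtain ⟨n₁, hpot⟩ := exists_isLatticePotential (by omega : 2 ≤ d) hρ hρ1 hρ
  obtain ⟨δ₀, hδ₀, n₂, hcmp⟩ := hu.exists_latticeFlow hQ hm0.le hm1.le ht.le hKQ
  obtain ⟨δ, hδ, hδδ₀, hδC, hδp⟩ := exists_pos_mul_le_and_mul_rpow_le hp hδ₀ hξ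
    (C * (ρ ^ 2) ^ (-((d - 2 : ℝ) / 2))) (2 * 5 ^ d)
  filter_upwards [hρn, eventually_ge_atTop n₁, eventually_ge_atTop n₂, eventually_ge_atTop 1]
    with n hρn hn₁ hn₂ hn X hX
  obtain ⟨G, hG⟩ := hpot n hn₁ hn
  have hu0 : ∀ x ∈ ball 0 1, 0 < u 0 x := fun x hx => hu.1 (0, x) (hKQ (mk_mem_prod
    (left_mem_Icc.2 ht.le) (ball_subset_closedBall (ball_subset_ball (by norm_num) hx))))
  have hX0 : 0 ≤ X := (add_nonneg (gridSum_nonneg fun k _ => indicator_nonneg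
    (fun x hx => rpow_nonneg (hu0 x hx).le _) _) hξ.le).trans hX
  have htime : 0 ≤ C * X ^ (2 / (d : ℝ)) := mul_nonneg hC.le (rpow_nonneg hX0 _)
  obtain ⟨w, hw, hw0, hwu⟩ := hcmp n hn₂ hn δ (t + C * X ^ (2 / (d : ℝ)) + 1) hδ hδδ₀ (by linarith)
  have hest := hflow n hn δ _ hδ w hw _ (fun k => indicator_nonneg (fun x hx => (hu0 x hx).le) _)
    hw0 (fun k hk => indicator_ball_gridPoint_eq_zero hn (u 0) hk) G _ _ hG t
    ⟨ht, by linarith⟩ X (by simp only [indicator_rpow hp.ne']; linarith) (by linarith)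
  have hcharge : gridSum n (fun k => (regKernel d ρ (gridPoint 0 (1 / n) k) + ρ) * w t k ^ m) ≤
      K * (2 * u t 0) ^ m + ξ :=
    (gridSum_mono fun k hk => mul_le_mul_of_nonneg_left
      (rpow_le_rpow (hw.pos hδ ⟨ht.le, by linarith⟩ k).le (hwu k hk) hm0.le)
      (hG.charge_nonneg k)).trans hρn
  refine hest.trans ?_
  gcongr
  linarith

lemma exists_integral_unitBall_le (hm0 : 0 < m) (hmc : m < (d - 2 : ℝ) / d) :
    ∃ C₁ > 0, ∃ C₃ > 0, ∀ (Q : Set (ℝ × EuclideanSpace ℝ (Fin d)))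
      (u : ℝ → EuclideanSpace ℝ (Fin d) → ℝ) (t : ℝ), IsOpen Q → IsFDESol m Q u → 0 < t →
      Icc 0 t ×ˢ closedBall 0 3 ⊆ Q →
        ∫ x in ball 0 1, u 0 x ≤ C₁ * t ^ (1 / (1 - m)) +
          C₃ * (∫ x in ball 0 1, u 0 x ^ (d * (1 - m) / 2)) ^ (2 / (d * (1 - m))) *
            t ^ (-(m / (1 - m))) * u t 0 ^ m := by
  have hp := zero_lt_one.trans (one_lt_critical_exponent hm0 hmc)
  obtain ⟨C, hC, K, hK, hgrid⟩ := exists_eventually_gridSum_indicator_le hm0 hmc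
  refine ⟨C, hC, C * K * 2 ^ m, by positivity, fun Q u t hQ hu ht hKQ => ?_⟩
  have hu0 : ContinuousOn (u 0) (closedBall 0 1) := hu.continuousOn.comp (f := fun x => (0, x))
    (by fun_prop) fun x hx => hKQ (mk_mem_prod (left_mem_Icc.2 ht.le)
      (closedBall_subset_closedBall (by norm_num) hx))
  have hlim := tendsto_gridSum_integral_ball hu0 one_le_two
  have hlimp := tendsto_gridSum_integral_ball
    (hu0.rpow_const (p := d * (1 - m) / 2) fun _ _ => Or.inr hp.le) one_le_two
  obtain ⟨J, hJ⟩ : ∃ J, J = ∫ x in ball 0 1, u 0 x ^ (d * (1 - m) / 2) := ⟨_, rfl⟩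
  have happrox : ∀ ξ > 0, ∫ x in ball 0 1, u 0 x ≤ C * t ^ (1 / (1 - m)) + ξ +
      C * ((J + 2 * ξ) ^ (2 / (d * (1 - m))) *
        (t ^ (-(m / (1 - m))) * (K * (2 * u t 0) ^ m + ξ))) := fun ξ hξ => by
    refine le_of_tendsto hlim ?_
    filter_upwards [hgrid Q u t hQ hu ht hKQ ξ hξ,
      hlimp.eventually_le_const (lt_add_of_pos_right _ hξ)] with n hn hnJ
    exact hn _ (by linarith)
  have hcont : Continuous fun ξ : ℝ => C * t ^ (1 / (1 - m)) + ξ +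
      C * ((J + 2 * ξ) ^ (2 / (d * (1 - m))) *
        (t ^ (-(m / (1 - m))) * (K * (2 * u t 0) ^ m + ξ))) := by
    have hexp : 0 ≤ 2 / (d * (1 - m)) := by rw [← inv_div]; exact (inv_pos.2 hp).le
    have hrpow : Continuous fun ξ : ℝ => (J + 2 * ξ) ^ (2 / (d * (1 - m))) :=
      (by fun_prop : Continuous fun ξ : ℝ => J + 2 * ξ).rpow_const fun _ => Or.inr hexp
    exact (continuous_const.add continuous_id).add
      (continuous_const.mul (hrpow.mul (by fun_prop)))
  have hlimit := ge_of_tendsto (hcont.continuousWithinAt (s := Ioi 0) (x := 0))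
    (eventually_mem_nhdsWithin.mono happrox)
  refine hlimit.trans_eq ?_
  beta_reduce
  rw [mul_zero, add_zero, add_zero, add_zero, hJ, mul_rpow zero_le_two (hu.1 (t, 0) (hKQ
    (mk_mem_prod (right_mem_Icc.2 ht.le) (mem_closedBall_self (by norm_num))))).le]
  ring

end UnitEstimate

section Rescaling

variable {d : ℕ} {m : ℝ}

lemma spaceLap_comp_const_add_smul (g : EuclideanSpace ℝ (Fin d) → ℝ)
    (x₀ : EuclideanSpace ℝ (Fin d)) (R : ℝ) (x : EuclideanSpace ℝ (Fin d)) :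
    spaceLap (fun y => g (x₀ + R • y)) x = R ^ 2 * spaceLap g (x₀ + R • x) := by
  have hfderiv : ∀ (f : EuclideanSpace ℝ (Fin d) → ℝ) y,
      fderiv ℝ (fun z => f (x₀ + R • z)) y = R • fderiv ℝ f (x₀ + R • y) := fun f y => by
    rw [fderiv_comp_smul (f := fun z => f (x₀ + z)), fderiv_comp_add_left]
  simp only [spaceLap, Finset.mul_sum]
  refine Finset.sum_congr rfl fun i _ => ?_
  have hsmul := congrFun (fderiv_const_smul_field (𝕜 := ℝ) R (f := fun z =>
    fderiv ℝ g (x₀ + R • z) (EuclideanSpace.single i 1))) x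
  simp only [Pi.smul_def, hfderiv (fun z => fderiv ℝ g z (EuclideanSpace.single i 1))] at hsmul
  simp only [hfderiv g, smul_apply, hsmul]
  rw [smul_eq_mul, smul_eq_mul]
  ring

lemma IsFDESol.comp_parabolic_rescaling {Q : Set (ℝ × EuclideanSpace ℝ (Fin d))}
    {u : ℝ → EuclideanSpace ℝ (Fin d) → ℝ} (hu : IsFDESol m Q u) (s R : ℝ)
    (x₀ : EuclideanSpace ℝ (Fin d)) :
    IsFDESol m ((fun p => (s + R ^ 2 * p.1, x₀ + R • p.2)) ⁻¹' Q)
      (fun t x => u (s + R ^ 2 * t) (x₀ + R • x)) := by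
  refine ⟨fun p hp => hu.1 _ hp, hu.2.1.comp (by fun_prop) (mapsTo_preimage _ _), fun p hp => ?_⟩
  rw [spaceLap_comp_const_add_smul (fun y => u (s + R ^ 2 * p.1) y ^ m), ← hu.2.2 _ hp,
    deriv_comp_mul_left (R ^ 2) (fun t => u (s + t) (x₀ + R • p.2)) p.1,
    deriv_comp_const_add (fun t => u t (x₀ + R • p.2)), smul_eq_mul]

lemma setIntegral_unitBall_comp_const_add_smul (f : EuclideanSpace ℝ (Fin d) → ℝ)
    (x₀ : EuclideanSpace ℝ (Fin d)) {R : ℝ} (hR : 0 < R) :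
    ∫ x in ball 0 1, f (x₀ + R • x) = R ^ (-(d : ℝ)) * ∫ x in ball x₀ R, f x := by
  have htranslate : ∫ x in ball 0 R, f (x₀ + x) = ∫ x in ball x₀ R, f x := by
    rw [← (measurePreserving_add_left volume x₀).setIntegral_preimage_emb
      (measurableEmbedding_addLeft x₀) f (ball x₀ R), preimage_add_ball, sub_self]
  rw [Measure.setIntegral_comp_smul_of_pos volume (fun y => f (x₀ + y)) _ hR,
    smul_unitBall_of_pos hR, htranslate, finrank_euclideanSpace, Fintype.card_fin, smul_eq_mul,
    rpow_neg hR.le, rpow_natCast]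

lemma div_sq_rpow {R t : ℝ} (hR : 0 < R) (ht : 0 ≤ t) (a : ℝ) :
    (t / R ^ 2) ^ a = R ^ (-2 * a) * t ^ a := by
  rw [div_rpow ht (sq_nonneg R), ← rpow_natCast R 2, ← rpow_mul hR.le, neg_mul, rpow_neg hR.le,
    div_eq_inv_mul, Nat.cast_two]

lemma exists_integral_ball_le (hm0 : 0 < m) (hmc : m < (d - 2 : ℝ) / d) :
    ∃ C₁ > 0, ∃ C₃ > 0, ∀ (Q : Set (ℝ × EuclideanSpace ℝ (Fin d)))
      (u : ℝ → EuclideanSpace ℝ (Fin d) → ℝ) (x₀ : EuclideanSpace ℝ (Fin d)) (R s t : ℝ),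
      IsOpen Q → IsFDESol m Q u → 0 < R → s < t → Icc s t ×ˢ closedBall x₀ (3 * R) ⊆ Q →
        R ^ (-(d : ℝ)) * ∫ x in ball x₀ R, u s x ≤
          C₁ * R ^ (-2 / (1 - m)) * (t - s) ^ (1 / (1 - m)) +
          C₃ * (∫ x in ball x₀ R, u s x ^ (d * (1 - m) / 2)) ^ (2 / (d * (1 - m))) *
            R ^ (-2 : ℝ) * (t - s) ^ (-(m / (1 - m))) * u t x₀ ^ m := by
  have hd : (d : ℝ) ≠ 0 := by have := three_le_of_lt_critical hm0 hmc; positivity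
  have hm1 : 1 - m ≠ 0 := (sub_pos.2 (lt_one_of_lt_critical hm0 hmc)).ne'
  obtain ⟨C₁, hC₁, C₃, hC₃, hunit⟩ := exists_integral_unitBall_le hm0 hmc
  refine ⟨C₁, hC₁, C₃, hC₃, fun Q u x₀ R s t hQ hu hR hst hKQ => ?_⟩
  have hts : 0 < t - s := sub_pos.2 hst
  have hmaps : MapsTo (fun p : ℝ × EuclideanSpace ℝ (Fin d) => (s + R ^ 2 * p.1, x₀ + R • p.2))
      (Icc 0 ((t - s) / R ^ 2) ×ˢ closedBall 0 3) Q := by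
    rintro ⟨τ, x⟩ ⟨⟨hτ0, hτ⟩, hx⟩
    refine hKQ ⟨⟨by dsimp only at hτ0 ⊢; nlinarith [sq_nonneg R], ?_⟩, ?_⟩
    · linarith [(le_div_iff₀' (pow_pos hR 2)).1 hτ]
    · rw [mem_closedBall_zero_iff] at hx
      rw [mem_closedBall, dist_self_add_left, norm_smul, norm_of_nonneg hR.le, mul_comm]
      exact mul_le_mul_of_nonneg_right hx hR.le
  have hest := hunit _ _ ((t - s) / R ^ 2) (hQ.preimage (by fun_prop))
    (hu.comp_parabolic_rescaling s R x₀) (div_pos hts (pow_pos hR 2)) hmaps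
  have hpos : 0 ≤ ∫ x in ball x₀ R, u s x ^ (d * (1 - m) / 2) :=
    setIntegral_nonneg measurableSet_ball fun x hx => rpow_nonneg (hu.1 (s, x) (hKQ
      ⟨left_mem_Icc.2 hst.le, ball_subset_closedBall (ball_subset_ball (by linarith) hx)⟩)).le _
  simp only [mul_zero, add_zero, smul_zero, setIntegral_unitBall_comp_const_add_smul (u s) x₀ hR,
    setIntegral_unitBall_comp_const_add_smul (fun x => u s x ^ (d * (1 - m) / 2)) x₀ hR,
    mul_div_cancel₀ (t - s) (pow_pos hR 2).ne', add_sub_cancel, div_sq_rpow hR hts.le,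
    mul_rpow (rpow_nonneg hR.le _) hpos, ← rpow_mul hR.le] at hest
  have hexp : R ^ (-2 : ℝ) = R ^ (-(d : ℝ) * (2 / (d * (1 - m)))) * R ^ (-2 * -(m / (1 - m))) := by
    rw [← rpow_add hR]
    congr 1
    field_simp
    ring
  rw [hexp, neg_div, ← mul_one_div 2, ← neg_mul]
  linarith

end Rescaling

section InitialTrace

open Filter Topology

lemma continuousOn_setIntegral_of_continuousOn_prod {X E : Type*} [TopologicalSpace X]
    [FirstCountableTopology X] [TopologicalSpace E] [MeasurableSpace E] [OpensMeasurableSpace E]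
    {μ : Measure E} {f : X → E → ℝ} {I : Set X} {s K : Set E} (hI : IsCompact I) (hK : IsCompact K)
    (hs : MeasurableSet s) (hsK : s ⊆ K) (hμ : μ s ≠ ⊤)
    (hf : ContinuousOn (fun p : X × E => f p.1 p.2) (I ×ˢ K)) :
    ContinuousOn (fun x => ∫ y in s, f x y ∂μ) I := by
  obtain ⟨B, hB⟩ := (hI.prod hK).exists_bound_of_continuousOn hf
  intro x₀ hx₀
  refine continuousWithinAt_of_dominated (bound := fun _ => B) ?_ ?_
    (integrableOn_const hμ) ?_
  · filter_upwards [self_mem_nhdsWithin] with x hx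
    exact (hf.comp (by fun_prop : ContinuousOn (fun y => (x, y)) s)
      fun y hy => ⟨hx, hsK hy⟩).aestronglyMeasurable hs
  · filter_upwards [self_mem_nhdsWithin] with x hx
    exact ae_restrict_of_forall_mem hs fun y hy => hB (x, y) ⟨hx, hsK hy⟩
  · exact ae_restrict_of_forall_mem hs fun y hy =>
      hf.comp (by fun_prop : ContinuousOn (fun x => (x, y)) I) (fun x hx => ⟨hx, hsK hy⟩) x₀ hx₀

lemma TakesInit.tendsto_setIntegral_ball {d : ℕ} {T R : ℝ}
    {Ω : Set (EuclideanSpace ℝ (Fin d))} {u : ℝ → EuclideanSpace ℝ (Fin d) → ℝ}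
    {u₀ : EuclideanSpace ℝ (Fin d) → ℝ} {x₀ : EuclideanSpace ℝ (Fin d)} (hu : TakesInit T Ω u u₀)
    (hT : 0 < T) (hBΩ : closedBall x₀ R ⊆ Ω) {φ : ℝ → ℝ} (hφ : Continuous φ) :
    Tendsto (fun s => ∫ x in ball x₀ R, φ (u s x)) (𝓝[>] 0)
      (𝓝 (∫ x in ball x₀ R, φ (u₀ x))) := by
  have hcont := continuousOn_setIntegral_of_continuousOn_prod (f := fun s x => φ (u s x))
    (μ := volume) isCompact_Icc (isCompact_closedBall x₀ R) measurableSet_ball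
    ball_subset_closedBall measure_ball_lt_top.ne
    (hφ.comp_continuousOn (hu.1.mono (prod_mono (Icc_subset_Ico_right (half_lt_self hT)) hBΩ)))
  have hinit : ∫ x in ball x₀ R, φ (u 0 x) = ∫ x in ball x₀ R, φ (u₀ x) :=
    setIntegral_congr_fun measurableSet_ball fun x hx =>
      congrArg φ (hu.2 x (hBΩ (ball_subset_closedBall hx)))
  rw [← hinit]
  exact (hcont 0 (left_mem_Icc.2 (half_pos hT).le)).mono_of_mem_nhdsWithin
    (Icc_mem_nhdsGT (half_pos hT))

end InitialTrace

theorem aronson_caffarelli_via_Lpc_general {d : ℕ} {m : ℝ} (hm0 : 0 < m)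
    (hmc : m < (d - 2 : ℝ) / d) :
    ∃ C₁ C₃ : ℝ, 0 < C₁ ∧ 0 < C₃ ∧
      ∀ (Ω : Set (EuclideanSpace ℝ (Fin d))), IsOpen Ω →
      ∀ (u : ℝ → EuclideanSpace ℝ (Fin d) → ℝ) (u₀ : EuclideanSpace ℝ (Fin d) → ℝ) (T : ℝ),
        IsFDESol m (Ioo 0 T ×ˢ Ω) u → TakesInit T Ω u u₀ →
      ∀ (x₀ : EuclideanSpace ℝ (Fin d)) (R : ℝ), 0 < R → closedBall x₀ (3 * R) ⊆ Ω →
      ∀ t : ℝ, 0 < t → t < T →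
        R ^ (-(d : ℝ)) * ∫ x in ball x₀ R, u₀ x ≤
          C₁ * R ^ (-2 / (1 - m)) * t ^ ((1 : ℝ) / (1 - m)) +
          C₃ * (∫ x in ball x₀ R, u₀ x ^ (d * (1 - m) / 2)) ^ (2 / (d * (1 - m))) *
            R ^ (-2 : ℝ) * t ^ (-(m / (1 - m))) * u t x₀ ^ m := by
  have hp := zero_lt_one.trans (one_lt_critical_exponent hm0 hmc)
  have hinvp : 0 ≤ 2 / (d * (1 - m)) := inv_div _ (2 : ℝ) ▸ (inv_pos.2 hp).le
  obtain ⟨C₁, hC₁, C₃, hC₃, hball⟩ := exists_integral_ball_le hm0 hmc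
  refine ⟨C₁, C₃, hC₁, hC₃, fun Ω hΩ u u₀ T hu hinit x₀ R hR hsub t ht htT => ?_⟩
  have hBΩ : closedBall x₀ R ⊆ Ω := (closedBall_subset_closedBall (by linarith)).trans hsub
  have hmass := hinit.tendsto_setIntegral_ball (ht.trans htT) hBΩ continuous_id
  have hLp := (hinit.tendsto_setIntegral_ball (ht.trans htT) hBΩ
    (continuous_rpow_const hp.le)).rpow_const (Or.inr hinvp)
  have htime (a : ℝ) : Filter.Tendsto (fun s => (t - s) ^ a) (nhdsWithin 0 (Ioi 0))
      (nhds (t ^ a)) := by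
    have hsub : Filter.Tendsto (fun s => t - s) (nhdsWithin 0 (Ioi 0)) (nhds t) :=
      ((continuous_const.sub continuous_id).tendsto' 0 t (sub_zero t)).mono_left
        nhdsWithin_le_nhds
    exact hsub.rpow_const (Or.inl ht.ne')
  refine le_of_tendsto_of_tendsto (hmass.const_mul _)
    (((htime _).const_mul _).add (((((hLp.const_mul C₃).mul_const _).mul (htime _)).mul_const _)))
    ?_
  filter_upwards [Ioo_mem_nhdsGT ht] with s hs
  exact hball _ u x₀ R s t (isOpen_Ioo.prod hΩ) hu hR hs.2
    (prod_mono (Icc_subset_Ioo hs.1 htT) hsub)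

/-- **Theorem 1.4: Aronson–Caffarelli type estimate without the extinction time,
via the `L^{p_c}` norm.** Here `p_c = d(1-m)/2`. -/
theorem aronson_caffarelli_via_Lpc
    (d : ℕ) (hd : 3 ≤ d) (m : ℝ) (hm0 : 0 < m) (hmc : m < (d - 2 : ℝ) / d) :
    ∃ C₁ C₃ : ℝ, 0 < C₁ ∧ 0 < C₃ ∧
      ∀ (Ω : Set (EuclideanSpace ℝ (Fin d))), IsOpen Ω →
      ∀ (u : ℝ → EuclideanSpace ℝ (Fin d) → ℝ) (u₀ : EuclideanSpace ℝ (Fin d) → ℝ) (T : ℝ),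
        0 < T →
        IsFDESol m (Ioo 0 T ×ˢ Ω) u →
        (∀ x ∈ Ω, 0 ≤ u₀ x) →
        TakesInit T Ω u u₀ →
        ExtinctAt T Ω u →
      ∀ (x₀ : EuclideanSpace ℝ (Fin d)) (R : ℝ), 0 < R →
        closedBall x₀ (3 * R) ⊆ Ω →
        IntegrableOn (fun x => u₀ x ^ (d * (1 - m) / 2)) (ball x₀ R) →
      ∀ t : ℝ, 0 < t → t < T →
        R ^ (-(d : ℝ)) * ∫ x in ball x₀ R, u₀ x ≤
          C₁ * R ^ (-2 / (1 - m)) * t ^ ((1 : ℝ) / (1 - m)) +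
          C₃ * (∫ x in ball x₀ R, u₀ x ^ (d * (1 - m) / 2)) ^ (2 / (d * (1 - m))) *
            R ^ (-2 : ℝ) * t ^ (-(m / (1 - m))) * u t x₀ ^ m := by
  obtain ⟨C₁, C₃, hC₁, hC₃, hest⟩ := aronson_caffarelli_via_Lpc_general hm0 hmc
  exact ⟨C₁, C₃, hC₁, hC₃, fun Ω hΩ u u₀ T _ hu _ hinit _ x₀ R hR hsub _ =>
    hest Ω hΩ u u₀ T hu hinit x₀ R hR hsub⟩
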